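/- Assume f satisfies (f1), (f2), (f3): f(s) ≥ f'(s)(s−β) for all s ≥ β, and (f4): (F/f)'(s) ≥ (n−2)/(2n) for all s > β. Then the problem u''(r) + ((n−1)/r)u'(r) + f(u(r)) = 0 on (0,∞), u'(0) = 0, lim_{r→∞} u(r) = 0, has at most one solution u with u(0) > 0 having exactly one sign change in (0,∞); i.e., if u₁ and u₂ are two such solutions, then u₁(0) = u₂(0) and u₁ ≡ u₂. -/

import Mathlib

open Set Filter MeasureTheory

namespace Paper

noncomputable section

/-- `F s = ∫₀ˢ f t dt`. -/
def Fint (f : ℝ → ℝ) (s : ℝ) : ℝ := ∫ t in (0:ℝ)..s, f t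

/-- Hypothesis (f1): `f` is odd, `f 0 = 0`, there are `β > b > 0` with `f > 0` on `(b,∞)`,
`f ≤ 0`, `f ≢ 0` on `[0,b]`, and `F β = 0`. -/
def Hf1 (f : ℝ → ℝ) (b β : ℝ) : Prop :=
  (∀ s, f (-s) = -f s) ∧ f 0 = 0 ∧ 0 < b ∧ b < β ∧
    (∀ s, b < s → 0 < f s) ∧ (∀ s ∈ Icc (0:ℝ) b, f s ≤ 0) ∧
    (∃ s ∈ Icc (0:ℝ) b, f s ≠ 0) ∧ Fint f β = 0

/-- Hypothesis (f2): `f` continuous on `[0,∞)`, C¹ on `(0,∞)`, `f' ∈ L¹(0,1)`. -/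
def Hf2 (f : ℝ → ℝ) : Prop :=
  ContinuousOn f (Ici 0) ∧ (∀ s : ℝ, 0 < s → DifferentiableAt ℝ f s) ∧
    ContinuousOn (deriv f) (Ioi 0) ∧ IntegrableOn (deriv f) (Ioo 0 1)

/-- Hypothesis (f3): `f s ≥ f' s * (s - β)` for `s ≥ β`. -/
def Hf3 (f : ℝ → ℝ) (β : ℝ) : Prop := ∀ s, β ≤ s → deriv f s * (s - β) ≤ f s

/-- Hypothesis (f4): `(F/f)' s ≥ (n-2)/(2n)` for `s > β`. -/
def Hf4 (n : ℕ) (f : ℝ → ℝ) (β : ℝ) : Prop :=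
  ∀ s, β < s → ((n : ℝ) - 2) / (2 * (n : ℝ)) ≤ deriv (fun t => Fint f t / f t) s

/-- Hypothesis (f4'): `(F/f)' s ≥ (n-2)/2` for `s > β`. -/
def Hf4' (n : ℕ) (f : ℝ → ℝ) (β : ℝ) : Prop :=
  ∀ s, β < s → ((n : ℝ) - 2) / 2 ≤ deriv (fun t => Fint f t / f t) s

/-- Hypothesis (f5): `s ↦ s f' s / f s` is nonincreasing on `[β,∞)`. -/
def Hf5 (f : ℝ → ℝ) (β : ℝ) : Prop := AntitoneOn (fun s => s * deriv f s / f s) (Ici β)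

/-- Hypothesis (f6): `β f' β / f β ≤ n/(n-2)`. -/
def Hf6 (n : ℕ) (f : ℝ → ℝ) (β : ℝ) : Prop := β * deriv f β / f β ≤ (n : ℝ) / ((n : ℝ) - 2)

/-- Hypothesis (f1'): `f 0 = 0` and `s f s > 0` for `s > 0`. -/
def Hf1' (f : ℝ → ℝ) : Prop := f 0 = 0 ∧ ∀ s : ℝ, 0 < s → 0 < s * f s

/-- Hypothesis (f3'): `f s ≥ s f' s` for `s > 0`, with strict inequality at points
arbitrarily close to `0`. -/
def Hf3' (f : ℝ → ℝ) : Prop :=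
  (∀ s : ℝ, 0 < s → s * deriv f s ≤ f s) ∧
    ∀ ε : ℝ, 0 < ε → ∃ s ∈ Ioo (0:ℝ) ε, s * deriv f s < f s

/-- `v` is a C² solution of (E) on `(0,∞)`, continuous on `[0,∞)`,
with `v 0 = α` and `v' 0 = 0`. -/
def IVPsol (n : ℕ) (f : ℝ → ℝ) (α : ℝ) (v : ℝ → ℝ) : Prop :=
  v 0 = α ∧ deriv v 0 = 0 ∧ ContinuousOn v (Ici 0) ∧
    (∀ r : ℝ, 0 < r → DifferentiableAt ℝ v r ∧ DifferentiableAt ℝ (deriv v) r) ∧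
    (∀ r : ℝ, 0 < r → deriv (deriv v) r + ((n : ℝ) - 1) / r * deriv v r + f (v r) = 0)

/-- The family `α ↦ u α` of solutions of the IVP, with `u α r` and `u' α r`
continuous in `(α, r)`. -/
def Family (n : ℕ) (f : ℝ → ℝ) (u : ℝ → ℝ → ℝ) : Prop :=
  (∀ α : ℝ, 0 < α → IVPsol n f α (u α)) ∧
    ContinuousOn (fun p : ℝ × ℝ => u p.1 p.2) (Ioi 0 ×ˢ Ici 0) ∧
    ContinuousOn (fun p : ℝ × ℝ => deriv (u p.1) p.2) (Ioi 0 ×ˢ Ici 0)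

/-- The set whose supremum is `Z_k α`, given `T = T_{k-1} α`. -/
def ZsetAux (u : ℝ → ℝ → ℝ) (k : ℕ) (T α : ℝ) : Set ℝ :=
  {r | T < r ∧ ∀ s ∈ Ioo T r, (-1 : ℝ) ^ k * u α s < 0 ∧ 0 < (-1 : ℝ) ^ k * deriv (u α) s}

/-- The pair `(Z_k, T_k)`, with `T₀ = 0`;
`Z_k α = sup {r > T_{k-1} α | (-1)^k u < 0, (-1)^k u' > 0 on (T_{k-1} α, r)}` and
`T_k α = inf {r > Z_k α | u'(r, α) = 0}`. -/
def ZT (u : ℝ → ℝ → ℝ) : ℕ → (ℝ → ℝ) × (ℝ → ℝ)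
  | 0 => (fun _ => 0, fun _ => 0)
  | k + 1 =>
    let Z : ℝ → ℝ := fun α => sSup (ZsetAux u (k + 1) ((ZT u k).2 α) α)
    (Z, fun α => sInf {r | Z α < r ∧ deriv (u α) r = 0})

/-- `Z_k α` (as a real number; the genuine value when the defining set is bounded above). -/
def Zk (u : ℝ → ℝ → ℝ) (k : ℕ) (α : ℝ) : ℝ := (ZT u k).1 α

/-- `T_k α`, with `T₀ = 0`. -/
def Tk (u : ℝ → ℝ → ℝ) (k : ℕ) (α : ℝ) : ℝ := (ZT u k).2 α

/-- The defining set of `Z_k α`; `Z_k α = ∞` iff this set is unbounded above. -/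
def ZsetK (u : ℝ → ℝ → ℝ) (k : ℕ) (α : ℝ) : Set ℝ := ZsetAux u k (Tk u (k - 1) α) α

open Classical in
/-- The value of `u (·, α)` at `Z_k α`, as a limit `r → ∞` when `Z_k α = ∞`. -/
def uAtZ (u : ℝ → ℝ → ℝ) (k : ℕ) (α : ℝ) : ℝ :=
  if BddAbove (ZsetK u k α) then u α (Zk u k α) else limUnder atTop (u α)

open Classical in
/-- The value of `u' (·, α)` at `Z_k α`, as a limit `r → ∞` when `Z_k α = ∞`. -/
def duAtZ (u : ℝ → ℝ → ℝ) (k : ℕ) (α : ℝ) : ℝ :=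
  if BddAbove (ZsetK u k α) then deriv (u α) (Zk u k α) else limUnder atTop (deriv (u α))

open Classical in
/-- `Z_k α` as an extended real number. -/
def ZkE (u : ℝ → ℝ → ℝ) (k : ℕ) (α : ℝ) : WithTop ℝ :=
  if BddAbove (ZsetK u k α) then (Zk u k α : WithTop ℝ) else ⊤

/-- Membership in `F̃_k` (for `α ∈ N_{k-1}`): `(-1)^k u' (r, α) < 0` for all `r > Z_{k-1} α`. -/
def Ftil (u : ℝ → ℝ → ℝ) (k : ℕ) (α : ℝ) : Prop :=
  ∀ r, Zk u (k - 1) α < r → (-1 : ℝ) ^ k * deriv (u α) r < 0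

/-- The sets `N_k` (with `N₀ := (0,∞)`). -/
def Nk (u : ℝ → ℝ → ℝ) : ℕ → Set ℝ
  | 0 => Ioi 0
  | 1 => {α | 0 < α ∧ uAtZ u 1 α = 0 ∧ duAtZ u 1 α < 0}
  | k + 2 => {α | α ∈ Nk u (k + 1) ∧ ¬Ftil u (k + 2) α ∧ uAtZ u (k + 2) α = 0 ∧
      0 < (-1 : ℝ) ^ (k + 2) * duAtZ u (k + 2) α}

/-- The sets `G_k`. -/
def Gk (u : ℝ → ℝ → ℝ) : ℕ → Set ℝ
  | 0 => ∅
  | 1 => {α | 0 < α ∧ uAtZ u 1 α = 0 ∧ duAtZ u 1 α = 0}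
  | k + 2 => {α | α ∈ Nk u (k + 1) ∧ ¬Ftil u (k + 2) α ∧ uAtZ u (k + 2) α = 0 ∧
      duAtZ u (k + 2) α = 0}

/-- The set `F̃_k` (for `k ≥ 2`). -/
def FtilSet (u : ℝ → ℝ → ℝ) (k : ℕ) : Set ℝ := {α | α ∈ Nk u (k - 1) ∧ Ftil u k α}

/-- The set `F_k` (for `k ≥ 2`). -/
def Fk (u : ℝ → ℝ → ℝ) (k : ℕ) : Set ℝ :=
  {α | α ∈ Nk u (k - 1) ∧ ¬Ftil u k α ∧ (-1 : ℝ) ^ k * uAtZ u k α < 0}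

/-- The sets `P_k`. -/
def Pk (u : ℝ → ℝ → ℝ) : ℕ → Set ℝ
  | 0 => ∅
  | 1 => {α | 0 < α ∧ 0 < uAtZ u 1 α}
  | k + 2 => FtilSet u (k + 2) ∪ Fk u (k + 2)

/-- The set of extremal points (zeros of `u' (·, α)`) in `[0, A]`. -/
def ExtSet (u : ℝ → ℝ → ℝ) (α A : ℝ) : Set ℝ := {r | r ∈ Icc 0 A ∧ deriv (u α) r = 0}

/-- The conclusion of the δ₁-lemma (Lemma 4.1): every solution with initial value in
`(α*-δ₁, α*+δ₁)` has exactly `k` extremal points in `[0, T_{k-1}(α*) + a]`, with minimum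
values `< -β` and maximum values `> β`; moreover any two such solutions intersect between
any two of their consecutive extremal points, and in `(T_{k-1}(α*), Z_k(α*))`. -/
def DeltaOneLemma (f : ℝ → ℝ) (β : ℝ) (u : ℝ → ℝ → ℝ) (k : ℕ) (αs a δ₁ : ℝ) : Prop :=
  0 < a ∧ 0 < δ₁ ∧
    (∀ α ∈ Ioo (αs - δ₁) (αs + δ₁),
      (ExtSet u α (Tk u (k - 1) αs + a)).Finite ∧
        (ExtSet u α (Tk u (k - 1) αs + a)).ncard = k ∧
        ∀ r ∈ ExtSet u α (Tk u (k - 1) αs + a),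
          (IsLocalMin (u α) r → u α r < -β) ∧ (IsLocalMax (u α) r → β < u α r)) ∧
    ∀ α₁ ∈ Ioo (αs - δ₁) (αs + δ₁), ∀ α₂ ∈ Ioo (αs - δ₁) (αs + δ₁), α₁ < α₂ →
      (∀ i : ℕ, 1 ≤ i → i ≤ k - 1 →
        ∃ t, max (Tk u (i - 1) α₁) (Tk u (i - 1) α₂) < t ∧
          t < min (Tk u i α₁) (Tk u i α₂) ∧ u α₁ t = u α₂ t) ∧
      ∃ t, Tk u (k - 1) αs < t ∧ (BddAbove (ZsetK u k αs) → t < Zk u k αs) ∧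
        u α₁ t = u α₂ t

/-- `ρ` is the inverse of the monotone branch of `v` on `[t₁, t₂]`, whose set of values
is `[m, M]`. -/
def InvBranch (v ρ : ℝ → ℝ) (t₁ t₂ m M : ℝ) : Prop :=
  (∀ s ∈ Icc m M, ρ s ∈ Icc t₁ t₂ ∧ v (ρ s) = s) ∧
    ∀ s ∈ Ioo m M, HasDerivAt ρ (1 / deriv v (ρ s)) s

/-- `ρ` inverts a decreasing branch of `v` over the value interval `[m, M]`, along which
`(v')² + 2F > 0`. -/
def DecBranchInv (f : ℝ → ℝ) (v ρ : ℝ → ℝ) (m M : ℝ) : Prop :=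
  ∀ s ∈ Icc m M, 0 ≤ ρ s ∧ v (ρ s) = s ∧ deriv v (ρ s) < 0 ∧
    HasDerivAt ρ (1 / deriv v (ρ s)) s ∧ 0 < (deriv v (ρ s)) ^ 2 + 2 * Fint f s

/-- The functional `Q(s) = -4 (F/f)(s) r/r' - r²/(r')² - 2 r² F(s) + H(s)` computed along
the branch inverse `ρ`. -/
def Qfun (f H ρ : ℝ → ℝ) (s : ℝ) : ℝ :=
  -4 * (Fint f s / f s) * (ρ s / deriv ρ s) - (ρ s) ^ 2 / (deriv ρ s) ^ 2 -
    2 * (ρ s) ^ 2 * Fint f s + H s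

/-- The functional `P(s) = -2n (F/f)(s) r^{n-1}/r' - r^n/(r')² - 2 r^n F(s)`. -/
def Pfun (n : ℕ) (f : ℝ → ℝ) (ρ : ℝ → ℝ) (s : ℝ) : ℝ :=
  -(2 * (n : ℝ)) * (Fint f s / f s) * (ρ s ^ (n - 1) / deriv ρ s) -
    ρ s ^ n / (deriv ρ s) ^ 2 - 2 * ρ s ^ n * Fint f s

/-- The functional `W(s) = r(s) √((u'(r(s)))² + 2 F(s))`. -/
def Wfun (f v ρ : ℝ → ℝ) (s : ℝ) : ℝ :=
  ρ s * Real.sqrt ((deriv v (ρ s)) ^ 2 + 2 * Fint f s)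

/-- The functional `W̃(s) = r(s)^{n-1} √((u'(r(s)))² + 2 F(s))`. -/
def Wtil (n : ℕ) (f : ℝ → ℝ) (v ρ : ℝ → ℝ) (s : ℝ) : ℝ :=
  ρ s ^ (n - 1) * Real.sqrt ((deriv v (ρ s)) ^ 2 + 2 * Fint f s)

/-- `v` changes sign at `z ∈ (0,∞)`: `v z = 0` and `v` takes both signs in every
neighborhood of `z` (within `(0,∞)`). -/
def SignChange (v : ℝ → ℝ) (z : ℝ) : Prop :=
  v z = 0 ∧ ∀ ε : ℝ, 0 < ε →
    (∃ x ∈ Ioo (z - ε) (z + ε) ∩ Ioi 0, 0 < v x) ∧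
    (∃ x ∈ Ioo (z - ε) (z + ε) ∩ Ioi 0, v x < 0)

/-- `v` has exactly `m` sign changes in `(0,∞)`. -/
def ExactSignChanges (v : ℝ → ℝ) (m : ℕ) : Prop :=
  {z | 0 < z ∧ SignChange v z}.Finite ∧ {z | 0 < z ∧ SignChange v z}.ncard = m

/-- Bound state: a C² solution of (E) on `(0,∞)` with `v' 0 = 0` and `v r → 0` as `r → ∞`. -/
def BoundState (n : ℕ) (f : ℝ → ℝ) (v : ℝ → ℝ) : Prop :=
  ContinuousOn v (Ici 0) ∧
    (∀ r : ℝ, 0 < r → DifferentiableAt ℝ v r ∧ DifferentiableAt ℝ (deriv v) r) ∧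
    (∀ r : ℝ, 0 < r → deriv (deriv v) r + ((n : ℝ) - 1) / r * deriv v r + f (v r) = 0) ∧
    deriv v 0 = 0 ∧ Tendsto v atTop (nhds 0)

/-- Solution of the Dirichlet problem on the ball of radius `R`. -/
def DirichletSol (n : ℕ) (f : ℝ → ℝ) (R : ℝ) (v : ℝ → ℝ) : Prop :=
  ContinuousOn v (Icc 0 R) ∧
    (∀ r ∈ Ioo (0:ℝ) R, DifferentiableAt ℝ v r ∧ DifferentiableAt ℝ (deriv v) r) ∧
    (∀ r ∈ Ioo (0:ℝ) R, deriv (deriv v) r + ((n : ℝ) - 1) / r * deriv v r + f (v r) = 0) ∧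
    deriv v 0 = 0 ∧ v R = 0

end
end Paper

namespace Paper

open Topology

/-- A continuous function that is positive at the left end of an interval, and cannot vanish
for the first time, is positive. -/
theorem pos_of_no_first_zero {h : ℝ → ℝ} {a c : ℝ} (hc : ContinuousOn h (Icc a c))
    (ha : 0 < h a)
    (H : ∀ t ∈ Ioc a c, (∀ s ∈ Ico a t, 0 < h s) → h t = 0 → False) :
    ∀ t ∈ Icc a c, 0 < h t := by
  by_contra! hcon
  obtain ⟨t₀, ht₀, hneg⟩ := hcon
  set K := Icc a c ∩ h ⁻¹' Iic 0 with hK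
  have hKc : IsCompact K :=
    isCompact_Icc.of_isClosed_subset (hc.preimage_isClosed_of_isClosed isClosed_Icc isClosed_Iic)
      inter_subset_left
  obtain ⟨t, ht, hmin⟩ := hKc.exists_isLeast ⟨t₀, ht₀, hneg⟩
  have hpos : ∀ s ∈ Ico a t, 0 < h s := fun s hs => by
    by_contra! hs'
    exact absurd (hmin ⟨⟨hs.1, hs.2.le.trans ht.1.2⟩, hs'⟩) (not_le.2 hs.2)
  have hat : a < t := lt_of_le_of_ne ht.1.1 (by rintro rfl; exact absurd ht.2 (not_le.2 ha))
  refine H t ⟨hat, ht.1.2⟩ hpos (le_antisymm ht.2 ?_)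
  have hct : ContinuousWithinAt h (Ico a t) t :=
    (hc t ht.1).mono fun s hs => ⟨hs.1, hs.2.le.trans ht.1.2⟩
  have : (𝓝[Ico a t] t).NeBot := by
    rw [nhdsWithin_Ico_eq_nhdsLT hat]; infer_instance
  exact ge_of_tendsto hct (eventually_mem_nhdsWithin.mono fun s hs => (hpos s hs).le)

/-- The derivative at a first zero, reached from positive values, is nonpositive. -/
theorem deriv_nonpos_at_first_zero {h : ℝ → ℝ} {a t h' : ℝ} (hat : a < t)
    (hd : HasDerivAt h h' t) (hpos : ∀ s ∈ Ico a t, 0 < h s) (ht : h t = 0) : h' ≤ 0 := by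
  have h1 : Tendsto (slope h t) (𝓝[<] t) (𝓝 h') :=
    (hasDerivAt_iff_tendsto_slope.1 hd).mono_left (nhdsWithin_mono _ fun s hs => ne_of_lt hs)
  refine le_of_tendsto h1 ?_
  filter_upwards [Ico_mem_nhdsLT hat] with s hs
  rw [slope_def_field, ht, sub_zero]
  exact div_nonpos_of_nonneg_of_nonpos (hpos s hs).le (by linarith [hs.2])

theorem le_of_hasDerivAt_nonneg {g g' : ℝ → ℝ} {a c : ℝ} (hac : a ≤ c)
    (hg : ContinuousOn g (Icc a c)) (hd : ∀ t ∈ Ioo a c, HasDerivAt g (g' t) t)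
    (h : ∀ t ∈ Ioo a c, 0 ≤ g' t) : g a ≤ g c := by
  refine monotoneOn_of_deriv_nonneg (convex_Icc a c) hg ?_ ?_ (left_mem_Icc.2 hac)
    (right_mem_Icc.2 hac) hac
  · rw [interior_Icc]
    exact fun t ht => (hd t ht).differentiableAt.differentiableWithinAt
  · rw [interior_Icc]
    intro t ht
    rw [(hd t ht).deriv]
    exact h t ht

theorem le_of_hasDerivAt_nonpos {g g' : ℝ → ℝ} {a c : ℝ} (hac : a ≤ c)
    (hg : ContinuousOn g (Icc a c)) (hd : ∀ t ∈ Ioo a c, HasDerivAt g (g' t) t)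
    (h : ∀ t ∈ Ioo a c, g' t ≤ 0) : g c ≤ g a := by
  have := le_of_hasDerivAt_nonneg hac hg.neg (fun t ht => (hd t ht).neg)
    (fun t ht => neg_nonneg.2 (h t ht))
  simpa using this

/-- Differential inequality `h' ≥ -C h` preserves positivity. -/
theorem pos_of_deriv_ge_neg_mul {h h' : ℝ → ℝ} {a c C : ℝ} (hc : ContinuousOn h (Icc a c))
    (ha : 0 < h a) (hd : ∀ t ∈ Ioo a c, HasDerivAt h (h' t) t)
    (H : ∀ t ∈ Ioo a c, 0 < h t → -C * h t ≤ h' t) : ∀ t ∈ Icc a c, 0 < h t := by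
  refine pos_of_no_first_zero hc ha fun t ht hpos h0 => ?_
  have hsub : Icc a t ⊆ Icc a c := Icc_subset_Icc_right ht.2
  have key := le_of_hasDerivAt_nonneg (g := fun s => h s * Real.exp (C * s))
    (g' := fun s => h' s * Real.exp (C * s) + h s * (Real.exp (C * s) * (C * 1))) ht.1.le
    ((hc.mono hsub).mul (by fun_prop))
    (fun s hs => (hd s ⟨hs.1, hs.2.trans_le ht.2⟩).mul
      ((hasDerivAt_id s).const_mul C).exp)
    (fun s hs => by
      have := H s ⟨hs.1, hs.2.trans_le ht.2⟩ (hpos s ⟨hs.1.le, hs.2⟩)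
      have e := Real.exp_pos (C * s)
      nlinarith)
  simp only [h0, zero_mul] at key
  have := mul_pos ha (Real.exp_pos (C * a))
  linarith

/-- A nonnegative function with `g' ≤ C g` which tends to `0` at the left end vanishes. -/
theorem eq_zero_of_deriv_le_mul {g g' : ℝ → ℝ} {a c C : ℝ}
    (hd : ∀ t ∈ Ioc a c, HasDerivAt g (g' t) t) (H : ∀ t ∈ Ioc a c, g' t ≤ C * g t)
    (h0 : ∀ t ∈ Ioc a c, 0 ≤ g t) (hlim : Tendsto g (𝓝[>] a) (𝓝 0)) :
    ∀ t ∈ Ioc a c, g t = 0 := by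
  intro t ht
  refine le_antisymm ?_ (h0 t ht)
  have hlim' : Tendsto (fun s => g s * Real.exp (-C * s)) (𝓝[>] a) (𝓝 (0 * Real.exp (-C * a))) :=
    hlim.mul ((by fun_prop : Continuous fun s => Real.exp (-C * s)).tendsto a |>.mono_left
      nhdsWithin_le_nhds)
  have key : g t * Real.exp (-C * t) ≤ 0 * Real.exp (-C * a) := by
    refine ge_of_tendsto hlim' ?_
    filter_upwards [Ioc_mem_nhdsGT ht.1] with s hs
    have hsub : ∀ r ∈ Icc s t, r ∈ Ioc a c := fun r hr =>
      ⟨hs.1.trans_le hr.1, hr.2.trans ht.2⟩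
    refine le_of_hasDerivAt_nonpos (g := fun s => g s * Real.exp (-C * s))
      (g' := fun s => g' s * Real.exp (-C * s) + g s * (Real.exp (-C * s) * (-C * 1))) hs.2
      (fun r hr => ((hd r (hsub r hr)).continuousAt.mul (by fun_prop)).continuousWithinAt)
      (fun r hr => (hd r (hsub r ⟨hr.1.le, hr.2.le⟩)).mul
        ((hasDerivAt_id r).const_mul (-C)).exp) (fun r hr => ?_)
    have := H r (hsub r ⟨hr.1.le, hr.2.le⟩)
    have e := Real.exp_pos (-C * r)
    nlinarith
  rw [zero_mul] at key
  exact nonpos_of_mul_nonpos_left key (Real.exp_pos _)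

/-- A monotone branch of a solution in dimension `k + 2`, parametrized by its level `τ`, oriented
so that `τ` increases with the radius: `r τ` is the radius and `x τ` the modulus of the derivative
at which the level is attained. -/
structure Branch (k : ℕ) (f r x : ℝ → ℝ) (I : Set ℝ) : Prop where
  r_pos : ∀ τ ∈ I, 0 < r τ
  x_pos : ∀ τ ∈ I, 0 < x τ
  r_deriv : ∀ τ ∈ I, HasDerivAt r (1 / x τ) τ
  x_deriv : ∀ τ ∈ I, HasDerivAt x (-((k + 1) / r τ) - f τ / x τ) τ

namespace Branch

variable {k : ℕ} {f F r x r₁ x₁ r₂ x₂ : ℝ → ℝ} {I J : Set ℝ} {a c : ℝ}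

theorem mono (h : Branch k f r x I) (hJ : J ⊆ I) : Branch k f r x J :=
  ⟨fun τ hτ => h.r_pos τ (hJ hτ), fun τ hτ => h.x_pos τ (hJ hτ),
    fun τ hτ => h.r_deriv τ (hJ hτ), fun τ hτ => h.x_deriv τ (hJ hτ)⟩

theorem r_cont (h : Branch k f r x I) : ContinuousOn r I :=
  fun τ hτ => (h.r_deriv τ hτ).continuousAt.continuousWithinAt

theorem x_cont (h : Branch k f r x I) : ContinuousOn x I :=
  fun τ hτ => (h.x_deriv τ hτ).continuousAt.continuousWithinAt

/-- The weighted slope `r^(k+1) x`. -/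
theorem m_deriv (h : Branch k f r x I) {τ : ℝ} (hτ : τ ∈ I) :
    HasDerivAt (fun t => r t ^ (k + 1) * x t) (-(r τ ^ (k + 1) * f τ / x τ)) τ := by
  have hr := h.r_pos τ hτ
  have hx := h.x_pos τ hτ
  refine (((h.r_deriv τ hτ).pow (k + 1)).mul (h.x_deriv τ hτ)).congr_deriv ?_
  simp only [Pi.pow_apply, Nat.add_sub_cancel]
  push_cast
  field_simp
  ring

/-- As long as the second branch lies at larger radii, it stays steeper. -/
theorem x_lt_of_r_le (h₁ : Branch k f r₁ x₁ (Icc a c)) (h₂ : Branch k f r₂ x₂ (Icc a c))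
    (hf : Continuous f) (hr : ∀ τ ∈ Icc a c, r₁ τ ≤ r₂ τ) (ha : x₁ a < x₂ a) :
    ∀ τ ∈ Icc a c, x₁ τ < x₂ τ := by
  have hq : ContinuousOn (fun τ => f τ / (x₁ τ * x₂ τ)) (Icc a c) :=
    hf.continuousOn.div (h₁.x_cont.mul h₂.x_cont) fun τ hτ =>
      (mul_pos (h₁.x_pos τ hτ) (h₂.x_pos τ hτ)).ne'
  obtain ⟨C, hC⟩ := isCompact_Icc.exists_bound_of_continuousOn hq
  have := pos_of_deriv_ge_neg_mul (h := fun τ => x₂ τ - x₁ τ) (C := C)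
    (h₂.x_cont.sub h₁.x_cont) (sub_pos.2 ha)
    (fun τ hτ => (h₂.x_deriv τ (Ioo_subset_Icc_self hτ)).sub
      (h₁.x_deriv τ (Ioo_subset_Icc_self hτ))) ?_
  · exact fun τ hτ => sub_pos.1 (this τ hτ)
  intro τ hτ hpos
  have hτ' := Ioo_subset_Icc_self hτ
  have p1 := h₁.x_pos τ hτ'
  have p2 := h₂.x_pos τ hτ'
  have hb := hC τ hτ'
  have hle : (k + 1 : ℝ) / r₂ τ ≤ (k + 1) / r₁ τ :=
    div_le_div_of_nonneg_left (by positivity) (h₁.r_pos τ hτ') (hr τ hτ')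
  have e : f τ / x₁ τ - f τ / x₂ τ = f τ / (x₁ τ * x₂ τ) * (x₂ τ - x₁ τ) := by
    field_simp
  have := (abs_le.1 hb).1
  nlinarith

/-- As long as the second branch is steeper, the difference of the radii decreases. -/
theorem r_sub_le (h₁ : Branch k f r₁ x₁ (Icc a c)) (h₂ : Branch k f r₂ x₂ (Icc a c))
    (hac : a ≤ c) (hx : ∀ τ ∈ Ioo a c, x₁ τ < x₂ τ) : r₂ c - r₁ c ≤ r₂ a - r₁ a := by
  refine le_of_hasDerivAt_nonpos (g := fun τ => r₂ τ - r₁ τ) hac (h₂.r_cont.sub h₁.r_cont)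
    (fun τ hτ => (h₂.r_deriv τ (Ioo_subset_Icc_self hτ)).sub
      (h₁.r_deriv τ (Ioo_subset_Icc_self hτ))) fun τ hτ => ?_
  have p1 := h₁.x_pos τ (Ioo_subset_Icc_self hτ)
  have := one_div_le_one_div_of_le p1 (hx τ hτ).le
  linarith

/-- Where `f ≥ 0`, the gap between the slopes grows as long as the second branch lies at larger
radii and is steeper. -/
theorem x_sub_le (h₁ : Branch k f r₁ x₁ (Icc a c)) (h₂ : Branch k f r₂ x₂ (Icc a c))
    (hac : a ≤ c) (hf : ∀ τ ∈ Icc a c, 0 ≤ f τ) (hr : ∀ τ ∈ Icc a c, r₁ τ ≤ r₂ τ)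
    (hx : ∀ τ ∈ Icc a c, x₁ τ < x₂ τ) : x₂ a - x₁ a ≤ x₂ c - x₁ c := by
  refine le_of_hasDerivAt_nonneg (g := fun τ => x₂ τ - x₁ τ) hac (h₂.x_cont.sub h₁.x_cont)
    (fun τ hτ => (h₂.x_deriv τ (Ioo_subset_Icc_self hτ)).sub
      (h₁.x_deriv τ (Ioo_subset_Icc_self hτ))) fun τ hτ => ?_
  have hτ' := Ioo_subset_Icc_self hτ
  have hle : (k + 1 : ℝ) / r₂ τ ≤ (k + 1) / r₁ τ :=
    div_le_div_of_nonneg_left (by positivity) (h₁.r_pos τ hτ') (hr τ hτ')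
  have hle' : f τ / x₂ τ ≤ f τ / x₁ τ :=
    div_le_div_of_nonneg_left (hf τ hτ') (h₁.x_pos τ hτ') (hx τ hτ').le
  linarith

/-- Either the second branch stays at larger radii, or there is a first crossing. -/
theorem forall_r_lt_or_exists_eq (h₁ : Branch k f r₁ x₁ (Ico a c))
    (h₂ : Branch k f r₂ x₂ (Ico a c)) (hac : a < c) (ha : r₁ a ≤ r₂ a) :
    (∀ τ ∈ Ico a c, r₁ τ < r₂ τ) ∨
      ∃ τ ∈ Ico a c, r₁ τ = r₂ τ ∧ ∀ s ∈ Icc a τ, r₁ s ≤ r₂ s := by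
  by_cases hall : ∀ τ ∈ Ico a c, r₁ τ < r₂ τ
  · exact Or.inl hall
  right
  rcases ha.eq_or_lt with h0 | h0
  · refine ⟨a, left_mem_Ico.2 hac, h0, fun s hs => ?_⟩
    rw [le_antisymm hs.2 hs.1, h0]
  push Not at hall
  obtain ⟨d, hd, hdle⟩ := hall
  have hsub : Icc a d ⊆ Ico a c := fun s hs => ⟨hs.1, hs.2.trans_lt hd.2⟩
  by_contra! hno
  refine absurd (pos_of_no_first_zero (h := fun τ => r₂ τ - r₁ τ)
    ((h₂.r_cont.sub h₁.r_cont).mono hsub) (sub_pos.2 h0) (fun t ht hpos h0 => ?_) d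
    (right_mem_Icc.2 hd.1)) (by simpa using hdle)
  obtain ⟨s, hs, hlt⟩ := hno t (hsub ⟨ht.1.le, ht.2⟩) (by linarith)
  rcases hs.2.eq_or_lt with h | h
  · subst h; linarith
  · linarith [hpos s ⟨hs.1, h⟩]

/-- Comparison through `r^(2k+2) (x² + 2F)` where `F ≤ 0`. -/
theorem energy_comparison (h₁ : Branch k f r₁ x₁ (Icc a c)) (h₂ : Branch k f r₂ x₂ (Icc a c))
    (hF : ∀ τ, HasDerivAt F (f τ) τ) (hF0 : ∀ τ ∈ Icc a c, F τ ≤ 0)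
    (hE : ∀ τ ∈ Icc a c, 0 ≤ x₁ τ ^ 2 + 2 * F τ) (hr : r₂ a ≤ r₁ a)
    (hW : r₁ a ^ (2 * k + 2) * (x₁ a ^ 2 + 2 * F a) < r₂ a ^ (2 * k + 2) * (x₂ a ^ 2 + 2 * F a)) :
    ∀ τ ∈ Icc a c, r₂ τ ≤ r₁ τ ∧ x₁ τ < x₂ τ ∧ r₁ τ ^ (2 * k + 2) * (x₁ τ ^ 2 + 2 * F τ)
      < r₂ τ ^ (2 * k + 2) * (x₂ τ ^ 2 + 2 * F τ) := by
  have hFc : Continuous F := continuous_iff_continuousAt.2 fun τ => (hF τ).continuousAt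
  have steep : ∀ τ ∈ Icc a c, r₂ τ ≤ r₁ τ → r₁ τ ^ (2 * k + 2) * (x₁ τ ^ 2 + 2 * F τ)
      < r₂ τ ^ (2 * k + 2) * (x₂ τ ^ 2 + 2 * F τ) → x₁ τ < x₂ τ := by
    intro τ hτ hr hW
    by_contra! hx
    have p2 := h₂.x_pos τ hτ
    have e1 : x₂ τ ^ 2 ≤ x₁ τ ^ 2 := pow_le_pow_left₀ p2.le hx 2
    have e2 : r₂ τ ^ (2 * k + 2) ≤ r₁ τ ^ (2 * k + 2) :=
      pow_le_pow_left₀ (h₂.r_pos τ hτ).le hr _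
    have e3 : 0 ≤ r₂ τ ^ (2 * k + 2) := (pow_pos (h₂.r_pos τ hτ) _).le
    have := hE τ hτ
    nlinarith [mul_le_mul_of_nonneg_right e2 this]
  have hder : ∀ {r x : ℝ → ℝ}, Branch k f r x (Icc a c) → ∀ τ ∈ Icc a c,
      HasDerivAt (fun t => r t ^ (2 * k + 2) * (x t ^ 2 + 2 * F t))
        ((4 * k + 4) * F τ * (r τ ^ (2 * k + 1) / x τ)) τ := by
    intro r x h τ hτ
    have hr := h.r_pos τ hτ
    have hx := h.x_pos τ hτ
    refine (((h.r_deriv τ hτ).pow (2 * k + 2)).mul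
      (((h.x_deriv τ hτ).pow 2).add ((hF τ).const_mul 2))).congr_deriv ?_
    simp only [Pi.pow_apply, Pi.add_apply, show 2 * k + 2 - 1 = 2 * k + 1 by omega]
    push_cast
    field_simp
    ring
  have mono : ∀ t ∈ Icc a c, (∀ s ∈ Ico a t, x₁ s < x₂ s) → r₂ t ≤ r₁ t ∧
      r₁ t ^ (2 * k + 2) * (x₁ t ^ 2 + 2 * F t) < r₂ t ^ (2 * k + 2) * (x₂ t ^ 2 + 2 * F t) := by
    intro t ht hx
    have hsub : Icc a t ⊆ Icc a c := Icc_subset_Icc_right ht.2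
    have hrr : ∀ s ∈ Icc a t, r₂ s ≤ r₁ s := fun s hs => by
      have := r_sub_le (h₁.mono ((Icc_subset_Icc_right hs.2).trans hsub))
        (h₂.mono ((Icc_subset_Icc_right hs.2).trans hsub)) hs.1
        (fun q hq => hx q ⟨hq.1.le, hq.2.trans_le hs.2⟩)
      linarith
    refine ⟨hrr t (right_mem_Icc.2 ht.1), ?_⟩
    have := le_of_hasDerivAt_nonneg
      (g := fun s => r₂ s ^ (2 * k + 2) * (x₂ s ^ 2 + 2 * F s)
        - r₁ s ^ (2 * k + 2) * (x₁ s ^ 2 + 2 * F s)) ht.1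
      (fun s hs => ((hder h₂ s (hsub hs)).sub
        (hder h₁ s (hsub hs))).continuousAt.continuousWithinAt)
      (fun s hs => (hder h₂ s (hsub (Ioo_subset_Icc_self hs))).sub
        (hder h₁ s (hsub (Ioo_subset_Icc_self hs)))) (fun s hs => ?_)
    · linarith
    have hs' := hsub (Ioo_subset_Icc_self hs)
    have e1 : r₂ s ^ (2 * k + 1) / x₂ s ≤ r₁ s ^ (2 * k + 1) / x₁ s :=
      div_le_div₀ (pow_pos (h₁.r_pos s hs') _).le
        (pow_le_pow_left₀ (h₂.r_pos s hs').le (hrr s (Ioo_subset_Icc_self hs)) _)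
        (h₁.x_pos s hs') (hx s ⟨hs.1.le, hs.2⟩).le
    have e2 : (4 * k + 4 : ℝ) * F s ≤ 0 :=
      mul_nonpos_of_nonneg_of_nonpos (by positivity) (hF0 s hs')
    nlinarith
  have hpos := pos_of_no_first_zero (h := fun τ => x₂ τ - x₁ τ) (h₂.x_cont.sub h₁.x_cont)
  intro τ hτ
  have ha : a ∈ Icc a c := left_mem_Icc.2 (hτ.1.trans hτ.2)
  have hx : ∀ s ∈ Icc a c, x₁ s < x₂ s := fun s hs => sub_pos.1 <|
    hpos (sub_pos.2 (steep a ha hr hW)) (fun t ht hp h0 => by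
      have ht' := Ioc_subset_Icc_self ht
      obtain ⟨q1, q2⟩ := mono t ht' fun s hs => sub_pos.1 (hp s hs)
      linarith [steep t ht' q1 q2]) s hs
  obtain ⟨q1, q2⟩ := mono τ hτ fun s hs => hx s ⟨hs.1, hs.2.le.trans hτ.2⟩
  exact ⟨q1, hx τ hτ, q2⟩

/-- Comparison through `r^(k+1) x` where `f ≥ 0`. -/
theorem m_comparison (h₁ : Branch k f r₁ x₁ (Icc a c)) (h₂ : Branch k f r₂ x₂ (Icc a c))
    (hf : ∀ τ ∈ Icc a c, 0 ≤ f τ) (hr : r₂ a ≤ r₁ a)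
    (hm : r₁ a ^ (k + 1) * x₁ a < r₂ a ^ (k + 1) * x₂ a) :
    ∀ τ ∈ Icc a c, r₂ τ ≤ r₁ τ ∧ x₁ τ < x₂ τ ∧
      (r₂ a ^ (k + 1) * x₂ a) ^ 2 - (r₁ a ^ (k + 1) * x₁ a) ^ 2 ≤
        (r₂ τ ^ (k + 1) * x₂ τ) ^ 2 - (r₁ τ ^ (k + 1) * x₁ τ) ^ 2 := by
  have steep : ∀ τ ∈ Icc a c, r₂ τ ≤ r₁ τ → r₁ τ ^ (k + 1) * x₁ τ
      < r₂ τ ^ (k + 1) * x₂ τ → x₁ τ < x₂ τ := by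
    intro τ hτ hr hW
    by_contra! hx
    exact absurd hW (not_lt.2 (mul_le_mul (pow_le_pow_left₀ (h₂.r_pos τ hτ).le hr _) hx
      (h₂.x_pos τ hτ).le (pow_pos (h₁.r_pos τ hτ) _).le))
  have hder : ∀ {r x : ℝ → ℝ}, Branch k f r x (Icc a c) → ∀ τ ∈ Icc a c,
      HasDerivAt (fun t => (r t ^ (k + 1) * x t) ^ 2) (-(2 * f τ * (r τ ^ (k + 1)) ^ 2)) τ := by
    intro r x h τ hτ
    have hx := h.x_pos τ hτ
    refine ((h.m_deriv hτ).pow 2).congr_deriv ?_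
    push_cast
    field_simp
    try ring
  have mono : ∀ t ∈ Icc a c, (∀ s ∈ Ico a t, x₁ s < x₂ s) → r₂ t ≤ r₁ t ∧
      (r₂ a ^ (k + 1) * x₂ a) ^ 2 - (r₁ a ^ (k + 1) * x₁ a) ^ 2 ≤
        (r₂ t ^ (k + 1) * x₂ t) ^ 2 - (r₁ t ^ (k + 1) * x₁ t) ^ 2 := by
    intro t ht hx
    have hsub : Icc a t ⊆ Icc a c := Icc_subset_Icc_right ht.2
    have hrr : ∀ s ∈ Icc a t, r₂ s ≤ r₁ s := fun s hs => by
      have := r_sub_le (h₁.mono ((Icc_subset_Icc_right hs.2).trans hsub))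
        (h₂.mono ((Icc_subset_Icc_right hs.2).trans hsub)) hs.1
        (fun q hq => hx q ⟨hq.1.le, hq.2.trans_le hs.2⟩)
      linarith
    refine ⟨hrr t (right_mem_Icc.2 ht.1), ?_⟩
    refine le_of_hasDerivAt_nonneg
      (g := fun s => (r₂ s ^ (k + 1) * x₂ s) ^ 2 - (r₁ s ^ (k + 1) * x₁ s) ^ 2) ht.1
      (fun s hs => ((hder h₂ s (hsub hs)).sub
        (hder h₁ s (hsub hs))).continuousAt.continuousWithinAt)
      (fun s hs => (hder h₂ s (hsub (Ioo_subset_Icc_self hs))).sub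
        (hder h₁ s (hsub (Ioo_subset_Icc_self hs)))) (fun s hs => ?_)
    have hs' := hsub (Ioo_subset_Icc_self hs)
    have e1 : (r₂ s ^ (k + 1)) ^ 2 ≤ (r₁ s ^ (k + 1)) ^ 2 :=
      pow_le_pow_left₀ (pow_pos (h₂.r_pos s hs') _).le
        (pow_le_pow_left₀ (h₂.r_pos s hs').le (hrr s (Ioo_subset_Icc_self hs)) _) 2
    nlinarith [hf s hs']
  have hpos := pos_of_no_first_zero (h := fun τ => x₂ τ - x₁ τ) (h₂.x_cont.sub h₁.x_cont)
  intro τ hτ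
  have ha : a ∈ Icc a c := left_mem_Icc.2 (hτ.1.trans hτ.2)
  have pm1 : 0 < r₁ a ^ (k + 1) * x₁ a := mul_pos (pow_pos (h₁.r_pos a ha) _) (h₁.x_pos a ha)
  have hx : ∀ s ∈ Icc a c, x₁ s < x₂ s := fun s hs => sub_pos.1 <|
    hpos (sub_pos.2 (steep a ha hr hm)) (fun t ht hp h0 => by
      have ht' := Ioc_subset_Icc_self ht
      obtain ⟨q1, q2⟩ := mono t ht' fun s hs => sub_pos.1 (hp s hs)
      have pm2 : 0 < r₂ t ^ (k + 1) * x₂ t :=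
        mul_pos (pow_pos (h₂.r_pos t ht') _) (h₂.x_pos t ht')
      have : r₁ t ^ (k + 1) * x₁ t < r₂ t ^ (k + 1) * x₂ t :=
        lt_of_pow_lt_pow_left₀ 2 pm2.le (by nlinarith)
      linarith [steep t ht' q1 this]) s hs
  obtain ⟨q1, q2⟩ := mono τ hτ fun s hs => hx s ⟨hs.1, hs.2.le.trans hτ.2⟩
  exact ⟨q1, hx τ hτ, q2⟩

end Branch

/-- The Pohozaev-type functional along a branch, with `A` in the role of `F / f`. -/
def pohozaev (k : ℕ) (F A r x : ℝ → ℝ) (τ : ℝ) : ℝ :=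
  -(2 * (k + 2) * A τ * (r τ ^ (k + 1) * x τ)) - r τ ^ (k + 2) * (x τ ^ 2 + 2 * F τ)

namespace Branch

variable {k : ℕ} {f F A A' r x r₁ x₁ r₂ x₂ : ℝ → ℝ} {I J : Set ℝ} {a c : ℝ}

theorem pohozaev_deriv (h : Branch k f r x I) {τ a' : ℝ} (hτ : τ ∈ I)
    (hF : HasDerivAt F (f τ) τ) (hA : HasDerivAt A a' τ) (hAf : A τ * f τ = F τ) :
    HasDerivAt (pohozaev k F A r x) (-((2 * (k + 2) * a' - k) * (r τ ^ (k + 1) * x τ))) τ := by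
  have hr := h.r_pos τ hτ
  have hx := h.x_pos τ hτ
  refine (((hA.const_mul (2 * (k + 2 : ℝ))).mul (h.m_deriv hτ)).neg.sub
    (((h.r_deriv τ hτ).pow (k + 2)).mul
      (((h.x_deriv τ hτ).pow 2).add (hF.const_mul 2)))).congr_deriv ?_
  simp only [Pi.pow_apply, Pi.add_apply, show k + 2 - 1 = k + 1 by omega, ← hAf]
  push_cast
  field_simp
  ring

theorem pohozaev_le (h : Branch k f r x (Icc a c)) (hac : a ≤ c)
    (hF : ∀ τ, HasDerivAt F (f τ) τ) (hA : ∀ τ ∈ Icc a c, HasDerivAt A (A' τ) τ)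
    (hAf : ∀ τ ∈ Icc a c, A τ * f τ = F τ) (hA' : ∀ τ ∈ Ioo a c, k ≤ 2 * (k + 2) * A' τ) :
    pohozaev k F A r x c ≤ pohozaev k F A r x a := by
  have hd := fun τ hτ => h.pohozaev_deriv hτ (hF τ) (hA τ hτ) (hAf τ hτ)
  refine le_of_hasDerivAt_nonpos hac (fun τ hτ => (hd τ hτ).continuousAt.continuousWithinAt)
    (fun τ hτ => hd τ (Ioo_subset_Icc_self hτ)) fun τ hτ => ?_
  have := mul_pos (pow_pos (h.r_pos τ (Ioo_subset_Icc_self hτ)) (k + 1))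
    (h.x_pos τ (Ioo_subset_Icc_self hτ))
  nlinarith [hA' τ hτ]

theorem pohozaev_sub_le (h₁ : Branch k f r₁ x₁ (Icc a c)) (h₂ : Branch k f r₂ x₂ (Icc a c))
    (hac : a ≤ c) (hF : ∀ τ, HasDerivAt F (f τ) τ)
    (hA : ∀ τ ∈ Icc a c, HasDerivAt A (A' τ) τ)
    (hAf : ∀ τ ∈ Icc a c, A τ * f τ = F τ) (hA' : ∀ τ ∈ Ioo a c, k ≤ 2 * (k + 2) * A' τ)
    (hm : ∀ τ ∈ Ioo a c, r₁ τ ^ (k + 1) * x₁ τ ≤ r₂ τ ^ (k + 1) * x₂ τ) :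
    pohozaev k F A r₂ x₂ c - pohozaev k F A r₁ x₁ c ≤
      pohozaev k F A r₂ x₂ a - pohozaev k F A r₁ x₁ a := by
  have hd₁ := fun τ hτ => h₁.pohozaev_deriv hτ (hF τ) (hA τ hτ) (hAf τ hτ)
  have hd₂ := fun τ hτ => h₂.pohozaev_deriv hτ (hF τ) (hA τ hτ) (hAf τ hτ)
  refine le_of_hasDerivAt_nonpos
    (g := fun τ => pohozaev k F A r₂ x₂ τ - pohozaev k F A r₁ x₁ τ) hac
    (fun τ hτ => ((hd₂ τ hτ).sub (hd₁ τ hτ)).continuousAt.continuousWithinAt)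
    (fun τ hτ => (hd₂ τ (Ioo_subset_Icc_self hτ)).sub (hd₁ τ (Ioo_subset_Icc_self hτ)))
    fun τ hτ => ?_
  nlinarith [hA' τ hτ, hm τ hτ]

/-- Comparison of two branches returning from their extremal values to the level where `F = 0`.
The functional `P₂ - (m₂ / m₁) P₁` is used once `m = r^(k+1) x` has become smaller on the second
branch. -/
theorem return_comparison (h₁ : Branch k f r₁ x₁ (Icc a c)) (h₂ : Branch k f r₂ x₂ (Icc a c))
    (hac : a ≤ c) (hF : ∀ τ, HasDerivAt F (f τ) τ)
    (hA : ∀ τ ∈ Icc a c, HasDerivAt A (A' τ) τ)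
    (hAf : ∀ τ ∈ Icc a c, A τ * f τ = F τ) (hA' : ∀ τ ∈ Ioo a c, k ≤ 2 * (k + 2) * A' τ)
    (hf : ∀ τ ∈ Icc a c, f τ < 0) (hF0 : ∀ τ ∈ Icc a c, 0 ≤ F τ) (hFc : F c = 0)
    (hP : ∀ τ ∈ Icc a c, pohozaev k F A r₁ x₁ τ < 0) (hx : x₁ a < x₂ a)
    (hm : r₁ a ^ (k + 1) * x₁ a < r₂ a ^ (k + 1) * x₂ a)
    (hPa : pohozaev k F A r₂ x₂ a < pohozaev k F A r₁ x₁ a) :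
    x₁ c < x₂ c ∧ (r₁ c < r₂ c ∨ (r₂ c ≤ r₁ c ∧ r₁ c * x₁ c < r₂ c * x₂ c)) := by
  set m₁ : ℝ → ℝ := fun τ => r₁ τ ^ (k + 1) * x₁ τ with hm₁
  set m₂ : ℝ → ℝ := fun τ => r₂ τ ^ (k + 1) * x₂ τ with hm₂
  set P₁ := pohozaev k F A r₁ x₁ with hP₁
  set P₂ := pohozaev k F A r₂ x₂ with hP₂
  have m₁pos : ∀ τ ∈ Icc a c, 0 < m₁ τ := fun τ hτ =>
    mul_pos (pow_pos (h₁.r_pos τ hτ) _) (h₁.x_pos τ hτ)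
  have m₂pos : ∀ τ ∈ Icc a c, 0 < m₂ τ := fun τ hτ =>
    mul_pos (pow_pos (h₂.r_pos τ hτ) _) (h₂.x_pos τ hτ)
  have hm₁d : ∀ τ ∈ Icc a c, HasDerivAt m₁ (-(r₁ τ ^ (k + 1) * f τ / x₁ τ)) τ :=
    fun τ hτ => h₁.m_deriv hτ
  have hm₂d : ∀ τ ∈ Icc a c, HasDerivAt m₂ (-(r₂ τ ^ (k + 1) * f τ / x₂ τ)) τ :=
    fun τ hτ => h₂.m_deriv hτ
  set S : ℝ → ℝ := fun τ => m₂ τ / m₁ τ with hS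
  have hSd : ∀ τ ∈ Icc a c,
      HasDerivAt S (S τ * (f τ * (1 / x₁ τ ^ 2 - 1 / x₂ τ ^ 2))) τ := by
    intro τ hτ
    have p1 := h₁.x_pos τ hτ
    have p2 := h₂.x_pos τ hτ
    have q1 := h₁.r_pos τ hτ
    refine ((hm₂d τ hτ).div (hm₁d τ hτ) (m₁pos τ hτ).ne').congr_deriv ?_
    simp only [hS, hm₁, hm₂]
    field_simp
    ring
  have hSc : ContinuousOn S (Icc a c) :=
    fun τ hτ => (hSd τ hτ).continuousAt.continuousWithinAt
  have hS' : ∀ τ ∈ Icc a c, x₁ τ < x₂ τ → S τ * (f τ * (1 / x₁ τ ^ 2 - 1 / x₂ τ ^ 2)) ≤ 0 := by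
    intro τ hτ hlt
    have p1 := h₁.x_pos τ hτ
    have := one_div_le_one_div_of_le (pow_pos p1 2) (pow_le_pow_left₀ p1.le hlt.le 2)
    exact mul_nonpos_of_nonneg_of_nonpos (div_pos (m₂pos τ hτ) (m₁pos τ hτ)).le
      (mul_nonpos_of_nonpos_of_nonneg (hf τ hτ).le (by linarith))
  have hSanti : ∀ t ∈ Icc a c, (∀ s ∈ Ico a t, x₁ s < x₂ s) → ∀ p ∈ Icc a t, ∀ q ∈ Icc p t,
      S q ≤ S p := by
    intro t ht hlt p hp q hq
    have hsub : Icc p q ⊆ Icc a c := Icc_subset_Icc hp.1 (hq.2.trans ht.2)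
    exact le_of_hasDerivAt_nonpos hq.1 (hSc.mono hsub)
      (fun s hs => hSd s (hsub (Ioo_subset_Icc_self hs)))
      (fun s hs => hS' s (hsub (Ioo_subset_Icc_self hs))
        (hlt s ⟨hp.1.trans hs.1.le, hs.2.trans_le hq.2⟩))
  have hbig : ∀ t ∈ Icc a c, (∀ s ∈ Ico a t, x₁ s < x₂ s) → m₁ t ≤ m₂ t → P₂ t < P₁ t := by
    intro t ht hlt hmt
    have hsub : Icc a t ⊆ Icc a c := Icc_subset_Icc_right ht.2
    have := pohozaev_sub_le (h₁.mono hsub) (h₂.mono hsub) ht.1 hF (fun τ hτ => hA τ (hsub hτ))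
      (fun τ hτ => hAf τ (hsub hτ)) (fun τ hτ => hA' τ ⟨hτ.1, hτ.2.trans_le ht.2⟩) ?_
    · linarith
    intro τ hτ
    have hτ' := hsub (Ioo_subset_Icc_self hτ)
    have h1 : 1 ≤ S t := (one_le_div (m₁pos t ht)).2 hmt
    have h2 := hSanti t ht hlt τ (Ioo_subset_Icc_self hτ) t ⟨hτ.2.le, le_rfl⟩
    exact (one_le_div (m₁pos τ hτ')).1 (h1.trans h2)
  have hsmall : ∀ t ∈ Icc a c, (∀ s ∈ Ico a t, x₁ s < x₂ s) → m₂ t ≤ m₁ t →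
      P₂ t * m₁ t < P₁ t * m₂ t := by
    intro t ht hlt hmt
    have hsub : Icc a t ⊆ Icc a c := Icc_subset_Icc_right ht.2
    obtain ⟨p, hp, hSp⟩ : (1 : ℝ) ∈ S '' Icc a t :=
      intermediate_value_Icc' ht.1 (hSc.mono hsub)
        ⟨(div_le_one (m₁pos t ht)).2 hmt,
          (one_le_div (m₁pos a (left_mem_Icc.2 hac))).2 hm.le⟩
    have hp' := hsub hp
    have hPp : P₂ p < P₁ p := by
      refine hbig p hp' (fun s hs => hlt s ⟨hs.1, hs.2.trans_le hp.2⟩) ?_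
      exact (one_le_div (m₁pos p hp')).1 hSp.ge
    have hd₁ := fun τ hτ => h₁.pohozaev_deriv hτ (hF τ) (hA τ hτ) (hAf τ hτ)
    have hd₂ := fun τ hτ => h₂.pohozaev_deriv hτ (hF τ) (hA τ hτ) (hAf τ hτ)
    have hsub' : Icc p t ⊆ Icc a c := Icc_subset_Icc hp.1 ht.2
    have key := le_of_hasDerivAt_nonpos (g := fun τ => P₂ τ - S τ * P₁ τ) hp.2
      (fun τ hτ => ((hd₂ τ (hsub' hτ)).sub
        ((hSd τ (hsub' hτ)).mul (hd₁ τ (hsub' hτ)))).continuousAt.continuousWithinAt)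
      (fun τ hτ => (hd₂ τ (hsub' (Ioo_subset_Icc_self hτ))).sub
        ((hSd τ (hsub' (Ioo_subset_Icc_self hτ))).mul (hd₁ τ (hsub' (Ioo_subset_Icc_self hτ)))))
      (fun τ hτ => ?_)
    · simp only [hSp, one_mul] at key
      have h1 : P₂ t < S t * P₁ t := by linarith
      have h2 : S t * m₁ t = m₂ t := div_mul_cancel₀ _ (m₁pos t ht).ne'
      calc P₂ t * m₁ t < S t * P₁ t * m₁ t := mul_lt_mul_of_pos_right h1 (m₁pos t ht)
        _ = P₁ t * m₂ t := by rw [← h2]; ring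
    · have hτ' := hsub' (Ioo_subset_Icc_self hτ)
      have h2 : S τ * (r₁ τ ^ (k + 1) * x₁ τ) = r₂ τ ^ (k + 1) * x₂ τ :=
        div_mul_cancel₀ _ (m₁pos τ hτ').ne'
      have h3 := mul_nonneg_of_nonpos_of_nonpos
        (hS' τ hτ' (hlt τ ⟨hp.1.trans hτ.1.le, hτ.2⟩)) (hP τ hτ').le
      rw [← h2]
      linarith
  have steep : ∀ τ ∈ Icc a c, x₁ τ < x₂ τ := by
    have := pos_of_no_first_zero (h := fun τ => x₂ τ - x₁ τ) (h₂.x_cont.sub h₁.x_cont)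
      (sub_pos.2 hx) ?_
    · exact fun τ hτ => sub_pos.1 (this τ hτ)
    intro t ht hpos h0
    have ht' := Ioc_subset_Icc_self ht
    have hxe : x₂ t = x₁ t := sub_eq_zero.1 h0
    have px := h₁.x_pos t ht'
    have pr1 := h₁.r_pos t ht'
    have pr2 := h₂.r_pos t ht'
    rcases lt_or_ge (r₁ t) (r₂ t) with hr | hr
    · have hd := deriv_nonpos_at_first_zero ht.1
        ((h₂.x_deriv t ht').sub (h₁.x_deriv t ht')) hpos h0
      have : (k + 1 : ℝ) / r₂ t < (k + 1) / r₁ t :=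
        div_lt_div_of_pos_left (by positivity) pr1 hr
      rw [hxe] at hd
      linarith
    · have hle : m₂ t ≤ m₁ t := by
        simp only [hm₁, hm₂, hxe]
        exact mul_le_mul_of_nonneg_right (pow_le_pow_left₀ pr2.le hr _) px.le
      have h1 := hsmall t ht' (fun s hs => sub_pos.1 (hpos s hs)) hle
      have h2 : P₂ t * m₁ t - P₁ t * m₂ t = (r₁ t - r₂ t) *
          (r₁ t ^ (k + 1) * r₂ t ^ (k + 1) * x₁ t * (x₁ t ^ 2 + 2 * F t)) := by
        simp only [hP₁, hP₂, hm₁, hm₂, pohozaev, hxe]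
        ring
      have h3 := hF0 t ht'
      have : 0 ≤ P₂ t * m₁ t - P₁ t * m₂ t := by
        rw [h2]
        exact mul_nonneg (sub_nonneg.2 hr) (by positivity)
      linarith
  have hc : c ∈ Icc a c := right_mem_Icc.2 hac
  have hAc : A c = 0 := by
    have := hAf c hc
    rw [hFc] at this
    exact (mul_eq_zero.1 this).resolve_right (hf c hc).ne
  have hlt : ∀ s ∈ Ico a c, x₁ s < x₂ s := fun s hs => steep s (Ico_subset_Icc_self hs)
  refine ⟨steep c hc, or_iff_not_imp_left.2 fun hr => ⟨not_lt.1 hr, ?_⟩⟩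
  have hr := not_lt.1 hr
  have e₁ : P₁ c = -(m₁ c * (r₁ c * x₁ c)) := by
    simp only [hP₁, hm₁, pohozaev, hAc, hFc]; ring
  have e₂ : P₂ c = -(m₂ c * (r₂ c * x₂ c)) := by
    simp only [hP₂, hm₂, pohozaev, hAc, hFc]; ring
  have q1 := m₁pos c hc
  have q2 := m₂pos c hc
  have pr1 := h₁.r_pos c hc
  have pr2 := h₂.r_pos c hc
  have px1 := h₁.x_pos c hc
  have px2 := h₂.x_pos c hc
  by_contra! hy
  rcases le_total (m₂ c) (m₁ c) with hmc | hmc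
  · have h1 := hsmall c hc hlt hmc
    rw [e₁, e₂] at h1
    nlinarith [mul_pos q1 q2]
  · have h1 := hbig c hc hlt hmc
    have h2 : m₂ c ≤ m₁ c := by
      have e : ∀ r x : ℝ, r ^ (k + 1) * x = r ^ k * (r * x) := fun r x => by ring
      simp only [hm₁, hm₂, e]
      exact mul_le_mul (pow_le_pow_left₀ pr2.le hr _) hy (by positivity) (by positivity)
    rw [e₁, e₂] at h1
    have := mul_le_mul h2 hy (by positivity) q1.le
    linarith

/-- The case in which the second branch always lies at larger radii is incompatible with both
slopes tending to `0`. -/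
theorem not_tendsto_of_forall_r_le (h₁ : Branch k f r₁ x₁ (Ico a c))
    (h₂ : Branch k f r₂ x₂ (Ico a c)) (hac : a < c) (hf : ∀ τ ∈ Ico a c, 0 ≤ f τ)
    (hr : ∀ τ ∈ Ico a c, r₁ τ ≤ r₂ τ) (hx : ∀ τ ∈ Ico a c, x₁ τ < x₂ τ)
    (hlim : Tendsto x₂ (𝓝[<] c) (𝓝 0)) : False := by
  have : x₂ a - x₁ a ≤ 0 := by
    refine ge_of_tendsto hlim ?_
    filter_upwards [Ico_mem_nhdsLT hac] with τ hτ
    have hsub : Icc a τ ⊆ Ico a c := fun s hs => ⟨hs.1, hs.2.trans_lt hτ.2⟩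
    have := x_sub_le (h₁.mono hsub) (h₂.mono hsub) hτ.1 (fun s hs => hf s (hsub hs))
      (fun s hs => hr s (hsub hs)) (fun s hs => hx s (hsub hs))
    linarith [h₁.x_pos τ hτ]
  linarith [hx a (left_mem_Ico.2 hac)]

theorem r_sqrt_energy_deriv (h : Branch k f r x I) {τ : ℝ} (hτ : τ ∈ I)
    (hF : HasDerivAt F (f τ) τ) (hE : 0 < x τ ^ 2 + 2 * F τ) :
    HasDerivAt (fun t => r t * √(x t ^ 2 + 2 * F t))
      (-((k * x τ ^ 2 - 2 * F τ) / (x τ * √(x τ ^ 2 + 2 * F τ)))) τ := by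
  have hr := h.r_pos τ hτ
  have hx := h.x_pos τ hτ
  have hq := Real.sqrt_pos.2 hE
  refine ((h.r_deriv τ hτ).mul
    ((((h.x_deriv τ hτ).pow 2).add (hF.const_mul 2)).sqrt hE.ne')).congr_deriv ?_
  simp only [Pi.pow_apply, Pi.add_apply]
  have e := Real.sq_sqrt hE.le
  push_cast
  field_simp
  rw [e]
  ring

/-- Comparison through `r √(x² + 2F)` where `F ≤ 0`. -/
theorem r_sqrt_energy_comparison (h₁ : Branch k f r₁ x₁ (Icc a c))
    (h₂ : Branch k f r₂ x₂ (Icc a c)) (hF : ∀ τ, HasDerivAt F (f τ) τ)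
    (hF0 : ∀ τ ∈ Icc a c, F τ ≤ 0) (hE₁ : ∀ τ ∈ Icc a c, 0 < x₁ τ ^ 2 + 2 * F τ)
    (hE₂ : ∀ τ ∈ Icc a c, 0 < x₂ τ ^ 2 + 2 * F τ) (hr : r₂ a ≤ r₁ a)
    (hW : r₁ a * √(x₁ a ^ 2 + 2 * F a) < r₂ a * √(x₂ a ^ 2 + 2 * F a)) (hac : a ≤ c) :
    r₂ a * √(x₂ a ^ 2 + 2 * F a) - r₁ a * √(x₁ a ^ 2 + 2 * F a) ≤
      r₂ c * √(x₂ c ^ 2 + 2 * F c) - r₁ c * √(x₁ c ^ 2 + 2 * F c) := by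
  have steep : ∀ τ ∈ Icc a c, r₂ τ ≤ r₁ τ → r₁ τ * √(x₁ τ ^ 2 + 2 * F τ)
      < r₂ τ * √(x₂ τ ^ 2 + 2 * F τ) → x₁ τ < x₂ τ := by
    intro τ hτ hr hW
    by_contra! hx
    have e1 : x₂ τ ^ 2 ≤ x₁ τ ^ 2 := pow_le_pow_left₀ (h₂.x_pos τ hτ).le hx 2
    exact absurd hW (not_lt.2 (mul_le_mul hr (Real.sqrt_le_sqrt (by linarith))
      (Real.sqrt_nonneg _) (h₁.r_pos τ hτ).le))
  have mono : ∀ t ∈ Icc a c, (∀ s ∈ Ico a t, x₁ s < x₂ s) → r₂ t ≤ r₁ t ∧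
      r₂ a * √(x₂ a ^ 2 + 2 * F a) - r₁ a * √(x₁ a ^ 2 + 2 * F a) ≤
        r₂ t * √(x₂ t ^ 2 + 2 * F t) - r₁ t * √(x₁ t ^ 2 + 2 * F t) := by
    intro t ht hx
    have hsub : Icc a t ⊆ Icc a c := Icc_subset_Icc_right ht.2
    have hd₁ := fun τ hτ => h₁.r_sqrt_energy_deriv hτ (hF τ) (hE₁ τ hτ)
    have hd₂ := fun τ hτ => h₂.r_sqrt_energy_deriv hτ (hF τ) (hE₂ τ hτ)
    refine ⟨?_, ?_⟩
    · have := r_sub_le (h₁.mono hsub) (h₂.mono hsub) ht.1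
        (fun q hq => hx q ⟨hq.1.le, hq.2⟩)
      linarith
    refine le_of_hasDerivAt_nonneg (g := fun s => r₂ s * √(x₂ s ^ 2 + 2 * F s)
        - r₁ s * √(x₁ s ^ 2 + 2 * F s)) ht.1
      (fun s hs => ((hd₂ s (hsub hs)).sub (hd₁ s (hsub hs))).continuousAt.continuousWithinAt)
      (fun s hs => (hd₂ s (hsub (Ioo_subset_Icc_self hs))).sub
        (hd₁ s (hsub (Ioo_subset_Icc_self hs)))) (fun s hs => ?_)
    have hs' := hsub (Ioo_subset_Icc_self hs)
    have hxs := hx s ⟨hs.1.le, hs.2⟩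
    have p1 := h₁.x_pos s hs'
    have p2 := h₂.x_pos s hs'
    have hF' := hF0 s hs'
    have q1 := Real.sqrt_pos.2 (hE₁ s hs')
    have q2 := Real.sqrt_pos.2 (hE₂ s hs')
    set y₁ := √(x₁ s ^ 2 + 2 * F s) with hy₁
    set y₂ := √(x₂ s ^ 2 + 2 * F s) with hy₂
    have e1 : y₁ ^ 2 = x₁ s ^ 2 + 2 * F s := Real.sq_sqrt (hE₁ s hs').le
    have e2 : y₂ ^ 2 = x₂ s ^ 2 + 2 * F s := Real.sq_sqrt (hE₂ s hs').le
    have hsq : x₁ s ^ 2 ≤ x₂ s ^ 2 := pow_le_pow_left₀ p1.le hxs.le 2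
    have hcross : x₂ s * y₁ ≤ x₁ s * y₂ := by
      refine (pow_le_pow_iff_left₀ (by positivity) (by positivity) two_ne_zero).1 ?_
      rw [mul_pow, mul_pow, e1, e2]
      nlinarith
    have hy : y₁ ≤ y₂ := Real.sqrt_le_sqrt (by linarith)
    have hfin : (k * x₂ s ^ 2 - 2 * F s) / (x₂ s * y₂) ≤
        (k * x₁ s ^ 2 - 2 * F s) / (x₁ s * y₁) := by
      rw [div_le_div_iff₀ (by positivity) (by positivity)]
      have t1 : (k : ℝ) * x₁ s * x₂ s * (x₂ s * y₁) ≤ k * x₁ s * x₂ s * (x₁ s * y₂) :=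
        mul_le_mul_of_nonneg_left hcross (by positivity)
      have t2 : x₁ s * y₁ ≤ x₂ s * y₂ := mul_le_mul hxs.le hy q1.le p2.le
      nlinarith
    linarith
  have hx : ∀ s ∈ Icc a c, x₁ s < x₂ s := fun s hs => sub_pos.1 <|
    pos_of_no_first_zero (h := fun τ => x₂ τ - x₁ τ) (h₂.x_cont.sub h₁.x_cont)
      (sub_pos.2 (steep a (left_mem_Icc.2 hac) hr hW)) (fun t ht hp h0 => by
        obtain ⟨q1, q2⟩ := mono t (Ioc_subset_Icc_self ht) fun s hs => sub_pos.1 (hp s hs)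
        linarith [steep t (Ioc_subset_Icc_self ht) q1 (by linarith)]) s hs
  exact (mono c (right_mem_Icc.2 hac) fun s hs => hx s (Ico_subset_Icc_self hs)).2

/-- A positive gap in `r √(x² + 2F)` is incompatible with the energy tending to `0`. -/
theorem not_tendsto_of_r_sqrt_energy_lt (h₁ : Branch k f r₁ x₁ (Ico a c))
    (h₂ : Branch k f r₂ x₂ (Ico a c)) (hac : a < c) (hF : ∀ τ, HasDerivAt F (f τ) τ)
    (hF0 : ∀ τ ∈ Ico a c, F τ ≤ 0) (hE₁ : ∀ τ ∈ Ico a c, 0 < x₁ τ ^ 2 + 2 * F τ)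
    (hE₂ : ∀ τ ∈ Ico a c, 0 < x₂ τ ^ 2 + 2 * F τ) (hr : r₂ a ≤ r₁ a)
    (hW : r₁ a * √(x₁ a ^ 2 + 2 * F a) < r₂ a * √(x₂ a ^ 2 + 2 * F a))
    (hlim : Tendsto (fun τ => x₂ τ ^ 2 + 2 * F τ) (𝓝[<] c) (𝓝 0)) : False := by
  set g := r₂ a * √(x₂ a ^ 2 + 2 * F a) - r₁ a * √(x₁ a ^ 2 + 2 * F a) with hg
  have gpos : 0 < g := sub_pos.2 hW
  have hgap : ∀ τ ∈ Ico a c, g ≤ r₂ τ * √(x₂ τ ^ 2 + 2 * F τ) := by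
    intro τ hτ
    have hsub : Icc a τ ⊆ Ico a c := fun s hs => ⟨hs.1, hs.2.trans_lt hτ.2⟩
    have := r_sqrt_energy_comparison (h₁.mono hsub) (h₂.mono hsub) hF
      (fun s hs => hF0 s (hsub hs)) (fun s hs => hE₁ s (hsub hs))
      (fun s hs => hE₂ s (hsub hs)) hr hW hτ.1
    have := mul_nonneg (h₁.r_pos τ hτ).le (Real.sqrt_nonneg (x₁ τ ^ 2 + 2 * F τ))
    linarith
  have hgx : ∀ τ ∈ Ico a c, g ≤ r₂ τ * x₂ τ := fun τ hτ => by
    refine (hgap τ hτ).trans (mul_le_mul_of_nonneg_left ?_ (h₂.r_pos τ hτ).le)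
    rw [Real.sqrt_le_left (h₂.x_pos τ hτ).le]
    linarith [hF0 τ hτ]
  set R := r₂ a * Real.exp ((c - a) / g) with hR
  have ra := h₂.r_pos a (left_mem_Ico.2 hac)
  have hbound : ∀ τ ∈ Ico a c, r₂ τ ≤ R := by
    intro τ hτ
    have hsub : Icc a τ ⊆ Ico a c := fun s hs => ⟨hs.1, hs.2.trans_lt hτ.2⟩
    have hd : ∀ s ∈ Icc a τ, HasDerivAt (fun s => Real.log (r₂ s) - s / g)
        (1 / x₂ s / r₂ s - 1 / g) s := fun s hs =>
      ((h₂.r_deriv s (hsub hs)).log (h₂.r_pos s (hsub hs)).ne').sub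
        ((hasDerivAt_id s).div_const g)
    have := le_of_hasDerivAt_nonpos hτ.1
      (fun s hs => (hd s hs).continuousAt.continuousWithinAt)
      (fun s hs => hd s (Ioo_subset_Icc_self hs)) (fun s hs => by
        have hs' := hsub (Ioo_subset_Icc_self hs)
        have := one_div_le_one_div_of_le gpos (hgx s hs')
        have e : 1 / x₂ s / r₂ s = 1 / (r₂ s * x₂ s) := by
          rw [div_div, mul_comm]
        rw [e]; linarith)
    have h1 : (τ - a) / g ≤ (c - a) / g := div_le_div_of_nonneg_right (by linarith [hτ.2]) gpos.le
    have h2 : Real.log (r₂ τ) ≤ Real.log (r₂ a) + (c - a) / g := by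
      have : (τ - a) / g = τ / g - a / g := sub_div _ _ _
      linarith
    calc r₂ τ = Real.exp (Real.log (r₂ τ)) := (Real.exp_log (h₂.r_pos τ hτ)).symm
      _ ≤ Real.exp (Real.log (r₂ a) + (c - a) / g) := Real.exp_le_exp.2 h2
      _ = R := by rw [Real.exp_add, Real.exp_log ra]
  have Rpos : 0 < R := by positivity
  have hlow : (g / R) ^ 2 ≤ 0 := by
    refine ge_of_tendsto hlim ?_
    filter_upwards [Ico_mem_nhdsLT hac] with τ hτ
    have h1 : g ≤ R * √(x₂ τ ^ 2 + 2 * F τ) :=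
      (hgap τ hτ).trans (mul_le_mul_of_nonneg_right (hbound τ hτ) (Real.sqrt_nonneg _))
    have h2 : g / R ≤ √(x₂ τ ^ 2 + 2 * F τ) := by
      rw [div_le_iff₀ Rpos]; linarith
    calc (g / R) ^ 2 ≤ √(x₂ τ ^ 2 + 2 * F τ) ^ 2 := pow_le_pow_left₀ (by positivity) h2 2
      _ = _ := Real.sq_sqrt (hE₂ τ hτ).le
  have : 0 < (g / R) ^ 2 := by positivity
  linarith

/-- Two branches that decay to `0` cannot be ordered at the level where `F = 0`. -/
theorem not_ordered_of_tendsto {b : ℝ} (h₁ : Branch k f r₁ x₁ (Ico a 0))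
    (h₂ : Branch k f r₂ x₂ (Ico a 0)) (hf : Continuous f) (hab : a < -b) (hb : 0 < b)
    (hF : ∀ τ, HasDerivAt F (f τ) τ) (hF0 : ∀ τ ∈ Ico a 0, F τ ≤ 0) (hFa : F a = 0)
    (hfb : ∀ τ ∈ Ico (-b) 0, 0 ≤ f τ)
    (hE₁ : ∀ τ ∈ Ico a 0, 0 < x₁ τ ^ 2 + 2 * F τ) (hE₂ : ∀ τ ∈ Ico a 0, 0 < x₂ τ ^ 2 + 2 * F τ)
    (hlimx : Tendsto x₂ (𝓝[<] 0) (𝓝 0))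
    (hlim : Tendsto (fun τ => x₂ τ ^ 2 + 2 * F τ) (𝓝[<] 0) (𝓝 0)) (hx : x₁ a < x₂ a)
    (hr : r₁ a < r₂ a ∨ (r₂ a ≤ r₁ a ∧ r₁ a * x₁ a < r₂ a * x₂ a)) : False := by
  have ha0 : a < 0 := by linarith
  have ha : a ∈ Ico a 0 := left_mem_Ico.2 ha0
  have cross : ∀ c ∈ Ico a 0, r₂ c ≤ r₁ c →
      r₁ c * √(x₁ c ^ 2 + 2 * F c) < r₂ c * √(x₂ c ^ 2 + 2 * F c) → False := by
    intro c hc hrc hW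
    have hsub : Ico c 0 ⊆ Ico a 0 := Ico_subset_Ico_left hc.1
    exact not_tendsto_of_r_sqrt_energy_lt (h₁.mono hsub) (h₂.mono hsub) hc.2 hF
      (fun s hs => hF0 s (hsub hs)) (fun s hs => hE₁ s (hsub hs))
      (fun s hs => hE₂ s (hsub hs)) hrc hW hlim
  rcases hr with hr | ⟨hr, hy⟩
  · rcases forall_r_lt_or_exists_eq h₁ h₂ ha0 hr.le with hall | ⟨c, hc, hrc, hle⟩
    · have hsteep : ∀ τ ∈ Ico a 0, x₁ τ < x₂ τ := fun τ hτ => by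
        have hsub : Icc a τ ⊆ Ico a 0 := fun s hs => ⟨hs.1, hs.2.trans_lt hτ.2⟩
        exact x_lt_of_r_le (h₁.mono hsub) (h₂.mono hsub) hf
          (fun s hs => (hall s (hsub hs)).le) hx τ (right_mem_Icc.2 hτ.1)
      have hsub : Ico (-b) 0 ⊆ Ico a 0 := Ico_subset_Ico_left hab.le
      exact not_tendsto_of_forall_r_le (h₁.mono hsub) (h₂.mono hsub) (by linarith) hfb
        (fun s hs => (hall s (hsub hs)).le) (fun s hs => hsteep s (hsub hs)) hlimx
    · have hsub : Icc a c ⊆ Ico a 0 := fun s hs => ⟨hs.1, hs.2.trans_lt hc.2⟩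
      have hxc := x_lt_of_r_le (h₁.mono hsub) (h₂.mono hsub) hf hle hx c (right_mem_Icc.2 hc.1)
      refine cross c hc hrc.ge ?_
      rw [hrc]
      refine mul_lt_mul_of_pos_left (Real.sqrt_lt_sqrt (hE₁ c hc).le ?_) (h₂.r_pos c hc)
      have := pow_lt_pow_left₀ hxc (h₁.x_pos c hc).le two_ne_zero
      linarith
  · refine cross a ha hr ?_
    rw [hFa, mul_zero, add_zero, add_zero, Real.sqrt_sq (h₁.x_pos a ha).le,
      Real.sqrt_sq (h₂.x_pos a ha).le]
    exact hy

/-- A branch is determined by its initial values. -/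
theorem eqOn_of_eq (h₁ : Branch k f r₁ x₁ (Icc a c)) (h₂ : Branch k f r₂ x₂ (Icc a c))
    (hf : Continuous f) (hr : r₁ a = r₂ a) (hx : x₁ a = x₂ a) :
    ∀ τ ∈ Icc a c, r₁ τ = r₂ τ ∧ x₁ τ = x₂ τ := by
  have bd : ∀ {g s t : ℝ → ℝ}, Continuous g → ContinuousOn s (Icc a c) →
      ContinuousOn t (Icc a c) → (∀ τ ∈ Icc a c, 0 < s τ) → (∀ τ ∈ Icc a c, 0 < t τ) →
      ∃ C, ∀ τ ∈ Icc a c, |g τ / (s τ * t τ)| ≤ C := fun hg hs ht ps pt =>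
    isCompact_Icc.exists_bound_of_continuousOn
      (hg.continuousOn.div (hs.mul ht) fun τ hτ => (mul_pos (ps τ hτ) (pt τ hτ)).ne')
  obtain ⟨C₁, hC₁⟩ := bd (continuous_const (y := (1 : ℝ))) h₁.x_cont h₂.x_cont h₁.x_pos h₂.x_pos
  obtain ⟨C₂, hC₂⟩ := bd (continuous_const (y := (k + 1 : ℝ))) h₁.r_cont h₂.r_cont h₁.r_pos
    h₂.r_pos
  obtain ⟨C₃, hC₃⟩ := bd hf h₁.x_cont h₂.x_cont h₁.x_pos h₂.x_pos
  intro τ hτ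
  rcases hτ.1.eq_or_lt with rfl | haτ
  · exact ⟨hr, hx⟩
  have ha : a ∈ Icc a c := left_mem_Icc.2 (hτ.1.trans hτ.2)
  have hd : ∀ t ∈ Icc a c, HasDerivAt (fun s => (r₂ s - r₁ s) ^ 2 + (x₂ s - x₁ s) ^ 2)
      (2 * (r₂ t - r₁ t) * (1 / x₂ t - 1 / x₁ t) + 2 * (x₂ t - x₁ t) *
        ((-((k + 1) / r₂ t) - f t / x₂ t) - (-((k + 1) / r₁ t) - f t / x₁ t))) t := by
    intro t ht
    refine ((((h₂.r_deriv t ht).sub (h₁.r_deriv t ht)).pow 2).add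
      (((h₂.x_deriv t ht).sub (h₁.x_deriv t ht)).pow 2)).congr_deriv ?_
    simp
  have key := eq_zero_of_deriv_le_mul (C := C₁ + C₂ + 2 * C₃)
    (fun t ht => hd t (Ioc_subset_Icc_self ht)) (fun t ht => ?_) (fun t _ => by positivity) ?_ τ
    ⟨haτ, hτ.2⟩
  · have h1 := sq_nonneg (r₂ τ - r₁ τ)
    have h2 := sq_nonneg (x₂ τ - x₁ τ)
    have h3 : (r₂ τ - r₁ τ) ^ 2 = 0 := by linarith
    have h4 : (x₂ τ - x₁ τ) ^ 2 = 0 := by linarith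
    exact ⟨(sub_eq_zero.1 (pow_eq_zero_iff two_ne_zero |>.1 h3)).symm,
      (sub_eq_zero.1 (pow_eq_zero_iff two_ne_zero |>.1 h4)).symm⟩
  · have ht' := Ioc_subset_Icc_self ht
    have p1 := h₁.x_pos t ht'
    have p2 := h₂.x_pos t ht'
    have q1 := h₁.r_pos t ht'
    have q2 := h₂.r_pos t ht'
    have b1 := abs_le.1 (hC₁ t ht')
    have b2 := abs_le.1 (hC₂ t ht')
    have b3 := abs_le.1 (hC₃ t ht')
    have e : 2 * (r₂ t - r₁ t) * (1 / x₂ t - 1 / x₁ t) + 2 * (x₂ t - x₁ t) *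
        ((-((k + 1) / r₂ t) - f t / x₂ t) - (-((k + 1) / r₁ t) - f t / x₁ t)) =
        (2 * ((r₂ t - r₁ t) * (x₂ t - x₁ t))) *
          ((k + 1) / (r₁ t * r₂ t) - 1 / (x₁ t * x₂ t))
        + 2 * (x₂ t - x₁ t) ^ 2 * (f t / (x₁ t * x₂ t)) := by
      field_simp
      ring
    rw [e]
    set u := r₂ t - r₁ t
    set v := x₂ t - x₁ t
    have hC : 0 ≤ C₁ + C₂ := by linarith [b1.1, b1.2, b2.1, b2.2]
    have hC' : 0 ≤ C₃ := by linarith [b3.1, b3.2]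
    have s1 : |2 * (u * v)| ≤ u ^ 2 + v ^ 2 := by
      rw [abs_le]; constructor <;> nlinarith [sq_nonneg (u + v), sq_nonneg (u - v)]
    have s2 : |((k + 1) / (r₁ t * r₂ t) - 1 / (x₁ t * x₂ t))| ≤ C₁ + C₂ := by
      rw [abs_le]; constructor <;> linarith [b1.1, b1.2, b2.1, b2.2]
    have s3 := (le_abs_self _).trans ((abs_mul _ _).le.trans
      (mul_le_mul s1 s2 (abs_nonneg _) (by positivity)))
    have s4 : 2 * v ^ 2 * (f t / (x₁ t * x₂ t)) ≤ 2 * v ^ 2 * C₃ :=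
      mul_le_mul_of_nonneg_left b3.2 (by positivity)
    nlinarith [mul_nonneg (sq_nonneg u) hC']
  · have := (hd a ha).continuousAt.tendsto
    simp only [hr, hx, sub_self] at this
    norm_num at this
    exact this.mono_left nhdsWithin_le_nhds

end Branch

/-- `w` is a solution on `(0,∞)` of the radial equation in dimension `k + 2`, with derivative
`p`. -/
structure Sol (k : ℕ) (f w p : ℝ → ℝ) : Prop where
  w_deriv : ∀ t, 0 < t → HasDerivAt w (p t) t
  p_deriv : ∀ t, 0 < t → HasDerivAt p (-((k + 1) / t * p t) - f (w t)) t

namespace Sol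

variable {k : ℕ} {f F w p w₁ p₁ w₂ p₂ : ℝ → ℝ} {t₀ t₁ β : ℝ}

theorem neg (h : Sol k f w p) (hodd : ∀ s, f (-s) = -f s) :
    Sol k f (fun t => -w t) (fun t => -p t) :=
  ⟨fun t ht => (h.w_deriv t ht).neg, fun t ht =>
    (h.p_deriv t ht).neg.congr_deriv (by rw [hodd]; ring)⟩

theorem w_cont (h : Sol k f w p) : ContinuousOn w (Ioi 0) :=
  fun t ht => (h.w_deriv t ht).continuousAt.continuousWithinAt

theorem p_cont (h : Sol k f w p) : ContinuousOn p (Ioi 0) :=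
  fun t ht => (h.p_deriv t ht).continuousAt.continuousWithinAt

/-- Sturm-type comparison above the level `β`. -/
theorem lt_of_wronskian_nonpos (h₁ : Sol k f w₁ p₁) (h₂ : Sol k f w₂ p₂) (ht₀ : 0 ≤ t₀)
    (c₁ : ContinuousOn w₁ (Icc t₀ t₁)) (c₂ : ContinuousOn w₂ (Icc t₀ t₁))
    (hβ : ∀ t ∈ Icc t₀ t₁, β < w₁ t) (h0 : w₁ t₀ < w₂ t₀) {l : ℝ} (hl : l ≤ 0)
    (hlim : Tendsto (fun t => t ^ (k + 1) * (p₁ t * (w₂ t - β) - (w₁ t - β) * p₂ t))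
      (𝓝[>] t₀) (𝓝 l))
    (hf : ∀ s t, β < s → s ≤ t → f t * (s - β) ≤ f s * (t - β)) :
    ∀ t ∈ Icc t₀ t₁, w₁ t < w₂ t := by
  have := pos_of_no_first_zero (h := fun t => w₂ t - w₁ t) (c₂.sub c₁) (sub_pos.2 h0) ?_
  · exact fun t ht => sub_pos.1 (this t ht)
  intro t ht hpos hz
  have ht' := Ioc_subset_Icc_self ht
  have hle : ∀ s ∈ Icc t₀ t, w₁ s ≤ w₂ s := fun s hs => by
    rcases hs.2.eq_or_lt with rfl | hlt
    · linarith
    · linarith [hpos s ⟨hs.1, hlt⟩]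
  have hβ₁ : ∀ s ∈ Icc t₀ t, β < w₁ s := fun s hs => hβ s ⟨hs.1, hs.2.trans ht.2⟩
  have hβ₂ : ∀ s ∈ Icc t₀ t, 0 < w₂ s - β := fun s hs => by linarith [hβ₁ s hs, hle s hs]
  have hd : ∀ s ∈ Ioc t₀ t,
      HasDerivAt (fun s => s ^ (k + 1) * (p₁ s * (w₂ s - β) - (w₁ s - β) * p₂ s))
      (s ^ (k + 1) * (f (w₂ s) * (w₁ s - β) - f (w₁ s) * (w₂ s - β))) s := by
    intro s hs
    have hs0 : 0 < s := ht₀.trans_lt hs.1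
    refine ((hasDerivAt_pow (k + 1) s).mul
      (((h₁.p_deriv s hs0).mul ((h₂.w_deriv s hs0).sub_const β)).sub
        (((h₁.w_deriv s hs0).sub_const β).mul (h₂.p_deriv s hs0)))).congr_deriv ?_
    simp only [Nat.add_sub_cancel, Pi.sub_apply, Pi.mul_apply]
    push_cast
    field_simp
    ring
  have hW : ∀ s ∈ Ioo t₀ t, p₁ s * (w₂ s - β) - (w₁ s - β) * p₂ s ≤ 0 := by
    intro s hs
    have : s ^ (k + 1) * (p₁ s * (w₂ s - β) - (w₁ s - β) * p₂ s) ≤ l := by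
      refine ge_of_tendsto hlim ?_
      filter_upwards [Ioc_mem_nhdsGT hs.1] with q hq
      have hsub : ∀ y ∈ Icc q s, y ∈ Ioc t₀ t :=
        fun y hy => ⟨hq.1.trans_le hy.1, hy.2.trans hs.2.le⟩
      refine le_of_hasDerivAt_nonpos hq.2
        (fun y hy => (hd y (hsub y hy)).continuousAt.continuousWithinAt)
        (fun y hy => hd y (hsub y (Ioo_subset_Icc_self hy))) fun y hy => ?_
      have hy' := Ioc_subset_Icc_self (hsub y (Ioo_subset_Icc_self hy))
      have := hf _ _ (hβ₁ y hy') (hle y hy')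
      exact mul_nonpos_of_nonneg_of_nonpos
        (pow_pos ((ht₀.trans_lt hq.1).trans hy.1) _).le (by linarith)
    have hs0 := pow_pos (ht₀.trans_lt hs.1) (k + 1)
    by_contra! hcon
    linarith [mul_pos hs0 hcon]
  have hsub : Icc t₀ t ⊆ Icc t₀ t₁ := Icc_subset_Icc_right ht.2
  have key := le_of_hasDerivAt_nonpos (g := fun s => (w₁ s - β) / (w₂ s - β)) ht.1.le
    (((c₁.mono hsub).sub continuousOn_const).div ((c₂.mono hsub).sub continuousOn_const)
      fun s hs => (hβ₂ s hs).ne')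
    (fun s hs => ((h₁.w_deriv s (ht₀.trans_lt hs.1)).sub_const β).div
      ((h₂.w_deriv s (ht₀.trans_lt hs.1)).sub_const β) (hβ₂ s (Ioo_subset_Icc_self hs)).ne')
    (fun s hs => div_nonpos_of_nonpos_of_nonneg (hW s hs) (sq_nonneg _))
  have e1 : (w₁ t - β) / (w₂ t - β) = 1 := by
    rw [show w₂ t = w₁ t by linarith]
    exact div_self (by linarith [hβ t ht'])
  have hm : t₀ ∈ Icc t₀ t := left_mem_Icc.2 ht.1.le
  have e2 : (w₁ t₀ - β) / (w₂ t₀ - β) < 1 := by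
    rw [div_lt_one (hβ₂ _ hm)]; linarith
  simp only [e1] at key
  linarith

/-- Forward uniqueness from asymptotically equal data, in a region where `f` is Lipschitz. -/
theorem eqOn_of_tendsto (h₁ : Sol k f w₁ p₁) (h₂ : Sol k f w₂ p₂) (ht₀ : 0 ≤ t₀) {L : ℝ}
    (hL : 0 ≤ L) (hf : ∀ t ∈ Ioc t₀ t₁, |f (w₂ t) - f (w₁ t)| ≤ L * |w₂ t - w₁ t|)
    (hw : Tendsto (fun t => w₂ t - w₁ t) (𝓝[>] t₀) (𝓝 0))
    (hp : Tendsto (fun t => p₂ t - p₁ t) (𝓝[>] t₀) (𝓝 0)) :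
    ∀ t ∈ Ioc t₀ t₁, w₁ t = w₂ t ∧ p₁ t = p₂ t := by
  intro t ht
  have key := eq_zero_of_deriv_le_mul (C := L + 1) (a := t₀) (c := t₁)
    (g := fun t => (w₂ t - w₁ t) ^ 2 + (p₂ t - p₁ t) ^ 2)
    (g' := fun t => 2 * (w₂ t - w₁ t) * (p₂ t - p₁ t) + 2 * (p₂ t - p₁ t) *
      ((-((k + 1) / t * p₂ t) - f (w₂ t)) - (-((k + 1) / t * p₁ t) - f (w₁ t))))
    (fun s hs => ?_) (fun s hs => ?_) (fun s _ => by positivity) ?_ t ht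
  · have h1 := sq_nonneg (w₂ t - w₁ t)
    have h2 := sq_nonneg (p₂ t - p₁ t)
    have h3 : (w₂ t - w₁ t) ^ 2 = 0 := by linarith
    have h4 : (p₂ t - p₁ t) ^ 2 = 0 := by linarith
    exact ⟨(sub_eq_zero.1 (pow_eq_zero_iff two_ne_zero |>.1 h3)).symm,
      (sub_eq_zero.1 (pow_eq_zero_iff two_ne_zero |>.1 h4)).symm⟩
  · have hs0 : 0 < s := ht₀.trans_lt hs.1
    refine ((((h₂.w_deriv s hs0).sub (h₁.w_deriv s hs0)).pow 2).add
      (((h₂.p_deriv s hs0).sub (h₁.p_deriv s hs0)).pow 2)).congr_deriv ?_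
    simp
  · have hs0 : 0 < s := ht₀.trans_lt hs.1
    have hfs := hf s hs
    have hk : 0 ≤ (k + 1 : ℝ) / s := by positivity
    set a := w₂ s - w₁ s with ha
    set d := p₂ s - p₁ s with hd
    set g := f (w₂ s) - f (w₁ s) with hg
    have e : 2 * a * d + 2 * d *
        ((-((k + 1) / s * p₂ s) - f (w₂ s)) - (-((k + 1) / s * p₁ s) - f (w₁ s))) =
        2 * a * d - 2 * ((k + 1) / s) * d ^ 2 - 2 * d * g := by
      rw [ha, hd, hg]; ring
    simp only [← ha, ← hd] at *
    rw [e]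
    have s1 : -(2 * d * g) ≤ L * (a ^ 2 + d ^ 2) := by
      have t1 : -(d * g) ≤ |d| * |g| := by rw [← abs_mul]; exact neg_le_abs _
      have t2 : |d| * |g| ≤ |d| * (L * |a|) := mul_le_mul_of_nonneg_left hfs (abs_nonneg _)
      have t3 : 2 * (|a| * |d|) ≤ a ^ 2 + d ^ 2 := by
        rw [← sq_abs a, ← sq_abs d]; nlinarith [sq_nonneg (|a| - |d|)]
      nlinarith [mul_le_mul_of_nonneg_left t3 hL]
    nlinarith [sq_nonneg (a - d), mul_nonneg hk (sq_nonneg d)]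
  · have := (hw.pow 2).add (hp.pow 2)
    norm_num at this
    exact this

/-- The derivative of a solution that is continuous at the origin tends to `0` there. -/
theorem tendsto_p_zero (h : Sol k f w p) (hf : Continuous f) (hw : ContinuousOn w (Ici 0)) :
    Tendsto p (𝓝[>] 0) (𝓝 0) := by
  obtain ⟨M, hM⟩ := (isCompact_Icc (a := (0 : ℝ)) (b := 1)).exists_bound_of_continuousOn
    (hf.comp_continuousOn (hw.mono Icc_subset_Ici_self))
  have hM0 : 0 ≤ M := (norm_nonneg _).trans (hM 0 (by simp))
  have hmd : ∀ t, 0 < t → HasDerivAt (fun s => s ^ (k + 1) * p s) (-(t ^ (k + 1) * f (w t))) t := by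
    intro t ht
    refine ((hasDerivAt_pow (k + 1) t).mul (h.p_deriv t ht)).congr_deriv ?_
    simp only [Nat.add_sub_cancel]
    push_cast
    field_simp
    ring
  have hbound : ∀ t ∈ Ioc (0 : ℝ) 1, |p t| ≤ M * t := by
    intro t ht
    have hlip : ∀ s ∈ Ioc (0 : ℝ) t, |t ^ (k + 1) * p t| ≤ |s ^ (k + 1) * p s|
        + M * t ^ (k + 1) * t := by
      intro s hs
      have := norm_image_sub_le_of_norm_deriv_le_segment'
        (f := fun s => s ^ (k + 1) * p s) (f' := fun s => -(s ^ (k + 1) * f (w s)))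
        (a := s) (b := t) (C := M * t ^ (k + 1))
        (fun y hy => (hmd y (hs.1.trans_le hy.1)).hasDerivWithinAt) (fun y hy => ?_) t
        (right_mem_Icc.2 hs.2)
      · simp only [Real.norm_eq_abs] at this
        have h1 := abs_sub_abs_le_abs_sub (t ^ (k + 1) * p t) (s ^ (k + 1) * p s)
        have h2 : M * t ^ (k + 1) * (t - s) ≤ M * t ^ (k + 1) * t :=
          mul_le_mul_of_nonneg_left (by linarith [hs.1]) (by have := ht.1; positivity)
        linarith
      · have hy0 : 0 < y := hs.1.trans_le hy.1
        rw [norm_neg, norm_mul, mul_comm, Real.norm_of_nonneg (by positivity : 0 ≤ y ^ (k + 1))]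
        exact mul_le_mul (hM y ⟨hy0.le, hy.2.le.trans ht.2⟩)
          (pow_le_pow_left₀ hy0.le hy.2.le _) (by positivity) hM0
    have hmain : |t ^ (k + 1) * p t| ≤ M * t ^ (k + 1) * t := by
      refine le_of_forall_pos_le_add fun ε hε => ?_
      have hc := hw 0 (by simp)
      rw [Metric.continuousWithinAt_iff] at hc
      obtain ⟨δ, hδ, hδ'⟩ := hc (ε / 4) (by positivity)
      set s := min (δ / 2) t with hs
      have hs0 : 0 < s := lt_min (by positivity) ht.1
      obtain ⟨ξ, hξ, hξ'⟩ := exists_hasDerivAt_eq_slope w p (half_lt_self hs0)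
        (fun y hy => (h.w_deriv y ((half_pos hs0).trans_le hy.1)).continuousAt.continuousWithinAt)
        (fun y hy => h.w_deriv y ((half_pos hs0).trans hy.1))
      have hξ0 : 0 < ξ := (half_pos hs0).trans hξ.1
      have hsδ : s < δ := (min_le_left _ _).trans_lt (by linarith)
      have d1 := hδ' (x := s) hs0.le (by simpa [abs_of_pos hs0] using hsδ)
      have d2 := hδ' (x := s / 2) (half_pos hs0).le (by
        rw [Real.dist_eq, sub_zero, abs_of_pos (half_pos hs0)]; linarith)
      rw [Real.dist_eq] at d1 d2
      have d3 : |w s - w (s / 2)| ≤ ε / 2 := by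
        rw [abs_le]; rw [abs_lt] at d1 d2; constructor <;> linarith [d1.1, d1.2, d2.1, d2.2]
      have hst : s ≤ t := min_le_right _ _
      have d4 : |ξ * p ξ| ≤ ε := by
        rw [hξ', abs_mul, abs_div, abs_of_pos hξ0, show s - s / 2 = s / 2 by ring,
          abs_of_pos (half_pos hs0), mul_div_assoc', div_le_iff₀ (half_pos hs0)]
        calc ξ * |w s - w (s / 2)| ≤ s * (ε / 2) :=
              mul_le_mul hξ.2.le d3 (abs_nonneg _) hs0.le
          _ = ε * (s / 2) := by ring
      have d5 : |ξ ^ (k + 1) * p ξ| ≤ ε := by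
        rw [pow_succ, mul_assoc, abs_mul, abs_of_pos (pow_pos hξ0 k)]
        have : ξ ^ k ≤ 1 := pow_le_one₀ hξ0.le (by linarith [hξ.2, ht.2])
        nlinarith [abs_nonneg (ξ * p ξ)]
      have := hlip ξ ⟨hξ0, hξ.2.le.trans hst⟩
      linarith
    rw [abs_mul, abs_of_pos (pow_pos ht.1 _)] at hmain
    have := pow_pos ht.1 (k + 1)
    by_contra! hcon
    nlinarith
  rw [tendsto_zero_iff_abs_tendsto_zero]
  refine squeeze_zero' (Eventually.of_forall fun t => abs_nonneg _) (g := fun t => M * t) ?_ ?_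
  · filter_upwards [Ioc_mem_nhdsGT (zero_lt_one (α := ℝ))] with t ht using hbound t ht
  · have : Tendsto (fun t : ℝ => M * t) (𝓝 0) (𝓝 (M * 0)) := by
      exact (continuous_const.mul continuous_id).tendsto 0
    rw [mul_zero] at this
    exact this.mono_left nhdsWithin_le_nhds

end Sol

/-- The properties of the nonlinearity `f`, its primitive `F` and the quotient `A = F / f`, with
derivative `A'`, that drive the uniqueness proof in dimension `k + 2`. -/
structure Nonlinearity (k : ℕ) (f F A A' : ℝ → ℝ) (b β : ℝ) : Prop where
  cont : Continuous f
  odd : ∀ s, f (-s) = -f s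
  b_pos : 0 < b
  b_lt : b < β
  f_pos : ∀ s, b < s → 0 < f s
  f_nonpos : ∀ s ∈ Icc 0 b, f s ≤ 0
  F_deriv : ∀ s, HasDerivAt F (f s) s
  F_neg : ∀ s, F (-s) = F s
  F_zero : F 0 = 0
  F_beta : F β = 0
  F_nonpos : ∀ s, |s| ≤ β → F s ≤ 0
  F_pos : ∀ s, β < |s| → 0 < F s
  A_deriv : ∀ s, β ≤ |s| → HasDerivAt A (A' s) s
  A_mul : ∀ s, β ≤ |s| → A s * f s = F s
  A'_ge : ∀ s, β < |s| → k ≤ 2 * (k + 2) * A' s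
  sturm : ∀ s t, β < s → s ≤ t → f t * (s - β) ≤ f s * (t - β)
  lip : ∀ M, ∃ L, 0 ≤ L ∧ ∀ s ∈ Icc β M, ∀ t ∈ Icc β M, |f t - f s| ≤ L * |t - s|

theorem Fint_hasDerivAt {f : ℝ → ℝ} (hf : Continuous f) (s : ℝ) : HasDerivAt (Fint f) (f s) s :=
  intervalIntegral.integral_hasDerivAt_right (hf.intervalIntegrable _ _)
    (hf.stronglyMeasurableAtFilter _ _) hf.continuousAt

theorem Fint_neg {f : ℝ → ℝ} (hodd : ∀ s, f (-s) = -f s) (s : ℝ) : Fint f (-s) = Fint f s := by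
  have h := intervalIntegral.integral_comp_neg (a := 0) (b := s) f
  rw [neg_zero, intervalIntegral.integral_symm 0 (-s)] at h
  simp only [hodd, intervalIntegral.integral_neg] at h
  exact (neg_injective h).symm

theorem Fint_nonpos {f : ℝ → ℝ} {b β : ℝ} (hf : Continuous f) (h1 : Hf1 f b β) {s : ℝ}
    (hs : s ∈ Icc 0 β) : Fint f s ≤ 0 := by
  obtain ⟨-, -, hb, hbβ, hpos, hnp, -, hF⟩ := h1
  have hc : Continuous (Fint f) :=
    continuous_iff_continuousAt.2 fun s => (Fint_hasDerivAt hf s).continuousAt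
  rcases le_total s b with h | h
  · have := le_of_hasDerivAt_nonpos hs.1 hc.continuousOn (fun t _ => Fint_hasDerivAt hf t)
      fun t ht => hnp t ⟨ht.1.le, ht.2.le.trans h⟩
    simpa [Fint] using this
  · have := le_of_hasDerivAt_nonneg hs.2 hc.continuousOn (fun t _ => Fint_hasDerivAt hf t)
      fun t ht => (hpos t (h.trans_lt ht.1)).le
    exact this.trans hF.le

theorem Fint_pos {f : ℝ → ℝ} {b β : ℝ} (hf : Continuous f) (h1 : Hf1 f b β) {s : ℝ}
    (hs : β < s) : 0 < Fint f s := by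
  obtain ⟨-, -, hb, hbβ, hpos, -, -, hF⟩ := h1
  have hc : Continuous (Fint f) :=
    continuous_iff_continuousAt.2 fun s => (Fint_hasDerivAt hf s).continuousAt
  have := strictMonoOn_of_deriv_pos (convex_Icc β s) hc.continuousOn (fun t ht => by
    rw [interior_Icc] at ht
    rw [(Fint_hasDerivAt hf t).deriv]
    exact hpos t (hbβ.trans ht.1)) (left_mem_Icc.2 hs.le) (right_mem_Icc.2 hs.le) hs
  rwa [hF] at this

theorem sturm_of_Hf3 {f : ℝ → ℝ} {β : ℝ} (hβ : 0 < β) (h2 : Hf2 f) (h3 : Hf3 f β) {s t : ℝ}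
    (hs : β < s) (hst : s ≤ t) : f t * (s - β) ≤ f s * (t - β) := by
  have hd : ∀ τ, β < τ → HasDerivAt (fun τ => f τ / (τ - β))
      ((deriv f τ * (τ - β) - f τ * 1) / (τ - β) ^ 2) τ := fun τ hτ =>
    (h2.2.1 τ (hβ.trans hτ)).hasDerivAt.div ((hasDerivAt_id τ).sub_const β) (sub_pos.2 hτ).ne'
  have := le_of_hasDerivAt_nonpos hst
    (fun τ hτ => (hd τ (hs.trans_le hτ.1)).continuousAt.continuousWithinAt)
    (fun τ hτ => hd τ (hs.trans hτ.1)) fun τ hτ =>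
      div_nonpos_of_nonpos_of_nonneg (by linarith [h3 τ (hs.trans hτ.1).le]) (sq_nonneg _)
  rwa [div_le_div_iff₀ (by linarith) (by linarith)] at this

theorem exists_lipschitz_of_Hf2 {f : ℝ → ℝ} {β : ℝ} (hβ : 0 < β) (h2 : Hf2 f) (M : ℝ) :
    ∃ L, 0 ≤ L ∧ ∀ s ∈ Icc β M, ∀ t ∈ Icc β M, |f t - f s| ≤ L * |t - s| := by
  obtain ⟨L, hL⟩ := (isCompact_Icc (a := β) (b := M)).exists_bound_of_continuousOn
    (h2.2.2.1.mono fun s hs => hβ.trans_le hs.1)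
  refine ⟨max L 0, le_max_right _ _, fun s hs t ht => ?_⟩
  exact (convex_Icc β M).norm_image_sub_le_of_norm_deriv_le
    (fun τ hτ => h2.2.1 τ (hβ.trans_le hτ.1)) (fun τ hτ => (hL τ hτ).trans (le_max_left _ _)) hs ht

theorem nonlinearity_of_hypotheses {k : ℕ} {f : ℝ → ℝ} {b β : ℝ} (hf : Continuous f)
    (h1 : Hf1 f b β) (h2 : Hf2 f) (h3 : Hf3 f β) (h4 : Hf4 (k + 2) f β) :
    Nonlinearity k f (Fint f) (fun s => Fint f s / f s) (deriv fun s => Fint f s / f s) b β := by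
  have h1' := h1
  obtain ⟨hodd, -, hb, hbβ, hpos, hnp, -, hF⟩ := h1'
  have hβ := hb.trans hbβ
  have hne : ∀ s, β ≤ |s| → f s ≠ 0 := by
    intro s hs
    rcases abs_cases s with ⟨h, _⟩ | ⟨h, _⟩
    · exact (hpos s (by linarith)).ne'
    · have := hpos (-s) (by linarith)
      rw [hodd] at this
      linarith
  have habs : ∀ s, Fint f |s| = Fint f s := by
    intro s
    rcases abs_choice s with h | h <;> rw [h]
    exact Fint_neg hodd s
  have hfd : ∀ s, s ≠ 0 → DifferentiableAt ℝ f s := by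
    intro s hs
    rcases hs.lt_or_gt with h | h
    · have : f = fun t => -f (-t) := funext fun t => by rw [hodd, neg_neg]
      rw [this]
      exact (DifferentiableAt.comp s (h2.2.1 (-s) (by linarith)) differentiableAt_id.neg).neg
    · exact h2.2.1 s h
  have hAe : (fun s => Fint f s / f s) = fun s => -(Fint f (-s) / f (-s)) :=
    funext fun s => by rw [Fint_neg hodd, hodd, div_neg, neg_neg]
  refine ⟨hf, hodd, hb, hbβ, hpos, hnp, Fint_hasDerivAt hf, Fint_neg hodd, by simp [Fint], hF,
    fun s hs => ?_, fun s hs => ?_, fun s hs => ?_, fun s hs => ?_, fun s hs => ?_,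
    fun s t => sturm_of_Hf3 hβ h2 h3, exists_lipschitz_of_Hf2 hβ h2⟩
  · rw [← habs]
    exact Fint_nonpos hf h1 ⟨abs_nonneg s, hs⟩
  · rw [← habs]
    exact Fint_pos hf h1 hs
  · refine (DifferentiableAt.div (Fint_hasDerivAt hf s).differentiableAt (hfd s ?_)
      (hne s hs)).hasDerivAt
    rintro rfl
    simp at hs
    linarith
  · exact div_mul_cancel₀ _ (hne s hs)
  · have key : ∀ s, β < s → (k : ℝ) ≤ 2 * (k + 2) * deriv (fun s => Fint f s / f s) s := by
      intro s hs
      have := h4 s hs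
      rw [div_le_iff₀ (by positivity)] at this
      push_cast at this
      linarith
    rcases abs_cases s with ⟨h, _⟩ | ⟨h, _⟩
    · exact key s (h ▸ hs)
    · have e : deriv (fun s => Fint f s / f s) s = deriv (fun s => Fint f s / f s) (-s) := by
        conv_lhs => rw [hAe]
        rw [deriv.fun_neg, deriv_comp_neg (fun s => Fint f s / f s), neg_neg]
      rw [e]
      exact key (-s) (h ▸ hs)

/-- Twice the energy of a solution. -/
def energy (F w p : ℝ → ℝ) (t : ℝ) : ℝ := p t ^ 2 + 2 * F (w t)

namespace Sol

variable {k : ℕ} {f F A A' w p : ℝ → ℝ} {b β t t₀ : ℝ}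

theorem energy_deriv (h : Sol k f w p) (hF : ∀ s, HasDerivAt F (f s) s) (ht : 0 < t) :
    HasDerivAt (energy F w p) (-(2 * ((k + 1) / t) * p t ^ 2)) t := by
  refine (((h.p_deriv t ht).pow 2).add
    (((hF (w t)).comp t (h.w_deriv t ht)).const_mul 2)).congr_deriv ?_
  push_cast
  ring

theorem energy_antitone (h : Sol k f w p) (hF : ∀ s, HasDerivAt F (f s) s) :
    AntitoneOn (energy F w p) (Ioi 0) := by
  intro s hs t ht hst
  have hs' : (0 : ℝ) < s := hs
  refine le_of_hasDerivAt_nonpos hst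
    (fun τ hτ => (h.energy_deriv hF (hs'.trans_le hτ.1)).continuousAt.continuousWithinAt)
    (fun τ hτ => h.energy_deriv hF (hs'.trans hτ.1)) fun τ hτ => ?_
  have : 0 < τ := hs'.trans hτ.1
  have : 0 ≤ 2 * ((k + 1 : ℝ) / τ) * p τ ^ 2 := by positivity
  linarith

theorem exists_tendsto_energy (h : Sol k f w p) (N : Nonlinearity k f F A A' b β)
    (hlim : Tendsto w atTop (𝓝 0)) :
    ∃ ξ : ℝ → ℝ, (∀ t, 0 < t → t < ξ t ∧ ξ t < t + 1) ∧
      Tendsto (fun t => energy F w p (ξ t)) atTop (𝓝 0) := by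
  have hmvt : ∀ t, ∃ c, 0 < t → c ∈ Ioo t (t + 1) ∧ p c = w (t + 1) - w t := by
    intro t
    by_cases ht : 0 < t
    · obtain ⟨c, hc, e⟩ := exists_hasDerivAt_eq_slope w p (lt_add_one t)
        (h.w_cont.mono fun s hs => ht.trans_le hs.1) fun s hs => h.w_deriv s (ht.trans hs.1)
      exact ⟨c, fun _ => ⟨hc, by simpa using e⟩⟩
    · exact ⟨0, fun h => absurd h ht⟩
  choose ξ hξ using hmvt
  refine ⟨ξ, fun t ht => ⟨(hξ t ht).1.1, (hξ t ht).1.2⟩, ?_⟩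
  have hξt : Tendsto ξ atTop atTop := by
    refine tendsto_atTop_mono' atTop ?_ tendsto_id
    filter_upwards [eventually_gt_atTop 0] with t ht using (hξ t ht).1.1.le
  have h1 : Tendsto (fun t => w (t + 1) - w t) atTop (𝓝 (0 - 0)) :=
    (hlim.comp (tendsto_atTop_add_const_right _ 1 tendsto_id)).sub hlim
  have h2 : Tendsto (fun t => F (w (ξ t))) atTop (𝓝 (F 0)) :=
    (N.F_deriv 0).continuousAt.tendsto.comp (hlim.comp hξt)
  have h3 := (h1.pow 2).add (h2.const_mul 2)
  rw [N.F_zero] at h3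
  simp only [sub_self, ne_eq, OfNat.ofNat_ne_zero, not_false_eq_true, zero_pow, mul_zero,
    add_zero] at h3
  refine h3.congr' ?_
  filter_upwards [eventually_gt_atTop 0] with t ht
  rw [energy, (hξ t ht).2]

theorem energy_nonneg (h : Sol k f w p) (N : Nonlinearity k f F A A' b β)
    (hlim : Tendsto w atTop (𝓝 0)) (ht : 0 < t) : 0 ≤ energy F w p t := by
  obtain ⟨ξ, hξ, hE⟩ := h.exists_tendsto_energy N hlim
  refine le_of_tendsto hE ?_
  filter_upwards [eventually_ge_atTop t] with s hs
  have := (hξ s (ht.trans_le hs)).1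
  exact h.energy_antitone N.F_deriv ht (show (0 : ℝ) < ξ s by linarith) (by linarith)

theorem tendsto_energy (h : Sol k f w p) (N : Nonlinearity k f F A A' b β)
    (hlim : Tendsto w atTop (𝓝 0)) : Tendsto (energy F w p) atTop (𝓝 0) := by
  obtain ⟨ξ, hξ, hE⟩ := h.exists_tendsto_energy N hlim
  refine squeeze_zero' ?_ ?_ (hE.comp (tendsto_atTop_add_const_right _ (-1) tendsto_id))
  · filter_upwards [eventually_gt_atTop 0] with t ht using h.energy_nonneg N hlim ht
  · filter_upwards [eventually_gt_atTop 1] with t ht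
    have := hξ (t + -1) (by linarith)
    exact h.energy_antitone N.F_deriv (show (0 : ℝ) < ξ (t + -1) by linarith)
      (show (0 : ℝ) < t by linarith) (by linarith)

theorem eq_zero_of_energy_eq_zero (h : Sol k f w p) (N : Nonlinearity k f F A A' b β)
    (hlim : Tendsto w atTop (𝓝 0)) (ht₀ : 0 < t₀) (hE : energy F w p t₀ = 0) :
    ∀ t, t₀ ≤ t → w t = 0 ∧ p t = 0 := by
  have E0 : ∀ t, t₀ ≤ t → energy F w p t = 0 := fun t ht => le_antisymm
    (hE ▸ h.energy_antitone N.F_deriv ht₀ (ht₀.trans_le ht) ht)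
    (h.energy_nonneg N hlim (ht₀.trans_le ht))
  have p0 : ∀ t, t₀ < t → p t = 0 := by
    intro t ht
    have ht0 := ht₀.trans ht
    have hd : HasDerivAt (energy F w p) 0 t := by
      refine (hasDerivAt_const t (0 : ℝ)).congr_of_eventuallyEq ?_
      filter_upwards [Ioi_mem_nhds ht] with s hs using E0 s (le_of_lt hs)
    have := hd.unique (h.energy_deriv N.F_deriv ht0)
    have hk : (0 : ℝ) < 2 * ((k + 1) / t) := by positivity
    have : p t ^ 2 = 0 := by
      rcases mul_eq_zero.1 (neg_eq_zero.1 this.symm) with h | h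
      · exact absurd h hk.ne'
      · exact h
    exact pow_eq_zero_iff two_ne_zero |>.1 this
  have w0 : ∀ t, t₀ ≤ t → w t = 0 := by
    intro t ht
    refine tendsto_nhds_unique (tendsto_const_nhds.congr' ?_) hlim
    filter_upwards [eventually_ge_atTop t] with s hs
    have hc : ContinuousOn w (Icc t s) := h.w_cont.mono fun τ hτ => ht₀.trans_le (ht.trans hτ.1)
    have hd : ∀ τ ∈ Ioo t s, HasDerivAt w (p τ) τ :=
      fun τ hτ => h.w_deriv τ (ht₀.trans_le (ht.trans hτ.1.le))
    exact le_antisymm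
      (le_of_hasDerivAt_nonneg hs hc hd fun τ hτ => (p0 τ (ht.trans_lt hτ.1)).ge)
      (le_of_hasDerivAt_nonpos hs hc hd fun τ hτ => (p0 τ (ht.trans_lt hτ.1)).le)
  intro t ht
  refine ⟨w0 t ht, ?_⟩
  have := E0 t ht
  rw [energy, w0 t ht, N.F_zero] at this
  exact pow_eq_zero_iff two_ne_zero |>.1 (by linarith)

theorem energy_pos (h : Sol k f w p) (N : Nonlinearity k f F A A' b β)
    (hlim : Tendsto w atTop (𝓝 0)) (ht : 0 < t) (hne : p t ≠ 0) : 0 < energy F w p t :=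
  (h.energy_nonneg N hlim ht).lt_of_ne fun h0 =>
    hne (h.eq_zero_of_energy_eq_zero N hlim ht h0.symm t le_rfl).2

theorem beta_lt_abs_of_p_eq_zero (h : Sol k f w p) (N : Nonlinearity k f F A A' b β)
    (hlim : Tendsto w atTop (𝓝 0)) (ht : 0 < t) (hp : p t = 0) (hw : w t ≠ 0) : β < |w t| := by
  by_contra! hle
  have h1 := h.energy_nonneg N hlim ht
  have h2 := N.F_nonpos _ hle
  have h3 : energy F w p t = 0 := le_antisymm (by rw [energy, hp]; linarith) h1
  exact hw (h.eq_zero_of_energy_eq_zero N hlim ht h3 t le_rfl).1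

theorem beta_lt_w_zero (h : Sol k f w p) (N : Nonlinearity k f F A A' b β)
    (hc : ContinuousOn w (Ici 0)) (hlim : Tendsto w atTop (𝓝 0)) (h0 : 0 < w 0) : β < w 0 := by
  by_contra! hle
  have hw0 : Tendsto w (𝓝[>] 0) (𝓝 (w 0)) :=
    (hc 0 self_mem_Ici).mono_left (nhdsWithin_mono _ Ioi_subset_Ici_self)
  have hE : Tendsto (energy F w p) (𝓝[>] 0) (𝓝 (0 ^ 2 + 2 * F (w 0))) :=
    ((h.tendsto_p_zero N.cont hc).pow 2).add
      (((N.F_deriv (w 0)).continuousAt.tendsto.comp hw0).const_mul 2)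
  have hF := N.F_nonpos (w 0) (by rwa [abs_of_pos h0])
  have hz : ∀ t, 0 < t → w t = 0 := by
    intro t ht
    have : energy F w p t ≤ 0 ^ 2 + 2 * F (w 0) := by
      refine ge_of_tendsto hE ?_
      filter_upwards [Ioo_mem_nhdsGT ht] with s hs
      exact h.energy_antitone N.F_deriv hs.1 ht hs.2.le
    exact (h.eq_zero_of_energy_eq_zero N hlim ht
      (le_antisymm (by linarith) (h.energy_nonneg N hlim ht)) t le_rfl).1
  have : w 0 = 0 := by
    refine tendsto_nhds_unique hw0 (tendsto_const_nhds.congr' ?_)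
    filter_upwards [self_mem_nhdsWithin] with t ht using (hz t ht).symm
  linarith

/-- A transversal zero is a sign change. -/
theorem signChange_of_p_ne_zero (h : Sol k f w p) (ht : 0 < t) (hw : w t = 0) (hp : p t ≠ 0) :
    SignChange w t := by
  refine ⟨hw, fun ε hε => ?_⟩
  have hs := (hasDerivAt_iff_tendsto_slope.1 (h.w_deriv t ht))
  have hr : Tendsto (slope w t) (𝓝[>] t) (𝓝 (p t)) :=
    hs.mono_left (nhdsWithin_mono _ fun s hs => ne_of_gt hs)
  have hl : Tendsto (slope w t) (𝓝[<] t) (𝓝 (p t)) :=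
    hs.mono_left (nhdsWithin_mono _ fun s hs => ne_of_lt hs)
  have hm : max (t - ε) 0 < t := max_lt (by linarith) ht
  have key : ∀ s, s ≠ t → slope w t s * (s - t) = w s := fun s hs => by
    rw [slope_def_field, hw, sub_zero, div_mul_cancel₀ _ (sub_ne_zero.2 hs)]
  have inR : ∀ s ∈ Ioo t (t + ε), s ∈ Ioo (t - ε) (t + ε) ∩ Ioi 0 := fun s hs =>
    ⟨⟨by linarith [hs.1], hs.2⟩, ht.trans hs.1⟩
  have inL : ∀ s ∈ Ioo (max (t - ε) 0) t, s ∈ Ioo (t - ε) (t + ε) ∩ Ioi 0 := fun s hs =>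
    ⟨⟨(le_max_left _ _).trans_lt hs.1, by linarith [hs.2]⟩, (le_max_right _ _).trans_lt hs.1⟩
  rcases hp.lt_or_gt with hp | hp
  · obtain ⟨s, h1, h2⟩ := ((hr.eventually_lt_const hp).and
      (Ioo_mem_nhdsGT (show t < t + ε by linarith))).exists
    obtain ⟨s', h1', h2'⟩ := ((hl.eventually_lt_const hp).and (Ioo_mem_nhdsLT hm)).exists
    refine ⟨⟨s', inL s' h2', ?_⟩, ⟨s, inR s h2, ?_⟩⟩
    · rw [← key s' h2'.2.ne]; exact mul_pos_of_neg_of_neg h1' (by linarith [h2'.2])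
    · rw [← key s h2.1.ne']; exact mul_neg_of_neg_of_pos h1 (by linarith [h2.1])
  · obtain ⟨s, h1, h2⟩ := ((hr.eventually_const_lt hp).and
      (Ioo_mem_nhdsGT (show t < t + ε by linarith))).exists
    obtain ⟨s', h1', h2'⟩ := ((hl.eventually_const_lt hp).and (Ioo_mem_nhdsLT hm)).exists
    refine ⟨⟨s, inR s h2, ?_⟩, ⟨s', inL s' h2', ?_⟩⟩
    · rw [← key s h2.1.ne']; exact mul_pos h1 (by linarith [h2.1])
    · rw [← key s' h2'.2.ne]; exact mul_neg_of_pos_of_neg h1' (by linarith [h2'.2])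

end Sol

/-- The shape of a bound state with one sign change: `w` decreases from `w 0 > β` to a minimum
`w T < -β`, then increases to zero. -/
structure Shape (k : ℕ) (f F w p : ℝ → ℝ) (β T : ℝ) : Prop where
  sol : Sol k f w p
  cont : ContinuousOn w (Ici 0)
  lim : Tendsto w atTop (𝓝 0)
  beta_lt : β < w 0
  T_pos : 0 < T
  p_neg : ∀ t ∈ Ioo 0 T, p t < 0
  p_T : p T = 0
  w_T : w T < -β
  w_nonpos : ∀ t, T < t → w t ≤ 0
  w_zero : ∀ t, T < t → w t = 0 → ∀ s, t ≤ s → w s = 0 ∧ p s = 0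
  p_pos : ∀ t, T < t → w t < 0 → 0 < p t
  energy_pos : ∀ t, 0 < t → p t ≠ 0 → 0 < energy F w p t
  energy_lim : Tendsto (energy F w p) atTop (𝓝 0)

namespace Sol

variable {k : ℕ} {f F A A' w p : ℝ → ℝ} {b β t z : ℝ}

theorem sign_structure (h : Sol k f w p) (N : Nonlinearity k f F A A' b β)
    (hc : ContinuousOn w (Ici 0)) (hlim : Tendsto w atTop (𝓝 0)) (h0 : 0 < w 0)
    (hz : 0 < z) (hzs : SignChange w z) (huniq : ∀ t, 0 < t → SignChange w t → t = z) :
    (∀ t ∈ Ico 0 z, 0 < w t) ∧ p z < 0 ∧ (∀ t, z < t → w t ≤ 0) ∧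
      ∀ t, z < t → w t = 0 → ∀ s, t ≤ s → w s = 0 ∧ p s = 0 := by
  have h_rest : ∀ t, 0 < t → t ≠ z → w t = 0 → ∀ s, t ≤ s → w s = 0 ∧ p s = 0 := by
    intro t ht htz hw
    refine h.eq_zero_of_energy_eq_zero N hlim ht ?_
    have : p t = 0 := by
      by_contra hp
      exact htz (huniq t ht (h.signChange_of_p_ne_zero ht hw hp))
    rw [energy, this, hw, N.F_zero]
    ring
  have hno : ∀ t, 0 < t → t < z → w t ≠ 0 := by
    intro t ht htz hw
    obtain ⟨x, hx, hpos⟩ := (hzs.2 (z - t) (by linarith)).1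
    have := (h_rest t ht htz.ne hw x (by linarith [hx.1.1])).1
    linarith
  have hpos : ∀ t ∈ Ico 0 z, 0 < w t := by
    intro t ht
    refine pos_of_no_first_zero (hc.mono Icc_subset_Ici_self) h0 (fun s hs _ hs0 => ?_) t
      (right_mem_Icc.2 ht.1)
    exact hno s hs.1 (hs.2.trans_lt ht.2) hs0
  have hpz : p z < 0 := by
    refine lt_of_le_of_ne (deriv_nonpos_at_first_zero hz (h.w_deriv z hz) hpos hzs.1) fun hp => ?_
    have hall := h.eq_zero_of_energy_eq_zero N hlim hz
      (by rw [energy, hp, hzs.1, N.F_zero]; ring)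
    obtain ⟨x, hx, hneg⟩ := (hzs.2 1 one_pos).2
    rcases le_or_gt z x with hzx | hzx
    · linarith [(hall x hzx).1]
    · linarith [hpos x ⟨le_of_lt hx.2, hzx⟩]
  refine ⟨hpos, hpz, fun t ht => ?_, fun t ht => h_rest t (hz.trans ht) ht.ne'⟩
  by_contra! hwt
  obtain ⟨x, hx, hneg⟩ := (hzs.2 (t - z) (by linarith)).2
  have hzx : z < x := by
    by_contra! hxz
    rcases hxz.eq_or_lt with rfl | hlt
    · linarith [hzs.1]
    · linarith [hpos x ⟨le_of_lt hx.2, hlt⟩]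
  have hxt : x ≤ t := by linarith [hx.1.2]
  obtain ⟨s, hs, hs0⟩ := intermediate_value_Icc hxt
    (h.w_cont.mono fun τ hτ => (hz.trans hzx).trans_le hτ.1) ⟨hneg.le, hwt.le⟩
  have := (h_rest s (hz.trans (hzx.trans_le hs.1)) (by linarith [hs.1]) hs0 t hs.2).1
  linarith

theorem exists_p_neg_near_zero (h : Sol k f w p) (hf : Continuous f) (hc : ContinuousOn w (Ici 0))
    (hb : ∀ s, b < s → 0 < f s) (h0 : b < w 0) : ∃ δ, 0 < δ ∧ ∀ t ∈ Ioc 0 δ, p t < 0 := by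
  have hw0 : Tendsto w (𝓝[>] 0) (𝓝 (w 0)) :=
    (hc 0 self_mem_Ici).mono_left (nhdsWithin_mono _ Ioi_subset_Ici_self)
  obtain ⟨δ, hδ, hsub⟩ := (mem_nhdsGT_iff_exists_Ioc_subset).1 (hw0.eventually_const_lt h0)
  have hδ0 : (0 : ℝ) < δ := hδ
  refine ⟨δ, hδ0, fun t ht => ?_⟩
  have hmd : ∀ t, 0 < t → HasDerivAt (fun s => s ^ (k + 1) * p s) (-(t ^ (k + 1) * f (w t))) t := by
    intro t ht
    refine ((hasDerivAt_pow (k + 1) t).mul (h.p_deriv t ht)).congr_deriv ?_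
    simp only [Nat.add_sub_cancel]
    push_cast
    field_simp
    ring
  have hneg : ∀ s ∈ Ioc 0 δ, -(s ^ (k + 1) * f (w s)) < 0 := fun s hs =>
    neg_neg_of_pos (mul_pos (pow_pos hs.1 _) (hb _ (hsub hs)))
  have anti : StrictAntiOn (fun s => s ^ (k + 1) * p s) (Ioc 0 δ) := by
    refine strictAntiOn_of_deriv_neg (convex_Ioc 0 δ)
      (fun s hs => (hmd s hs.1).continuousAt.continuousWithinAt) fun s hs => ?_
    rw [interior_Ioc] at hs
    rw [(hmd s hs.1).deriv]
    exact hneg s ⟨hs.1, hs.2.le⟩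
  have hlim : Tendsto (fun s => s ^ (k + 1) * p s) (𝓝[>] 0) (𝓝 (0 ^ (k + 1) * 0)) :=
    (((continuous_pow (k + 1)).tendsto 0).mono_left nhdsWithin_le_nhds).mul
      (h.tendsto_p_zero hf hc)
  have ht2 : t / 2 ∈ Ioc 0 δ := ⟨by linarith [ht.1], by linarith [ht.1, ht.2]⟩
  have h1 : (t / 2) ^ (k + 1) * p (t / 2) ≤ 0 ^ (k + 1) * 0 := by
    refine ge_of_tendsto hlim ?_
    filter_upwards [Ioo_mem_nhdsGT ht2.1] with s hs
    exact (anti ⟨hs.1, hs.2.le.trans ht2.2⟩ ht2 hs.2).le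
  have h2 : t ^ (k + 1) * p t < (t / 2) ^ (k + 1) * p (t / 2) := anti ht2 ht (by linarith [ht.1])
  rw [mul_zero] at h1
  by_contra! hp
  linarith [mul_nonneg (pow_nonneg ht.1.le (k + 1)) hp]

theorem exists_shape (h : Sol k f w p) (N : Nonlinearity k f F A A' b β)
    (hc : ContinuousOn w (Ici 0)) (hlim : Tendsto w atTop (𝓝 0)) (h0 : 0 < w 0)
    (hz : 0 < z) (hzs : SignChange w z) (huniq : ∀ t, 0 < t → SignChange w t → t = z) :
    ∃ T, Shape k f F w p β T := by
  obtain ⟨hpos, hpz, hnp, h_rest⟩ := h.sign_structure N hc hlim h0 hz hzs huniq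
  have hβ := h.beta_lt_w_zero N hc hlim h0
  have fneg : ∀ s, s < -β → 0 < -f s := fun s hs => by
    have := N.f_pos (-s) (by linarith [N.b_lt])
    rwa [N.odd] at this
  have p_neg_z : ∀ t ∈ Ioc 0 z, p t < 0 := by
    obtain ⟨δ, hδ, hδp⟩ := h.exists_p_neg_near_zero N.cont hc N.f_pos (N.b_lt.trans hβ)
    intro t ht
    rcases le_or_gt t δ with htδ | htδ
    · exact hδp t ⟨ht.1, htδ⟩
    have := pos_of_no_first_zero (h := fun s => -p s) (a := δ) (c := t)
      (h.p_cont.mono fun s hs => hδ.trans_le hs.1).neg (neg_pos.2 (hδp δ ⟨hδ, le_rfl⟩))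
      (fun s hs hs' hs0 => ?_) t (right_mem_Icc.2 htδ.le)
    · linarith
    have hs00 : 0 < s := hδ.trans hs.1
    have ps0 : p s = 0 := neg_eq_zero.1 hs0
    have hsz : s < z := by
      refine lt_of_le_of_ne (hs.2.trans ht.2) ?_
      rintro rfl
      linarith
    have hws := hpos s ⟨hs00.le, hsz⟩
    have hβs := h.beta_lt_abs_of_p_eq_zero N hlim hs00 ps0 hws.ne'
    rw [abs_of_pos hws] at hβs
    have hd := deriv_nonpos_at_first_zero hs.1 (h.p_deriv s hs00).neg hs' hs0
    rw [ps0, mul_zero] at hd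
    linarith [N.f_pos (w s) (N.b_lt.trans hβs)]
  have hex : ∃ t, z < t ∧ p t = 0 := by
    by_contra! hne
    have hneg : ∀ t, z ≤ t → p t < 0 := by
      intro t ht
      have := pos_of_no_first_zero (h := fun s => -p s) (a := z) (c := t)
        (h.p_cont.mono fun s hs => hz.trans_le hs.1).neg (neg_pos.2 hpz)
        (fun s hs _ hs0 => hne s hs.1 (neg_eq_zero.1 hs0)) t (right_mem_Icc.2 ht)
      linarith
    have anti : StrictAntiOn w (Ici z) := by
      refine strictAntiOn_of_deriv_neg (convex_Ici z) (h.w_cont.mono fun s hs => hz.trans_le hs)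
        fun s hs => ?_
      rw [interior_Ici] at hs
      rw [(h.w_deriv s (hz.trans hs)).deriv]
      exact hneg s (le_of_lt hs)
    have h1 : w (z + 1) < w z := anti self_mem_Ici (show z ≤ z + 1 by linarith) (by linarith)
    have h2 : 0 ≤ w (z + 1) := by
      refine le_of_tendsto hlim ?_
      filter_upwards [eventually_ge_atTop (z + 1)] with s hs
      exact anti.antitoneOn (show z ≤ z + 1 by linarith) (show z ≤ s by linarith) hs
    linarith [hzs.1]
  obtain ⟨t₁, ht₁, hpt₁⟩ := hex
  obtain ⟨T, ⟨⟨hzT, -⟩, hpT⟩, hTmin⟩ := (isCompact_Icc.of_isClosed_subset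
    ((h.p_cont.mono fun s (hs : s ∈ Icc z t₁) => hz.trans_le hs.1).preimage_isClosed_of_isClosed
      isClosed_Icc (isClosed_singleton (x := (0 : ℝ)))) inter_subset_left).exists_isLeast
    ⟨t₁, right_mem_Icc.2 ht₁.le, hpt₁⟩
  have hpT : p T = 0 := hpT
  have hzT' : z < T := hzT.lt_of_ne (by rintro rfl; linarith)
  have hT1 : T ≤ t₁ := hTmin ⟨right_mem_Icc.2 ht₁.le, hpt₁⟩
  have hT0 : 0 < T := hz.trans hzT'
  have p_neg : ∀ t ∈ Ioo 0 T, p t < 0 := by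
    intro t ht
    rcases le_or_gt t z with htz | htz
    · exact p_neg_z t ⟨ht.1, htz⟩
    have := pos_of_no_first_zero (h := fun s => -p s) (a := z) (c := t)
      (h.p_cont.mono fun s hs => hz.trans_le hs.1).neg (neg_pos.2 hpz)
      (fun s hs _ hs0 => ?_) t (right_mem_Icc.2 htz.le)
    · linarith
    have : T ≤ s := hTmin ⟨⟨hs.1.le, by linarith [hs.2, ht.2]⟩, neg_eq_zero.1 hs0⟩
    linarith [hs.2, ht.2]
  have hwT0 : w T < 0 := by
    have anti : StrictAntiOn w (Icc z T) := by
      refine strictAntiOn_of_deriv_neg (convex_Icc z T)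
        (h.w_cont.mono fun s hs => hz.trans_le hs.1) fun s hs => ?_
      rw [interior_Icc] at hs
      rw [(h.w_deriv s (hz.trans hs.1)).deriv]
      exact p_neg s ⟨hz.trans hs.1, hs.2⟩
    have := anti (left_mem_Icc.2 hzT) (right_mem_Icc.2 hzT) hzT'
    linarith [hzs.1]
  have hwT : w T < -β := by
    have := h.beta_lt_abs_of_p_eq_zero N hlim hT0 hpT hwT0.ne
    rw [abs_of_neg hwT0] at this
    linarith
  have h_rest' : ∀ t, T < t → w t = 0 → ∀ s, t ≤ s → w s = 0 ∧ p s = 0 :=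
    fun t ht => h_rest t (hzT'.trans ht)
  refine ⟨T, h, hc, hlim, hβ, hT0, p_neg, hpT, hwT, fun t ht => hnp t (hzT'.trans ht), h_rest',
    fun t ht hwt => ?_, fun t ht hp => h.energy_pos N hlim ht hp, h.tendsto_energy N hlim⟩
  have hd := h.p_deriv T hT0
  rw [hpT, mul_zero, neg_zero, zero_sub] at hd
  have hslope : Tendsto (slope p T) (𝓝[>] T) (𝓝 (-f (w T))) :=
    (hasDerivAt_iff_tendsto_slope.1 hd).mono_left (nhdsWithin_mono _ fun s hs => ne_of_gt hs)
  obtain ⟨a, ha, haT⟩ := ((hslope.eventually_const_lt (fneg _ hwT)).and (Ioo_mem_nhdsGT ht)).exists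
  have hpa : 0 < p a := by
    rw [slope_def_field, hpT, sub_zero] at ha
    exact (div_pos_iff_of_pos_right (sub_pos.2 haT.1)).1 ha
  refine pos_of_no_first_zero (a := a) (c := t)
    (h.p_cont.mono fun s hs => hT0.trans (haT.1.trans_le hs.1)) hpa (fun s hs hs' hs0 => ?_) t
      (right_mem_Icc.2 haT.2.le)
  have hTs : T < s := haT.1.trans hs.1
  have hws : w s < 0 := by
    refine lt_of_le_of_ne (hnp s (hzT'.trans hTs)) fun hs0 => ?_
    linarith [(h_rest' s hTs hs0 t hs.2).1]
  have hβs := h.beta_lt_abs_of_p_eq_zero N hlim (hT0.trans hTs) hs0 hws.ne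
  rw [abs_of_neg hws] at hβs
  have hd := deriv_nonpos_at_first_zero hs.1 (h.p_deriv s (hT0.trans hTs)) hs' hs0
  rw [hs0, mul_zero] at hd
  linarith [fneg (w s) (by linarith)]

end Sol

/-- The inverse of an increasing piece of a solution is a branch. -/
theorem Sol.exists_branch {k : ℕ} {f g q : ℝ → ℝ} {J : Set ℝ} (h : Sol k f g q) (hJo : IsOpen J)
    (hJ : Convex ℝ J) (hJ0 : J ⊆ Ioi 0) (hq : ∀ t ∈ J, 0 < q t) :
    ∃ r : ℝ → ℝ, (∀ t ∈ J, r (g t) = t) ∧ Branch k f r (fun τ => q (r τ)) (g '' J) := by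
  have hc : ContinuousOn g J := h.w_cont.mono hJ0
  have mono : StrictMonoOn g J := by
    refine strictMonoOn_of_deriv_pos hJ hc fun t ht => ?_
    have ht := interior_subset ht
    rw [(h.w_deriv t (hJ0 ht)).deriv]
    exact hq t ht
  have hinv : ∀ t ∈ J, Function.invFunOn g J (g t) = t := fun t ht =>
    mono.injOn.leftInvOn_invFunOn ht
  set r := Function.invFunOn g J with hr
  have hgJ : ∀ t ∈ J, g '' J ∈ 𝓝 (g t) := by
    intro t ht
    obtain ⟨ε, hε, hsub⟩ := Metric.isOpen_iff.1 hJo t ht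
    rw [Real.ball_eq_Ioo] at hsub
    have hIcc : Icc (t - ε / 2) (t + ε / 2) ⊆ J := fun s hs =>
      hsub ⟨by linarith [hs.1], by linarith [hs.2]⟩
    have m1 : t - ε / 2 ∈ J := hIcc ⟨le_rfl, by linarith⟩
    have m2 : t + ε / 2 ∈ J := hIcc ⟨by linarith, le_rfl⟩
    refine mem_of_superset (Icc_mem_nhds (mono m1 ht (by linarith)) (mono ht m2 (by linarith))) ?_
    exact (intermediate_value_Icc (by linarith) (hc.mono hIcc)).trans (image_mono hIcc)
  have rmono : StrictMonoOn r (g '' J) := by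
    rintro _ ⟨s, hs, rfl⟩ _ ⟨t, ht, rfl⟩ hst
    rw [hinv s hs, hinv t ht]
    exact (mono.lt_iff_lt hs ht).1 hst
  have rimg : r '' (g '' J) = J := by
    rw [image_image]
    exact (image_congr hinv).trans (image_id' J)
  have hrd : ∀ t ∈ J, HasDerivAt r (1 / q t) (g t) := by
    intro t ht
    rw [one_div]
    refine HasDerivAt.of_local_left_inverse (f := g) ?_ ?_ (hq t ht).ne' ?_
    · refine rmono.continuousAt_of_image_mem_nhds (hgJ t ht) ?_
      rw [rimg, hinv t ht]
      exact hJo.mem_nhds ht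
    · rw [hinv t ht]
      exact h.w_deriv t (hJ0 ht)
    · filter_upwards [hgJ t ht]
      rintro _ ⟨s, hs, rfl⟩
      rw [hinv s hs]
  refine ⟨r, hinv, ?_, ?_, ?_, ?_⟩
  all_goals
    rintro _ ⟨t, ht, rfl⟩
    simp only [hinv t ht]
  · exact hJ0 ht
  · exact hq t ht
  · exact hrd t ht
  · have h1 : HasDerivAt q (-((k + 1) / r (g t) * q (r (g t))) - f (g (r (g t)))) (r (g t)) :=
      h.p_deriv _ (by rw [hinv t ht]; exact hJ0 ht)
    refine (h1.comp (g t) (hrd t ht)).congr_deriv ?_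
    rw [hinv t ht]
    have := hq t ht
    have : 0 < t := hJ0 ht
    field_simp

/-- A one-sign-change bound state together with the inverses of its two monotone pieces, the
decreasing one being reflected. -/
structure Profile (k : ℕ) (f F w p : ℝ → ℝ) (β T : ℝ) (rA rB : ℝ → ℝ) : Prop
    extends Shape k f F w p β T where
  A : Branch k f rA (fun τ => -p (rA τ)) (Ioo (-w 0) (-w T))
  A_mem : ∀ τ ∈ Ioo (-w 0) (-w T), rA τ ∈ Ioo 0 T ∧ w (rA τ) = -τ
  A_left : ∀ t ∈ Ioo 0 T, -w t ∈ Ioo (-w 0) (-w T) ∧ rA (-w t) = t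
  B : Branch k f rB (fun τ => p (rB τ)) (Ioo (w T) 0)
  B_mem : ∀ τ ∈ Ioo (w T) 0, T < rB τ ∧ w (rB τ) = τ
  B_left : ∀ t, T < t → w t < 0 → w t ∈ Ioo (w T) 0 ∧ rB (w t) = t

namespace Shape

variable {k : ℕ} {f F w p : ℝ → ℝ} {β T s t : ℝ}

theorem w_strictAntiOn (h : Shape k f F w p β T) : StrictAntiOn w (Icc 0 T) := by
  refine strictAntiOn_of_deriv_neg (convex_Icc 0 T) (h.cont.mono Icc_subset_Ici_self)
    fun t ht => ?_
  rw [interior_Icc] at ht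
  rw [(h.sol.w_deriv t ht.1).deriv]
  exact h.p_neg t ht

theorem w_neg_of_le (h : Shape k f F w p β T) (hwt : w t < 0) (hs : T < s) (hst : s ≤ t) :
    w s < 0 :=
  lt_of_le_of_ne (h.w_nonpos s hs) fun h0 => by linarith [(h.w_zero s hs h0 t hst).1]

theorem w_strictMonoOn (h : Shape k f F w p β T) (hwt : w t < 0) : StrictMonoOn w (Icc T t) := by
  refine strictMonoOn_of_deriv_pos (convex_Icc T t)
    (h.sol.w_cont.mono fun s hs => h.T_pos.trans_le hs.1) fun s hs => ?_
  rw [interior_Icc] at hs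
  rw [(h.sol.w_deriv s (h.T_pos.trans hs.1)).deriv]
  exact h.p_pos s hs.1 (h.w_neg_of_le hwt hs.1 hs.2.le)

theorem exists_profile (h : Shape k f F w p β T) (hodd : ∀ s, f (-s) = -f s) :
    ∃ rA rB, Profile k f F w p β T rA rB := by
  have hT := h.T_pos
  have anti := h.w_strictAntiOn
  obtain ⟨rA, hA, bA⟩ := (h.sol.neg hodd).exists_branch (isOpen_Ioo (a := 0) (b := T))
    (convex_Ioo 0 T) (fun t ht => ht.1) fun t ht => neg_pos.2 (h.p_neg t ht)
  have iA : (fun t => -w t) '' Ioo 0 T = Ioo (-w 0) (-w T) := by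
    refine Subset.antisymm ?_
      (intermediate_value_Ioo hT.le (h.cont.mono Icc_subset_Ici_self).neg)
    rintro _ ⟨t, ht, rfl⟩
    exact ⟨neg_lt_neg (anti (left_mem_Icc.2 hT.le) (Ioo_subset_Icc_self ht) ht.1),
      neg_lt_neg (anti (Ioo_subset_Icc_self ht) (right_mem_Icc.2 hT.le) ht.2)⟩
  set J := {t | T < t ∧ w t < 0} with hJ
  have hJo : IsOpen J := by
    have : J = Ioi T ∩ w ⁻¹' Iio 0 := rfl
    rw [this]
    exact (h.sol.w_cont.mono (Ioi_subset_Ioi hT.le)).isOpen_inter_preimage isOpen_Ioi isOpen_Iio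
  have hJc : Convex ℝ J := OrdConnected.convex ⟨fun s hs t ht τ hτ =>
    ⟨hs.1.trans_le hτ.1, h.w_neg_of_le ht.2 (hs.1.trans_le hτ.1) hτ.2⟩⟩
  obtain ⟨rB, hB, bB⟩ := h.sol.exists_branch hJo hJc (fun t ht => hT.trans ht.1)
    fun t ht => h.p_pos t ht.1 ht.2
  have lowB : ∀ t ∈ J, w T < w t := fun t ht =>
    h.w_strictMonoOn ht.2 (left_mem_Icc.2 ht.1.le) (right_mem_Icc.2 ht.1.le) ht.1
  have iB : w '' J = Ioo (w T) 0 := by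
    refine Subset.antisymm ?_ ?_
    · rintro _ ⟨t, ht, rfl⟩
      exact ⟨lowB t ht, ht.2⟩
    · intro τ hτ
      obtain ⟨t, h1, h2⟩ := ((h.lim.eventually_const_lt hτ.2).and (eventually_gt_atTop T)).exists
      obtain ⟨s, hs, e⟩ := intermediate_value_Ioo h2.le
        (h.sol.w_cont.mono fun s hs => hT.trans_le hs.1) ⟨hτ.1, h1⟩
      exact ⟨s, ⟨hs.1, e ▸ hτ.2⟩, e⟩
  refine ⟨rA, rB, h, iA ▸ bA, fun τ hτ => ?_, fun t ht => ⟨iA ▸ mem_image_of_mem _ ht, hA t ht⟩,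
    iB ▸ bB, fun τ hτ => ?_, fun t h1 h2 => ⟨⟨lowB t ⟨h1, h2⟩, h2⟩, hB t ⟨h1, h2⟩⟩⟩
  · rw [← iA] at hτ
    obtain ⟨t, ht, rfl⟩ := hτ
    simp only [hA t ht, neg_neg]
    exact ⟨ht, trivial⟩
  · rw [← iB] at hτ
    obtain ⟨t, ht, rfl⟩ := hτ
    rw [hB t ht]
    exact ⟨ht.1, rfl⟩

end Shape

theorem Branch.r_strictMonoOn {k : ℕ} {f r x : ℝ → ℝ} {a c : ℝ} (h : Branch k f r x (Ioo a c)) :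
    StrictMonoOn r (Ioo a c) := by
  refine strictMonoOn_of_deriv_pos (convex_Ioo a c) h.r_cont fun τ hτ => ?_
  rw [interior_Ioo] at hτ
  rw [(h.r_deriv τ hτ).deriv]
  exact one_div_pos.2 (h.x_pos τ hτ)

theorem tendsto_inverse_nhdsGT {r g : ℝ → ℝ} {a c t₀ t₁ : ℝ} (hr : StrictMonoOn r (Ioo a c))
    (hac : a < c) (ht : t₀ < t₁) (hg : ∀ t ∈ Ioo t₀ t₁, g t ∈ Ioo a c ∧ r (g t) = t)
    (hmem : ∀ τ ∈ Ioo a c, t₀ < r τ) : Tendsto r (𝓝[>] a) (𝓝[>] t₀) := by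
  refine tendsto_nhdsWithin_iff.2 ⟨tendsto_order.2 ⟨fun s hs => ?_, fun s hs => ?_⟩, ?_⟩
  · filter_upwards [Ioo_mem_nhdsGT hac] with τ hτ using hs.trans (hmem τ hτ)
  · obtain ⟨t, h1, h2⟩ := exists_between (lt_min hs ht)
    obtain ⟨hgt, e⟩ := hg t ⟨h1, h2.trans_le (min_le_right _ _)⟩
    filter_upwards [Ioo_mem_nhdsGT hgt.1] with τ hτ
    have := hr ⟨hτ.1, hτ.2.trans hgt.2⟩ hgt hτ.2
    rw [e] at this
    exact this.trans (h2.trans_le (min_le_left _ _))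
  · filter_upwards [Ioo_mem_nhdsGT hac] with τ hτ using hmem τ hτ

theorem tendsto_inverse_nhdsLT {r g : ℝ → ℝ} {a c t₀ t₁ : ℝ} (hr : StrictMonoOn r (Ioo a c))
    (hac : a < c) (ht : t₀ < t₁) (hg : ∀ t ∈ Ioo t₀ t₁, g t ∈ Ioo a c ∧ r (g t) = t)
    (hmem : ∀ τ ∈ Ioo a c, r τ < t₁) : Tendsto r (𝓝[<] c) (𝓝[<] t₁) := by
  refine tendsto_nhdsWithin_iff.2 ⟨tendsto_order.2 ⟨fun s hs => ?_, fun s hs => ?_⟩, ?_⟩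
  · obtain ⟨t, h1, h2⟩ := exists_between (max_lt hs ht)
    obtain ⟨hgt, e⟩ := hg t ⟨(le_max_right _ _).trans_lt h1, h2⟩
    filter_upwards [Ioo_mem_nhdsLT hgt.2] with τ hτ
    have := hr hgt ⟨hgt.1.trans hτ.1, hτ.2⟩ hτ.1
    rw [e] at this
    exact ((le_max_left _ _).trans_lt h1).trans this
  · filter_upwards [Ioo_mem_nhdsLT hac] with τ hτ using (hmem τ hτ).trans hs
  · filter_upwards [Ioo_mem_nhdsLT hac] with τ hτ using hmem τ hτ

namespace Profile

variable {k : ℕ} {f F A A' w p rA rB : ℝ → ℝ} {b β T τ : ℝ}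

theorem wT_neg (h : Profile k f F w p β T rA rB) (hβ : 0 < β) : w T < 0 := by
  linarith [h.w_T]

theorem neg_w0_lt (h : Profile k f F w p β T rA rB) (hβ : 0 < β) : -w 0 < -w T := by
  linarith [h.w_T, h.beta_lt]

theorem A_tendsto_left (h : Profile k f F w p β T rA rB) (hβ : 0 < β) :
    Tendsto rA (𝓝[>] (-w 0)) (𝓝[>] 0) :=
  tendsto_inverse_nhdsGT h.A.r_strictMonoOn (h.neg_w0_lt hβ) h.T_pos h.A_left
    fun τ hτ => (h.A_mem τ hτ).1.1

theorem A_tendsto_right (h : Profile k f F w p β T rA rB) (hβ : 0 < β) :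
    Tendsto rA (𝓝[<] (-w T)) (𝓝[<] T) :=
  tendsto_inverse_nhdsLT h.A.r_strictMonoOn (h.neg_w0_lt hβ) h.T_pos h.A_left
    fun τ hτ => (h.A_mem τ hτ).1.2

theorem B_tendsto_left (h : Profile k f F w p β T rA rB) (hβ : 0 < β) :
    Tendsto rB (𝓝[>] (w T)) (𝓝[>] T) := by
  have hc : ContinuousAt w T := (h.sol.w_deriv T h.T_pos).continuousAt
  obtain ⟨t₁, ht₁, hsub⟩ := mem_nhdsGT_iff_exists_Ioo_subset.1
    (nhdsWithin_le_nhds (hc.eventually_lt_const (h.wT_neg hβ)) : _ ∈ 𝓝[>] T)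
  exact tendsto_inverse_nhdsGT h.B.r_strictMonoOn (h.wT_neg hβ) ht₁
    (fun t ht => h.B_left t ht.1 (hsub ht)) fun τ hτ => (h.B_mem τ hτ).1

theorem xA_tendsto_left (h : Profile k f F w p β T rA rB) (N : Nonlinearity k f F A A' b β)
    (hβ : 0 < β) : Tendsto (fun τ => -p (rA τ)) (𝓝[>] (-w 0)) (𝓝 0) := by
  have := ((h.sol.tendsto_p_zero N.cont h.cont).comp (h.A_tendsto_left hβ)).neg
  rwa [neg_zero] at this

theorem p_tendsto (h : Profile k f F w p β T rA rB) : Tendsto p (𝓝 T) (𝓝 0) := by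
  have := (h.sol.p_deriv T h.T_pos).continuousAt.tendsto
  rwa [h.p_T] at this

theorem xA_tendsto_right (h : Profile k f F w p β T rA rB) (hβ : 0 < β) :
    Tendsto (fun τ => -p (rA τ)) (𝓝[<] (-w T)) (𝓝 0) := by
  have := (h.p_tendsto.comp ((h.A_tendsto_right hβ).mono_right nhdsWithin_le_nhds)).neg
  rwa [neg_zero] at this

theorem xB_tendsto_left (h : Profile k f F w p β T rA rB) (hβ : 0 < β) :
    Tendsto (fun τ => p (rB τ)) (𝓝[>] (w T)) (𝓝 0) :=
  h.p_tendsto.comp ((h.B_tendsto_left hβ).mono_right nhdsWithin_le_nhds)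

theorem A_energy_pos (h : Profile k f F w p β T rA rB) (N : Nonlinearity k f F A A' b β)
    (hτ : τ ∈ Ioo (-w 0) (-w T)) : 0 < (-p (rA τ)) ^ 2 + 2 * F τ := by
  obtain ⟨h1, h2⟩ := h.A_mem τ hτ
  have := h.energy_pos (rA τ) h1.1 (h.p_neg _ h1).ne
  rwa [energy, h2, N.F_neg, ← neg_sq] at this

theorem B_energy_eq (h : Profile k f F w p β T rA rB) (hτ : τ ∈ Ioo (w T) 0) :
    p (rB τ) ^ 2 + 2 * F τ = energy F w p (rB τ) := by
  rw [energy, (h.B_mem τ hτ).2]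

theorem B_energy_pos (h : Profile k f F w p β T rA rB) (hτ : τ ∈ Ioo (w T) 0) :
    0 < p (rB τ) ^ 2 + 2 * F τ := by
  rw [h.B_energy_eq hτ]
  exact h.energy_pos _ (h.T_pos.trans (h.B_mem τ hτ).1) (h.B.x_pos τ hτ).ne'

theorem exists_energy_lt (h : Profile k f F w p β T rA rB) (N : Nonlinearity k f F A A' b β)
    (hβ : 0 < β) {ε : ℝ} (hε : 0 < ε) : ∃ t, T < t ∧ w t < 0 ∧ energy F w p t < ε := by
  obtain ⟨t, h1, h2⟩ := ((h.energy_lim.eventually_lt_const hε).and (eventually_gt_atTop T)).exists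
  rcases (h.w_nonpos t h2).eq_or_lt with h0 | h0
  swap
  · exact ⟨t, h2, h0, h1⟩
  have hcw : ContinuousOn w (Icc T t) := h.sol.w_cont.mono fun s hs => h.T_pos.trans_le hs.1
  obtain ⟨Z, ⟨⟨hTZ, hZt⟩, hwZ⟩, hmin⟩ := (isCompact_Icc.of_isClosed_subset
    (hcw.preimage_isClosed_of_isClosed isClosed_Icc (isClosed_singleton (x := (0 : ℝ))))
      inter_subset_left).exists_isLeast ⟨t, right_mem_Icc.2 h2.le, h0⟩
  have hwZ : w Z = 0 := hwZ
  have hTZ' : T < Z := hTZ.lt_of_ne (by rintro rfl; linarith [h.wT_neg hβ])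
  have hEZ : energy F w p Z < ε := by
    rw [energy, hwZ, (h.w_zero Z hTZ' hwZ Z le_rfl).2, N.F_zero]
    linarith
  have hcE := (h.sol.energy_deriv N.F_deriv (h.T_pos.trans hTZ')).continuousAt
  obtain ⟨s, hs, hs'⟩ := (((hcE.eventually_lt_const hEZ).filter_mono nhdsWithin_le_nhds).and
    (Ioo_mem_nhdsLT hTZ')).exists
  refine ⟨s, hs'.1, lt_of_le_of_ne (h.w_nonpos s hs'.1) fun hs0 => ?_, hs⟩
  have : Z ≤ s := hmin ⟨⟨hs'.1.le, hs'.2.le.trans hZt⟩, hs0⟩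
  linarith [hs'.2]

theorem B_energy_tendsto (h : Profile k f F w p β T rA rB) (N : Nonlinearity k f F A A' b β)
    (hβ : 0 < β) : Tendsto (fun τ => p (rB τ) ^ 2 + 2 * F τ) (𝓝[<] 0) (𝓝 0) := by
  refine tendsto_order.2 ⟨fun a ha => ?_, fun ε hε => ?_⟩
  · filter_upwards [Ioo_mem_nhdsLT (h.wT_neg hβ)] with τ hτ using ha.trans (h.B_energy_pos hτ)
  · obtain ⟨t, hTt, hwt, hEt⟩ := h.exists_energy_lt N hβ hε
    obtain ⟨hm, e⟩ := h.B_left t hTt hwt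
    filter_upwards [Ioo_mem_nhdsLT hwt] with τ hτ
    have hτ' : τ ∈ Ioo (w T) 0 := ⟨hm.1.trans hτ.1, hτ.2⟩
    have hlt := h.B.r_strictMonoOn hm hτ' hτ.1
    rw [e] at hlt
    rw [h.B_energy_eq hτ']
    exact (h.sol.energy_antitone N.F_deriv (h.T_pos.trans hTt)
      (h.B.r_pos τ hτ') hlt.le).trans_lt hEt

theorem xB_tendsto_right (h : Profile k f F w p β T rA rB) (N : Nonlinearity k f F A A' b β)
    (hβ : 0 < β) : Tendsto (fun τ => p (rB τ)) (𝓝[<] 0) (𝓝 0) := by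
  have hF : Tendsto F (𝓝[<] 0) (𝓝 (F 0)) :=
    (N.F_deriv 0).continuousAt.tendsto.mono_left nhdsWithin_le_nhds
  have h1 := ((h.B_energy_tendsto N hβ).sub (hF.const_mul 2)).sqrt
  rw [N.F_zero, mul_zero, sub_zero, Real.sqrt_zero] at h1
  refine h1.congr' ?_
  filter_upwards [Ioo_mem_nhdsLT (h.wT_neg hβ)] with τ hτ
  rw [add_sub_cancel_right, Real.sqrt_sq (h.B.x_pos τ hτ).le]

end Profile

theorem Branch.x_lt_of_tendsto {k : ℕ} {f r₁ x₁ r₂ x₂ : ℝ → ℝ} {a c : ℝ}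
    (h₁ : Branch k f r₁ x₁ (Ioc a c)) (h₂ : Branch k f r₂ x₂ (Icc a c)) (hf : Continuous f)
    (hac : a < c) (hr : ∀ τ ∈ Ioo a c, r₁ τ < r₂ τ) (hx : Tendsto x₁ (𝓝[>] a) (𝓝 0)) :
    r₁ c ≤ r₂ c ∧ x₁ c < x₂ c := by
  have ha : a ∈ Icc a c := left_mem_Icc.2 hac.le
  have hc : c ∈ Icc a c := right_mem_Icc.2 hac.le
  have hrc : r₁ c ≤ r₂ c := by
    refine le_of_tendsto_of_tendsto
      ((h₁.r_deriv c (right_mem_Ioc.2 hac)).continuousAt.tendsto.mono_left nhdsWithin_le_nhds)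
      ((h₂.r_deriv c hc).continuousAt.tendsto.mono_left nhdsWithin_le_nhds)
      (?_ : ∀ᶠ τ in 𝓝[<] c, r₁ τ ≤ r₂ τ)
    filter_upwards [Ioo_mem_nhdsLT hac] with τ hτ using (hr τ hτ).le
  refine ⟨hrc, ?_⟩
  obtain ⟨τ, h1, h2⟩ := ((hx.eventually_lt
    ((h₂.x_deriv a ha).continuousAt.tendsto.mono_left nhdsWithin_le_nhds)
    (h₂.x_pos a ha)).and (Ioo_mem_nhdsGT hac)).exists
  refine x_lt_of_r_le (h₁.mono fun s hs => ⟨h2.1.trans_le hs.1, hs.2⟩)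
    (h₂.mono (Icc_subset_Icc_left h2.1.le)) hf (fun s hs => ?_) h1 c (right_mem_Icc.2 h2.2.le)
  rcases hs.2.eq_or_lt with rfl | hlt
  · exact hrc
  · exact (hr s ⟨h2.1.trans_le hs.1, hlt⟩).le

theorem tendsto_pohozaev {k : ℕ} {F A r x : ℝ → ℝ} {c T : ℝ} {l : Filter ℝ} (hl : l ≤ 𝓝 c)
    (hF : ContinuousAt F c) (hA : ContinuousAt A c) (hr : Tendsto r l (𝓝 T))
    (hx : Tendsto x l (𝓝 0)) :
    Tendsto (pohozaev k F A r x) l (𝓝 (-(T ^ (k + 2) * (2 * F c)))) := by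
  have := (((hA.tendsto.mono_left hl).const_mul (2 * (k + 2 : ℝ))).mul
    ((hr.pow (k + 1)).mul hx)).neg.sub
    ((hr.pow (k + 2)).mul ((hx.pow 2).add ((hF.tendsto.mono_left hl).const_mul 2)))
  rw [show -(T ^ (k + 2) * (2 * F c)) = -(2 * (k + 2) * A c * (T ^ (k + 1) * 0)) -
    T ^ (k + 2) * (0 ^ 2 + 2 * F c) by ring]
  exact this

namespace Profile

variable {k : ℕ} {f F A A' w₁ p₁ w₂ p₂ rA₁ rB₁ rA₂ rB₂ : ℝ → ℝ} {b β T₁ T₂ : ℝ}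

theorem rA_lt (P₁ : Profile k f F w₁ p₁ β T₁ rA₁ rB₁) (P₂ : Profile k f F w₂ p₂ β T₂ rA₂ rB₂)
    (N : Nonlinearity k f F A A' b β) (hα : w₁ 0 < w₂ 0) :
    ∀ τ ∈ Ioo (-w₁ 0) (-β), rA₁ τ < rA₂ τ := by
  have hβ : 0 < β := N.b_pos.trans N.b_lt
  intro τ hτ
  by_contra! hle
  obtain ⟨m1, e1⟩ := P₁.A_mem τ ⟨hτ.1, by linarith [hτ.2, P₁.w_T]⟩
  obtain ⟨m2, e2⟩ := P₂.A_mem τ ⟨by linarith [hτ.1], by linarith [hτ.2, P₂.w_T]⟩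
  have anti := P₁.w_strictAntiOn.antitoneOn
  have hw : ∀ t ∈ Icc 0 (rA₁ τ), -τ ≤ w₁ t := fun t ht =>
    e1 ▸ anti ⟨ht.1, ht.2.trans m1.2.le⟩ (Ioo_subset_Icc_self m1) ht.2
  have c1 := P₁.cont.mono (Icc_subset_Ici_self (a := rA₁ τ) (b := 0))
  have c2 := P₂.cont.mono (Icc_subset_Ici_self (a := rA₁ τ) (b := 0))
  have hw0 : ∀ {w : ℝ → ℝ}, ContinuousOn w (Ici 0) → Tendsto w (𝓝[>] 0) (𝓝 (w 0)) := fun hc =>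
    (hc 0 self_mem_Ici).mono_left (nhdsWithin_mono _ Ioi_subset_Ici_self)
  have hlim := (((continuous_pow (k + 1)).tendsto (0 : ℝ)).mono_left
    (nhdsWithin_le_nhds (s := Ioi 0))).mul
    (((P₁.sol.tendsto_p_zero N.cont P₁.cont).mul ((hw0 P₂.cont).sub_const β)).sub
      (((hw0 P₁.cont).sub_const β).mul (P₂.sol.tendsto_p_zero N.cont P₂.cont)))
  have key := P₁.sol.lt_of_wronskian_nonpos P₂.sol le_rfl c1 c2
    (fun t ht => by linarith [hw t ht, hτ.2]) hα (by simp) hlim N.sturm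
    (rA₂ τ) ⟨m2.1.le, hle⟩
  linarith [hw (rA₂ τ) ⟨m2.1.le, hle⟩]

theorem rB_lt (P₁ : Profile k f F w₁ p₁ β T₁ rA₁ rB₁) (P₂ : Profile k f F w₂ p₂ β T₂ rA₂ rB₂)
    (N : Nonlinearity k f F A A' b β) (hS : w₂ T₂ < w₁ T₁) (hT : T₁ < T₂) :
    ∀ τ ∈ Ioo (w₁ T₁) (-β), rB₁ τ < rB₂ τ := by
  have hβ : 0 < β := N.b_pos.trans N.b_lt
  intro τ hτ
  by_contra! hle
  obtain ⟨m1, e1⟩ := P₁.B_mem τ ⟨hτ.1, by linarith [hτ.2]⟩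
  obtain ⟨m2, e2⟩ := P₂.B_mem τ ⟨hS.trans hτ.1, by linarith [hτ.2]⟩
  have hneg : w₁ (rB₁ τ) < 0 := by linarith [hτ.2]
  have mono := P₁.w_strictMonoOn hneg
  have hend : rB₁ τ ∈ Icc T₁ (rB₁ τ) := right_mem_Icc.2 m1.le
  have hw : ∀ t ∈ Icc T₂ (rB₁ τ), w₁ t ≤ τ := fun t ht =>
    e1 ▸ mono.monotoneOn ⟨hT.le.trans ht.1, ht.2⟩ hend ht.2
  have hT₂ : T₂ ∈ Icc T₂ (rB₁ τ) := ⟨le_rfl, m2.le.trans hle⟩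
  have hw₁T₂ : w₁ T₁ < w₁ T₂ := mono (left_mem_Icc.2 m1.le) ⟨hT.le, hT₂.2⟩ hT
  have hp₁T₂ : 0 < p₁ T₂ := P₁.p_pos T₂ hT (by linarith [hw T₂ hT₂, hτ.2])
  have s1 := P₁.sol.neg N.odd
  have s2 := P₂.sol.neg N.odd
  have hsub : Icc T₂ (rB₁ τ) ⊆ Ioi 0 := fun t ht => P₂.T_pos.trans_le ht.1
  have hca : ∀ {g : ℝ → ℝ}, ContinuousOn g (Ioi 0) → Tendsto g (𝓝[>] T₂) (𝓝 (g T₂)) := fun hc =>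
    (hc.continuousAt (Ioi_mem_nhds P₂.T_pos)).tendsto.mono_left nhdsWithin_le_nhds
  have hlim := (((continuous_pow (k + 1)).tendsto T₂).mono_left
    (nhdsWithin_le_nhds (s := Ioi T₂))).mul
    (((hca s1.p_cont).mul ((hca s2.w_cont).sub_const β)).sub
      (((hca s1.w_cont).sub_const β).mul (hca s2.p_cont)))
  have key := s1.lt_of_wronskian_nonpos s2 P₂.T_pos.le (s1.w_cont.mono hsub) (s2.w_cont.mono hsub)
    (fun t ht => by linarith [hw t ht, hτ.2]) (by linarith) ?_ hlim N.sturm (rB₂ τ) ⟨m2.le, hle⟩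
  · linarith [hw (rB₂ τ) ⟨m2.le, hle⟩]
  · have h1 : 0 < -w₂ T₂ - β := by linarith [P₂.w_T]
    have := mul_pos (pow_pos P₂.T_pos (k + 1)) (mul_pos hp₁T₂ h1)
    rw [P₂.p_T]
    linarith

theorem A_ordered (P₁ : Profile k f F w₁ p₁ β T₁ rA₁ rB₁)
    (P₂ : Profile k f F w₂ p₂ β T₂ rA₂ rB₂) (N : Nonlinearity k f F A A' b β)
    (hα : w₁ 0 < w₂ 0) : rA₁ (-β) ≤ rA₂ (-β) ∧ -p₁ (rA₁ (-β)) < -p₂ (rA₂ (-β)) := by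
  have hβ : 0 < β := N.b_pos.trans N.b_lt
  exact (P₁.A.mono fun τ hτ => ⟨hτ.1, by linarith [hτ.2, P₁.w_T]⟩).x_lt_of_tendsto
    (P₂.A.mono fun τ hτ => ⟨by linarith [hτ.1], by linarith [hτ.2, P₂.w_T]⟩) N.cont
    (by linarith [P₁.beta_lt]) (P₁.rA_lt P₂ N hα) (P₁.xA_tendsto_left N hβ)

theorem B_ordered (P₁ : Profile k f F w₁ p₁ β T₁ rA₁ rB₁)
    (P₂ : Profile k f F w₂ p₂ β T₂ rA₂ rB₂) (N : Nonlinearity k f F A A' b β)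
    (hS : w₂ T₂ < w₁ T₁) (hT : T₁ < T₂) :
    rB₁ (-β) ≤ rB₂ (-β) ∧ p₁ (rB₁ (-β)) < p₂ (rB₂ (-β)) := by
  have hβ : 0 < β := N.b_pos.trans N.b_lt
  exact (P₁.B.mono fun τ hτ => ⟨hτ.1, by linarith [hτ.2]⟩).x_lt_of_tendsto
    (P₂.B.mono fun τ hτ => ⟨by linarith [hτ.1], by linarith [hτ.2]⟩) N.cont
    P₁.w_T (P₁.rB_lt P₂ N hS hT) (P₁.xB_tendsto_left hβ)

theorem false_of_B_ordered (P₁ : Profile k f F w₁ p₁ β T₁ rA₁ rB₁)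
    (P₂ : Profile k f F w₂ p₂ β T₂ rA₂ rB₂) (N : Nonlinearity k f F A A' b β)
    (hx : p₁ (rB₁ (-β)) < p₂ (rB₂ (-β)))
    (hr : rB₁ (-β) < rB₂ (-β) ∨ (rB₂ (-β) ≤ rB₁ (-β) ∧
      rB₁ (-β) * p₁ (rB₁ (-β)) < rB₂ (-β) * p₂ (rB₂ (-β)))) : False := by
  have hβ : 0 < β := N.b_pos.trans N.b_lt
  have hsub₁ : Ico (-β) 0 ⊆ Ioo (w₁ T₁) 0 := fun τ hτ => ⟨P₁.w_T.trans_le hτ.1, hτ.2⟩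
  have hsub₂ : Ico (-β) 0 ⊆ Ioo (w₂ T₂) 0 := fun τ hτ => ⟨P₂.w_T.trans_le hτ.1, hτ.2⟩
  refine (P₁.B.mono hsub₁).not_ordered_of_tendsto (P₂.B.mono hsub₂) N.cont
    (neg_lt_neg N.b_lt) N.b_pos N.F_deriv
    (fun τ hτ => N.F_nonpos τ (abs_le.2 ⟨hτ.1, by linarith [hτ.2]⟩))
    (by rw [N.F_neg, N.F_beta]) (fun τ hτ => ?_) (fun τ hτ => P₁.B_energy_pos (hsub₁ hτ))
    (fun τ hτ => P₂.B_energy_pos (hsub₂ hτ)) (P₂.xB_tendsto_right N hβ) (P₂.B_energy_tendsto N hβ)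
    hx hr
  have := N.f_nonpos (-τ) ⟨by linarith [hτ.2], by linarith [hτ.1]⟩
  rw [N.odd] at this
  linarith

/-- The larger solution cannot stay at larger radii all the way down. -/
theorem false_of_forall_rA_lt (P₁ : Profile k f F w₁ p₁ β T₁ rA₁ rB₁)
    (P₂ : Profile k f F w₂ p₂ β T₂ rA₂ rB₂) (N : Nonlinearity k f F A A' b β)
    (hx : -p₁ (rA₁ (-β)) < -p₂ (rA₂ (-β)))
    (hr : ∀ τ ∈ Ico (-β) (min (-w₁ T₁) (-w₂ T₂)), rA₁ τ < rA₂ τ) : False := by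
  have hβ : 0 < β := N.b_pos.trans N.b_lt
  have hsub₁ : Ico (-β) (min (-w₁ T₁) (-w₂ T₂)) ⊆ Ioo (-w₁ 0) (-w₁ T₁) := fun τ hτ =>
    ⟨by linarith [hτ.1, P₁.beta_lt], hτ.2.trans_le (min_le_left _ _)⟩
  have hsub₂ : Ico (-β) (min (-w₁ T₁) (-w₂ T₂)) ⊆ Ioo (-w₂ 0) (-w₂ T₂) := fun τ hτ =>
    ⟨by linarith [hτ.1, P₂.beta_lt], hτ.2.trans_le (min_le_right _ _)⟩
  have hxall : ∀ τ ∈ Ico (-β) (min (-w₁ T₁) (-w₂ T₂)), -p₁ (rA₁ τ) < -p₂ (rA₂ τ) := by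
    intro τ hτ
    have hs : Icc (-β) τ ⊆ Ico (-β) (min (-w₁ T₁) (-w₂ T₂)) := fun s hs =>
      ⟨hs.1, hs.2.trans_lt hτ.2⟩
    exact ((P₁.A.mono hsub₁).mono hs).x_lt_of_r_le ((P₂.A.mono hsub₂).mono hs) N.cont
      (fun s h => (hr s (hs h)).le) hx τ (right_mem_Icc.2 hτ.1)
  have hS : w₂ T₂ < w₁ T₁ := by
    by_contra! hle
    rw [min_eq_right (neg_le_neg hle)] at hr hxall hsub₁ hsub₂
    have hs : Ico β (-w₂ T₂) ⊆ Ico (-β) (-w₂ T₂) := Ico_subset_Ico_left (by linarith)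
    exact ((P₁.A.mono hsub₁).mono hs).not_tendsto_of_forall_r_le ((P₂.A.mono hsub₂).mono hs)
      (by linarith [P₂.w_T]) (fun τ hτ => (N.f_pos τ (N.b_lt.trans_le hτ.1)).le)
      (fun τ hτ => (hr τ (hs hτ)).le) (fun τ hτ => hxall τ (hs hτ)) (P₂.xA_tendsto_right hβ)
  rw [min_eq_left (neg_le_neg hS.le)] at hr
  have hmem : -w₁ T₁ ∈ Ioo (-w₂ 0) (-w₂ T₂) :=
    ⟨by linarith [P₁.w_T, P₂.beta_lt], by linarith⟩
  have hT : T₁ ≤ rA₂ (-w₁ T₁) := by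
    refine le_of_tendsto_of_tendsto ((P₁.A_tendsto_right hβ).mono_right nhdsWithin_le_nhds)
      ((P₂.A.r_deriv _ hmem).continuousAt.tendsto.mono_left nhdsWithin_le_nhds)
      (?_ : ∀ᶠ τ in 𝓝[<] (-w₁ T₁), rA₁ τ ≤ rA₂ τ)
    filter_upwards [Ioo_mem_nhdsLT (show -β < -w₁ T₁ by linarith [P₁.w_T])] with τ hτ
    exact (hr τ (Ioo_subset_Ico_self hτ)).le
  obtain ⟨h1, h2⟩ := P₁.B_ordered P₂ N hS (hT.trans_lt (P₂.A_mem _ hmem).1.2)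
  refine P₁.false_of_B_ordered P₂ N h2 ?_
  rcases h1.eq_or_lt with e | h1
  · exact Or.inr ⟨e.ge, by
      rw [e] at h2 ⊢
      exact mul_lt_mul_of_pos_left h2 (P₂.B.r_pos _ ⟨P₂.w_T, by linarith⟩)⟩
  · exact Or.inl h1

/-- After a crossing, at some level above `β` the comparison data for the Pohozaev functional are
ordered. -/
theorem exists_comparison_level (P₁ : Profile k f F w₁ p₁ β T₁ rA₁ rB₁)
    (P₂ : Profile k f F w₂ p₂ β T₂ rA₂ rB₂) (N : Nonlinearity k f F A A' b β)
    {c : ℝ} (hc : c ∈ Ico (-β) (min (-w₁ T₁) (-w₂ T₂))) (hr : rA₁ c = rA₂ c)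
    (hx : -p₁ (rA₁ c) < -p₂ (rA₂ c)) :
    ∃ e ∈ Ico β (min (-w₁ T₁) (-w₂ T₂)), rA₂ e ≤ rA₁ e ∧
      rA₁ e ^ (k + 1) * -p₁ (rA₁ e) < rA₂ e ^ (k + 1) * -p₂ (rA₂ e) ∧
      pohozaev k F A rA₂ (fun τ => -p₂ (rA₂ τ)) e < pohozaev k F A rA₁ (fun τ => -p₁ (rA₁ τ)) e := by
  have hβ : 0 < β := N.b_pos.trans N.b_lt
  have hβN : β < min (-w₁ T₁) (-w₂ T₂) :=
    lt_min (by linarith [P₁.w_T]) (by linarith [P₂.w_T])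
  have hsub₁ : Ico (-β) (min (-w₁ T₁) (-w₂ T₂)) ⊆ Ioo (-w₁ 0) (-w₁ T₁) := fun τ hτ =>
    ⟨by linarith [hτ.1, P₁.beta_lt], hτ.2.trans_le (min_le_left _ _)⟩
  have hsub₂ : Ico (-β) (min (-w₁ T₁) (-w₂ T₂)) ⊆ Ioo (-w₂ 0) (-w₂ T₂) := fun τ hτ =>
    ⟨by linarith [hτ.1, P₂.beta_lt], hτ.2.trans_le (min_le_right _ _)⟩
  have hr1 := P₁.A.r_pos c (hsub₁ hc)
  have hx1 : 0 < -p₁ (rA₁ c) := P₁.A.x_pos c (hsub₁ hc)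
  have hsq : (-p₁ (rA₁ c)) ^ 2 < (-p₂ (rA₂ c)) ^ 2 := pow_lt_pow_left₀ hx hx1.le two_ne_zero
  rcases lt_or_ge c β with hcβ | hcβ
  · have hs : Icc c β ⊆ Ico (-β) (min (-w₁ T₁) (-w₂ T₂)) := fun s hs =>
      ⟨hc.1.trans hs.1, hs.2.trans_lt hβN⟩
    obtain ⟨h1, h2, h3⟩ := ((P₁.A.mono hsub₁).mono hs).energy_comparison
      ((P₂.A.mono hsub₂).mono hs) N.F_deriv
      (fun τ hτ => N.F_nonpos τ (abs_le.2 ⟨hc.1.trans hτ.1, hτ.2⟩))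
      (fun τ hτ => (P₁.A_energy_pos N (hsub₁ (hs hτ))).le) hr.ge
      (by rw [← hr]; rw [← hr] at hsq
          exact mul_lt_mul_of_pos_left (by linarith) (pow_pos hr1 _))
      β (right_mem_Icc.2 hcβ.le)
    have hβm : β ∈ Ico (-β) (min (-w₁ T₁) (-w₂ T₂)) := ⟨by linarith, hβN⟩
    have r1 := P₁.A.r_pos β (hsub₁ hβm)
    have r2 := P₂.A.r_pos β (hsub₂ hβm)
    have x1 : 0 < -p₁ (rA₁ β) := P₁.A.x_pos β (hsub₁ hβm)
    have x2 : 0 < -p₂ (rA₂ β) := P₂.A.x_pos β (hsub₂ hβm)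
    have hA : A β = 0 := by
      have := N.A_mul β (le_abs_self β)
      rw [N.F_beta] at this
      exact (mul_eq_zero.1 this).resolve_right (N.f_pos β N.b_lt).ne'
    refine ⟨β, ⟨le_rfl, hβN⟩, h1, ?_, ?_⟩
    all_goals
      simp only [pohozaev, N.F_beta, hA] at h3 ⊢
      generalize rA₁ β = r₁ at *
      generalize rA₂ β = r₂ at *
      generalize -p₁ r₁ = x₁ at *
      generalize -p₂ r₂ = x₂ at *
    · refine lt_of_pow_lt_pow_left₀ 2 (by positivity) ?_
      calc (r₁ ^ (k + 1) * x₁) ^ 2 = r₁ ^ (2 * k + 2) * (x₁ ^ 2 + 2 * 0) := by ring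
        _ < r₂ ^ (2 * k + 2) * (x₂ ^ 2 + 2 * 0) := h3
        _ = (r₂ ^ (k + 1) * x₂) ^ 2 := by ring
    · have h4 : r₂ ^ k ≤ r₁ ^ k := pow_le_pow_left₀ r2.le h1 k
      have h5 : r₁ ^ k * (r₁ ^ (k + 2) * x₁ ^ 2) < r₁ ^ k * (r₂ ^ (k + 2) * x₂ ^ 2) :=
        calc r₁ ^ k * (r₁ ^ (k + 2) * x₁ ^ 2) = r₁ ^ (2 * k + 2) * (x₁ ^ 2 + 2 * 0) := by ring
          _ < r₂ ^ (2 * k + 2) * (x₂ ^ 2 + 2 * 0) := h3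
          _ = r₂ ^ k * (r₂ ^ (k + 2) * x₂ ^ 2) := by ring
          _ ≤ r₁ ^ k * (r₂ ^ (k + 2) * x₂ ^ 2) := by gcongr
      have := lt_of_mul_lt_mul_left h5 (by positivity)
      linarith
  · refine ⟨c, ⟨hcβ, hc.2⟩, hr.ge, ?_, ?_⟩
    · rw [← hr] at hx ⊢
      exact mul_lt_mul_of_pos_left hx (pow_pos hr1 _)
    · have hF : 0 ≤ F c := by
        rcases hcβ.eq_or_lt with rfl | h
        · exact N.F_beta.ge
        · exact (N.F_pos c (h.trans_le (le_abs_self c))).le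
      have hf := N.f_pos c (N.b_lt.trans_le hcβ)
      have hA : 0 ≤ A c := by
        by_contra! hneg
        have := N.A_mul c (hcβ.trans (le_abs_self c))
        linarith [mul_neg_of_neg_of_pos hneg hf]
      simp only [pohozaev]
      rw [← hr] at hx hsq ⊢
      have m := mul_le_mul_of_nonneg_left (mul_lt_mul_of_pos_left hx (pow_pos hr1 (k + 1))).le
        (show 0 ≤ 2 * (k + 2 : ℝ) * A c by positivity)
      have m' := mul_lt_mul_of_pos_left hsq (pow_pos hr1 (k + 2))
      linarith

theorem pohozaev_A_tendsto {w p rA rB : ℝ → ℝ} {T : ℝ} (P : Profile k f F w p β T rA rB)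
    (N : Nonlinearity k f F A A' b β) :
    Tendsto (pohozaev k F A rA (fun τ => -p (rA τ))) (𝓝[<] (-w T))
      (𝓝 (-(T ^ (k + 2) * (2 * F (w T))))) := by
  have hβ : 0 < β := N.b_pos.trans N.b_lt
  rw [← N.F_neg]
  exact tendsto_pohozaev nhdsWithin_le_nhds (N.F_deriv _).continuousAt
    (N.A_deriv _ (le_trans (by linarith [P.w_T]) (le_abs_self _))).continuousAt
    ((P.A_tendsto_right hβ).mono_right nhdsWithin_le_nhds) (P.xA_tendsto_right hβ)

theorem pohozaev_B_tendsto {w p rA rB : ℝ → ℝ} {T : ℝ} (P : Profile k f F w p β T rA rB)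
    (N : Nonlinearity k f F A A' b β) :
    Tendsto (pohozaev k F A rB (fun τ => p (rB τ))) (𝓝[>] (w T))
      (𝓝 (-(T ^ (k + 2) * (2 * F (w T))))) := by
  have hβ : 0 < β := N.b_pos.trans N.b_lt
  exact tendsto_pohozaev nhdsWithin_le_nhds (N.F_deriv _).continuousAt
    (N.A_deriv _ (le_trans (by linarith [P.w_T]) (neg_le_abs _))).continuousAt
    ((P.B_tendsto_left hβ).mono_right nhdsWithin_le_nhds) (P.xB_tendsto_left hβ)

theorem pohozaev_A_ge {w p rA rB : ℝ → ℝ} {T τ : ℝ} (P : Profile k f F w p β T rA rB)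
    (N : Nonlinearity k f F A A' b β) (hτ : τ ∈ Ico β (-w T)) :
    -(T ^ (k + 2) * (2 * F (w T))) ≤ pohozaev k F A rA (fun τ => -p (rA τ)) τ := by
  have hβ : 0 < β := N.b_pos.trans N.b_lt
  refine le_of_tendsto (P.pohozaev_A_tendsto N) ?_
  filter_upwards [Ioo_mem_nhdsLT hτ.2] with s hs
  have ge : ∀ t ∈ Icc τ s, β ≤ |t| := fun t ht => (hτ.1.trans ht.1).trans (le_abs_self t)
  exact (P.A.mono fun t ht => ⟨by linarith [ht.1, hτ.1, P.beta_lt], ht.2.trans_lt hs.2⟩).pohozaev_le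
    hs.1.le N.F_deriv (fun t ht => N.A_deriv t (ge t ht)) (fun t ht => N.A_mul t (ge t ht))
    fun t ht => N.A'_ge t ((hτ.1.trans_lt ht.1).trans_le (le_abs_self t))

theorem pohozaev_B_le {w p rA rB : ℝ → ℝ} {T τ : ℝ} (P : Profile k f F w p β T rA rB)
    (N : Nonlinearity k f F A A' b β) (hτ : τ ∈ Ioc (w T) (-β)) :
    pohozaev k F A rB (fun τ => p (rB τ)) τ ≤ -(T ^ (k + 2) * (2 * F (w T))) := by
  have hβ : 0 < β := N.b_pos.trans N.b_lt
  refine ge_of_tendsto (P.pohozaev_B_tendsto N) ?_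
  filter_upwards [Ioo_mem_nhdsGT hτ.1] with s hs
  have ge : ∀ t ∈ Icc s τ, β ≤ |t| := fun t ht => le_trans (by linarith [ht.2, hτ.2]) (neg_le_abs t)
  exact (P.B.mono fun t ht => ⟨hs.1.trans_le ht.1, by linarith [ht.2, hτ.2]⟩).pohozaev_le
    hs.2.le N.F_deriv (fun t ht => N.A_deriv t (ge t ht)) (fun t ht => N.A_mul t (ge t ht))
    fun t ht => N.A'_ge t (lt_of_lt_of_le (by linarith [ht.2, hτ.2]) (neg_le_abs t))

/-- From an ordered level above `β`, the second solution reaches further down, with a smaller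
Pohozaev functional. -/
theorem depth_lt_of_comparison_level (P₁ : Profile k f F w₁ p₁ β T₁ rA₁ rB₁)
    (P₂ : Profile k f F w₂ p₂ β T₂ rA₂ rB₂) (N : Nonlinearity k f F A A' b β)
    {e : ℝ} (he : e ∈ Ico β (min (-w₁ T₁) (-w₂ T₂))) (hr : rA₂ e ≤ rA₁ e)
    (hm : rA₁ e ^ (k + 1) * -p₁ (rA₁ e) < rA₂ e ^ (k + 1) * -p₂ (rA₂ e))
    (hP : pohozaev k F A rA₂ (fun τ => -p₂ (rA₂ τ)) e <
      pohozaev k F A rA₁ (fun τ => -p₁ (rA₁ τ)) e) :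
    w₂ T₂ < w₁ T₁ ∧ -(T₂ ^ (k + 2) * (2 * F (w₂ T₂))) < -(T₁ ^ (k + 2) * (2 * F (w₁ T₁))) := by
  have hβ : 0 < β := N.b_pos.trans N.b_lt
  have hsub₁ : Ico e (min (-w₁ T₁) (-w₂ T₂)) ⊆ Ioo (-w₁ 0) (-w₁ T₁) := fun τ hτ =>
    ⟨by linarith [hτ.1, he.1, P₁.beta_lt], hτ.2.trans_le (min_le_left _ _)⟩
  have hsub₂ : Ico e (min (-w₁ T₁) (-w₂ T₂)) ⊆ Ioo (-w₂ 0) (-w₂ T₂) := fun τ hτ =>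
    ⟨by linarith [hτ.1, he.1, P₂.beta_lt], hτ.2.trans_le (min_le_right _ _)⟩
  have hle : ∀ τ ∈ Ico e (min (-w₁ T₁) (-w₂ T₂)),
      Icc e τ ⊆ Ico e (min (-w₁ T₁) (-w₂ T₂)) := fun τ hτ s hs => ⟨hs.1, hs.2.trans_lt hτ.2⟩
  have m1 := mul_pos (pow_pos (P₁.A.r_pos e (hsub₁ ⟨le_rfl, he.2⟩)) (k + 1))
    (P₁.A.x_pos e (hsub₁ ⟨le_rfl, he.2⟩))
  set g := (rA₂ e ^ (k + 1) * -p₂ (rA₂ e)) ^ 2 - (rA₁ e ^ (k + 1) * -p₁ (rA₁ e)) ^ 2 with hg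
  have gpos : 0 < g := sub_pos.2 (pow_lt_pow_left₀ hm m1.le two_ne_zero)
  have gap : ∀ τ ∈ Ico e (min (-w₁ T₁) (-w₂ T₂)),
      g ≤ (rA₂ τ ^ (k + 1) * -p₂ (rA₂ τ)) ^ 2 - (rA₁ τ ^ (k + 1) * -p₁ (rA₁ τ)) ^ 2 :=
    fun τ hτ => (((P₁.A.mono hsub₁).mono (hle τ hτ)).m_comparison
      ((P₂.A.mono hsub₂).mono (hle τ hτ))
      (fun s hs => (N.f_pos s (by linarith [hs.1, he.1, N.b_lt])).le) hr hm τ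
      (right_mem_Icc.2 hτ.1)).2.2
  have hS : w₂ T₂ < w₁ T₁ := by
    by_contra! hcon
    rw [min_eq_right (neg_le_neg hcon)] at gap he
    have h1 := ((((P₂.A_tendsto_right hβ).mono_right nhdsWithin_le_nhds).pow (k + 1)).mul
      (P₂.xA_tendsto_right hβ)).pow 2
    rw [mul_zero, zero_pow two_ne_zero] at h1
    have : g ≤ 0 := by
      refine ge_of_tendsto h1 ?_
      filter_upwards [Ioo_mem_nhdsLT he.2] with τ hτ
      have := gap τ (Ioo_subset_Ico_self hτ)
      linarith [sq_nonneg (rA₁ τ ^ (k + 1) * -p₁ (rA₁ τ))]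
    linarith
  refine ⟨hS, ?_⟩
  rw [min_eq_left (neg_le_neg hS.le)] at gap he hle hsub₁ hsub₂
  have hmem : -w₁ T₁ ∈ Ioo (-w₂ 0) (-w₂ T₂) :=
    ⟨by linarith [P₁.w_T, P₂.beta_lt], by linarith⟩
  have hA := N.A_deriv (-w₁ T₁) (le_trans (by linarith [P₁.w_T]) (le_abs_self _))
  have hAf := N.A_mul (-w₁ T₁) (le_trans (by linarith [P₁.w_T]) (le_abs_self _))
  have hlim := ((P₂.A.pohozaev_deriv hmem (N.F_deriv _) hA hAf).continuousAt.tendsto.mono_left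
    (nhdsWithin_le_nhds (s := Iio (-w₁ T₁)))).sub (P₁.pohozaev_A_tendsto N)
  have h2 := le_of_tendsto hlim (b := pohozaev k F A rA₂ (fun τ => -p₂ (rA₂ τ)) e -
      pohozaev k F A rA₁ (fun τ => -p₁ (rA₁ τ)) e) (by
    filter_upwards [Ioo_mem_nhdsLT he.2] with τ hτ
    have hτ' := Ioo_subset_Ico_self hτ
    have ge : ∀ t ∈ Icc e τ, β ≤ |t| := fun t ht => (he.1.trans ht.1).trans (le_abs_self t)
    refine ((P₁.A.mono hsub₁).mono (hle τ hτ')).pohozaev_sub_le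
      ((P₂.A.mono hsub₂).mono (hle τ hτ')) hτ.1.le N.F_deriv
      (fun t ht => N.A_deriv t (ge t ht)) (fun t ht => N.A_mul t (ge t ht))
      (fun t ht => N.A'_ge t ((he.1.trans_lt ht.1).trans_le (le_abs_self t))) fun t ht => ?_
    have ht' : t ∈ Ico e (-w₁ T₁) := ⟨ht.1.le, ht.2.trans hτ.2⟩
    have := gap t ht'
    have m2 := mul_pos (pow_pos (P₂.A.r_pos t (hsub₂ ht')) (k + 1)) (P₂.A.x_pos t (hsub₂ ht'))
    exact le_of_sq_le_sq (by linarith) m2.le)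
  have h3 := P₂.pohozaev_A_ge (A := A) N ⟨by linarith [P₁.w_T], hmem.2⟩
  linarith

/-- The larger solution cannot cross the smaller one on the way down. -/
theorem false_of_crossing (P₁ : Profile k f F w₁ p₁ β T₁ rA₁ rB₁)
    (P₂ : Profile k f F w₂ p₂ β T₂ rA₂ rB₂) (N : Nonlinearity k f F A A' b β)
    {c : ℝ} (hc : c ∈ Ico (-β) (min (-w₁ T₁) (-w₂ T₂))) (hr : rA₁ c = rA₂ c)
    (hx : -p₁ (rA₁ c) < -p₂ (rA₂ c)) : False := by
  have hβ : 0 < β := N.b_pos.trans N.b_lt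
  obtain ⟨e, he, h1, h2, h3⟩ := P₁.exists_comparison_level P₂ N hc hr hx
  obtain ⟨hS, hP⟩ := P₁.depth_lt_of_comparison_level P₂ N he h1 h2 h3
  have hw₁ := P₁.w_T
  have hmem : w₁ T₁ ∈ Ioo (w₂ T₂) 0 := ⟨hS, by linarith⟩
  have hPB := (P₂.pohozaev_B_le (A := A) N ⟨hS, hw₁.le⟩).trans_lt hP
  have hA := N.A_deriv (w₁ T₁) (le_trans (by linarith) (neg_le_abs _))
  have hAf := N.A_mul (w₁ T₁) (le_trans (by linarith) (neg_le_abs _))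
  have le_nhds : 𝓝[>] (w₁ T₁) ≤ 𝓝 (w₁ T₁) := nhdsWithin_le_nhds
  have cx := (P₂.B.x_deriv _ hmem).continuousAt.tendsto.mono_left le_nhds
  have cr := (P₂.B.r_deriv _ hmem).continuousAt.tendsto.mono_left le_nhds
  have cP := (P₂.B.pohozaev_deriv hmem (N.F_deriv _) hA hAf).continuousAt.tendsto.mono_left le_nhds
  have lx := P₁.xB_tendsto_left hβ
  have lm := (((P₁.B_tendsto_left hβ).mono_right nhdsWithin_le_nhds).pow (k + 1)).mul lx
  rw [mul_zero] at lm
  obtain ⟨τ, ⟨⟨hxτ, hmτ⟩, hPτ⟩, hτ⟩ := (((lx.eventually_lt cx (P₂.B.x_pos _ hmem)).and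
    (lm.eventually_lt ((cr.pow (k + 1)).mul cx)
      (mul_pos (pow_pos (P₂.B.r_pos _ hmem) _) (P₂.B.x_pos _ hmem)))).and
    (cP.eventually_lt (P₁.pohozaev_B_tendsto N) hPB)).and (Ioo_mem_nhdsGT hw₁) |>.exists
  have ge : ∀ t ∈ Icc τ (-β), β ≤ |t| := fun t ht => le_trans (by linarith [ht.2]) (neg_le_abs t)
  have hP₁ : -(T₁ ^ (k + 2) * (2 * F (w₁ T₁))) < 0 := by
    have := N.F_pos (w₁ T₁) (lt_of_lt_of_le (by linarith) (neg_le_abs _))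
    have := mul_pos (pow_pos P₁.T_pos (k + 2)) this
    linarith
  obtain ⟨g1, g2⟩ := (P₁.B.mono fun t (ht : t ∈ Icc τ (-β)) =>
      ⟨hτ.1.trans_le ht.1, by linarith [ht.2]⟩).return_comparison
    (P₂.B.mono fun t ht => ⟨by linarith [ht.1, hτ.1], by linarith [ht.2]⟩) hτ.2.le N.F_deriv
    (fun t ht => N.A_deriv t (ge t ht)) (fun t ht => N.A_mul t (ge t ht))
    (fun t ht => N.A'_ge t (lt_of_lt_of_le (by linarith [ht.2]) (neg_le_abs t)))
    (fun t ht => by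
      have := N.f_pos (-t) (by linarith [ht.2, N.b_lt])
      rw [N.odd] at this
      linarith)
    (fun t ht => by
      rcases ht.2.eq_or_lt with rfl | hlt
      · rw [N.F_neg, N.F_beta]
      · exact (N.F_pos t (lt_of_lt_of_le (by linarith) (neg_le_abs t))).le)
    (by rw [N.F_neg, N.F_beta])
    (fun t ht => (P₁.pohozaev_B_le N ⟨hτ.1.trans_le ht.1, ht.2⟩).trans_lt hP₁) hxτ hmτ hPτ
  exact P₁.false_of_B_ordered P₂ N g1 g2

/-- Two one-sign-change bound states cannot have different initial values. -/
theorem not_lt (P₁ : Profile k f F w₁ p₁ β T₁ rA₁ rB₁) (P₂ : Profile k f F w₂ p₂ β T₂ rA₂ rB₂)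
    (N : Nonlinearity k f F A A' b β) : ¬w₁ 0 < w₂ 0 := by
  intro hα
  have hβ : 0 < β := N.b_pos.trans N.b_lt
  obtain ⟨hr, hx⟩ := P₁.A_ordered P₂ N hα
  have hsub₁ : Ico (-β) (min (-w₁ T₁) (-w₂ T₂)) ⊆ Ioo (-w₁ 0) (-w₁ T₁) := fun τ hτ =>
    ⟨by linarith [hτ.1, P₁.beta_lt], hτ.2.trans_le (min_le_left _ _)⟩
  have hsub₂ : Ico (-β) (min (-w₁ T₁) (-w₂ T₂)) ⊆ Ioo (-w₂ 0) (-w₂ T₂) := fun τ hτ =>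
    ⟨by linarith [hτ.1, P₂.beta_lt], hτ.2.trans_le (min_le_right _ _)⟩
  rcases (P₁.A.mono hsub₁).forall_r_lt_or_exists_eq (P₂.A.mono hsub₂)
    (lt_min (by linarith [P₁.w_T]) (by linarith [P₂.w_T])) hr with hall | ⟨c, hc, hrc, hle⟩
  · exact P₁.false_of_forall_rA_lt P₂ N hx hall
  · have hs : Icc (-β) c ⊆ Ico (-β) (min (-w₁ T₁) (-w₂ T₂)) := fun s hs =>
      ⟨hs.1, hs.2.trans_lt hc.2⟩
    exact P₁.false_of_crossing P₂ N hc hrc (((P₁.A.mono hsub₁).mono hs).x_lt_of_r_le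
      ((P₂.A.mono hsub₂).mono hs) N.cont hle hx c (right_mem_Icc.2 hc.1))

end Profile

namespace Profile

variable {k : ℕ} {f F A A' w w₁ w₂ p p₁ p₂ rA rB rA₁ rA₂ rB₁ rB₂ : ℝ → ℝ} {b β T T₁ T₂ : ℝ}

theorem neg_beta_mem_A (h : Profile k f F w p β T rA rB) (hβ : 0 < β) :
    -β ∈ Ioo (-w 0) (-w T) :=
  ⟨by linarith [h.beta_lt], by linarith [h.w_T]⟩

theorem neg_beta_mem_B (h : Profile k f F w p β T rA rB) (hβ : 0 < β) : -β ∈ Ioo (w T) 0 :=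
  ⟨h.w_T, by linarith⟩

theorem w_mem_Icc_A (h : Profile k f F w p β T rA rB) (hβ : 0 < β) {t : ℝ} (ht : 0 < t)
    (hle : t ≤ rA (-β)) : w t ∈ Icc β (w 0) := by
  obtain ⟨hm, hw⟩ := h.A_mem _ (h.neg_beta_mem_A hβ)
  have hanti := h.w_strictAntiOn.antitoneOn
  have htT : t ∈ Icc 0 T := ⟨ht.le, hle.trans hm.2.le⟩
  constructor
  · have := hanti htT (Ioo_subset_Icc_self hm) hle
    linarith
  · exact hanti ⟨le_rfl, h.T_pos.le⟩ htT ht.le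

theorem neg_w_mem_Icc_B (h : Profile k f F w p β T rA rB) (hβ : 0 < β) {t : ℝ} (ht : T < t)
    (hle : t ≤ rB (-β)) : -w t ∈ Icc β (-w T) := by
  obtain ⟨hm, hw⟩ := h.B_mem _ (h.neg_beta_mem_B hβ)
  have hmono := (h.w_strictMonoOn (t := rB (-β)) (by linarith)).monotoneOn
  have htT : t ∈ Icc T (rB (-β)) := ⟨ht.le, hle⟩
  constructor
  · have := hmono htT ⟨hm.le, le_rfl⟩ hle
    linarith
  · have := hmono ⟨le_rfl, hm.le⟩ htT ht.le
    linarith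

theorem eqOn_A_of_le (P₁ : Profile k f F w₁ p₁ β T₁ rA₁ rB₁)
    (P₂ : Profile k f F w₂ p₂ β T₂ rA₂ rB₂) (N : Nonlinearity k f F A A' b β)
    (h0 : w₁ 0 = w₂ 0) (hle : rA₁ (-β) ≤ rA₂ (-β)) :
    rA₁ (-β) = rA₂ (-β) ∧ ∀ t ∈ Ioc 0 (rA₁ (-β)), w₁ t = w₂ t ∧ p₁ t = p₂ t := by
  have hβ : 0 < β := N.b_pos.trans N.b_lt
  obtain ⟨L, hL, hlip⟩ := N.lip (w₁ 0)
  have hlim : ∀ {w : ℝ → ℝ}, ContinuousOn w (Ici 0) → Tendsto w (𝓝[>] 0) (𝓝 (w 0)) := fun hw =>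
    (hw 0 self_mem_Ici).mono_left (nhdsWithin_mono _ Ioi_subset_Ici_self)
  have key := P₁.sol.eqOn_of_tendsto P₂.sol le_rfl (t₁ := rA₁ (-β)) hL
    (fun t ht => hlip _ (P₁.w_mem_Icc_A hβ ht.1 ht.2) _
      (h0 ▸ P₂.w_mem_Icc_A hβ ht.1 (ht.2.trans hle)))
    (by simpa [h0] using (hlim P₂.cont).sub (hlim P₁.cont))
    (by simpa using (P₂.sol.tendsto_p_zero N.cont P₂.cont).sub
          (P₁.sol.tendsto_p_zero N.cont P₁.cont))
  obtain ⟨hm₁, hw₁⟩ := P₁.A_mem _ (P₁.neg_beta_mem_A hβ)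
  obtain ⟨hm₂, hw₂⟩ := P₂.A_mem _ (P₂.neg_beta_mem_A hβ)
  refine ⟨P₂.w_strictAntiOn.injOn ⟨hm₁.1.le, hle.trans hm₂.2.le⟩ (Ioo_subset_Icc_self hm₂) ?_, key⟩
  rw [← (key _ ⟨hm₁.1, le_rfl⟩).1, hw₁, hw₂]

theorem eqOn_A (P₁ : Profile k f F w₁ p₁ β T₁ rA₁ rB₁)
    (P₂ : Profile k f F w₂ p₂ β T₂ rA₂ rB₂) (N : Nonlinearity k f F A A' b β)
    (h0 : w₁ 0 = w₂ 0) :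
    rA₁ (-β) = rA₂ (-β) ∧ ∀ t ∈ Ioc 0 (rA₁ (-β)), w₁ t = w₂ t ∧ p₁ t = p₂ t := by
  rcases le_total (rA₁ (-β)) (rA₂ (-β)) with hle | hle
  · exact P₁.eqOn_A_of_le P₂ N h0 hle
  · obtain ⟨hr, h⟩ := P₂.eqOn_A_of_le P₁ N h0.symm hle
    exact ⟨hr.symm, fun t ht => ⟨(h t (hr ▸ ht)).1.symm, (h t (hr ▸ ht)).2.symm⟩⟩

theorem A_eq (P₁ : Profile k f F w₁ p₁ β T₁ rA₁ rB₁)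
    (P₂ : Profile k f F w₂ p₂ β T₂ rA₂ rB₂) (N : Nonlinearity k f F A A' b β)
    (h0 : w₁ 0 = w₂ 0) {τ : ℝ} (hτ : -β ≤ τ) (hτ₁ : τ < -w₁ T₁) (hτ₂ : τ < -w₂ T₂) :
    rA₁ τ = rA₂ τ ∧ p₁ (rA₁ τ) = p₂ (rA₂ τ) := by
  have hβ : 0 < β := N.b_pos.trans N.b_lt
  obtain ⟨hr, h⟩ := P₁.eqOn_A P₂ N h0
  have hp := (h _ ⟨(P₁.A_mem _ (P₁.neg_beta_mem_A hβ)).1.1, le_rfl⟩).2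
  have := Branch.eqOn_of_eq
    (P₁.A.mono fun s (hs : s ∈ Icc (-β) τ) =>
      ⟨(P₁.neg_beta_mem_A hβ).1.trans_le hs.1, hs.2.trans_lt hτ₁⟩)
    (P₂.A.mono fun s (hs : s ∈ Icc (-β) τ) =>
      ⟨(P₂.neg_beta_mem_A hβ).1.trans_le hs.1, hs.2.trans_lt hτ₂⟩)
    N.cont hr (by simp only [← hr, hp]) τ ⟨hτ, le_rfl⟩
  exact ⟨this.1, neg_injective this.2⟩

theorem w_T_le (P₁ : Profile k f F w₁ p₁ β T₁ rA₁ rB₁)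
    (P₂ : Profile k f F w₂ p₂ β T₂ rA₂ rB₂) (N : Nonlinearity k f F A A' b β)
    (h0 : w₁ 0 = w₂ 0) : w₁ T₁ ≤ w₂ T₂ := by
  have hβ : 0 < β := N.b_pos.trans N.b_lt
  by_contra! hlt
  have hS : -w₁ T₁ ∈ Ioo (-w₂ 0) (-w₂ T₂) := ⟨by linarith [P₁.neg_w0_lt hβ], by linarith⟩
  have h₁ := P₁.xA_tendsto_right hβ
  have h₂ := (P₂.A.x_deriv _ hS).continuousAt.tendsto.mono_left
    (nhdsWithin_le_nhds (s := Iio (-w₁ T₁)))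
  have hev : (fun τ => -p₁ (rA₁ τ)) =ᶠ[𝓝[<] (-w₁ T₁)] fun τ => -p₂ (rA₂ τ) := by
    filter_upwards [Ioo_mem_nhdsLT (P₁.neg_beta_mem_A hβ).2] with τ hτ
    rw [(P₁.A_eq P₂ N h0 hτ.1.le hτ.2 (by linarith [hτ.2])).2]
  have := tendsto_nhds_unique (h₁.congr' hev) h₂
  linarith [P₂.A.x_pos _ hS]

theorem w_T_eq (P₁ : Profile k f F w₁ p₁ β T₁ rA₁ rB₁)
    (P₂ : Profile k f F w₂ p₂ β T₂ rA₂ rB₂) (N : Nonlinearity k f F A A' b β)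
    (h0 : w₁ 0 = w₂ 0) : w₁ T₁ = w₂ T₂ :=
  (P₁.w_T_le P₂ N h0).antisymm (P₂.w_T_le P₁ N h0.symm)

theorem T_eq (P₁ : Profile k f F w₁ p₁ β T₁ rA₁ rB₁)
    (P₂ : Profile k f F w₂ p₂ β T₂ rA₂ rB₂) (N : Nonlinearity k f F A A' b β)
    (h0 : w₁ 0 = w₂ 0) : T₁ = T₂ := by
  have hβ : 0 < β := N.b_pos.trans N.b_lt
  have hS := P₁.w_T_eq P₂ N h0
  refine tendsto_nhds_unique_of_eventuallyEq ((P₁.A_tendsto_right hβ).mono_right nhdsWithin_le_nhds)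
    ((hS ▸ P₂.A_tendsto_right hβ).mono_right nhdsWithin_le_nhds) ?_
  filter_upwards [Ioo_mem_nhdsLT (P₁.neg_beta_mem_A hβ).2] with τ hτ
  exact (P₁.A_eq P₂ N h0 hτ.1.le hτ.2 (hS ▸ hτ.2)).1

theorem eqOn_Ioo (P₁ : Profile k f F w₁ p₁ β T₁ rA₁ rB₁)
    (P₂ : Profile k f F w₂ p₂ β T₂ rA₂ rB₂) (N : Nonlinearity k f F A A' b β)
    (h0 : w₁ 0 = w₂ 0) : EqOn w₁ w₂ (Ioo 0 T₁) := by
  have hβ : 0 < β := N.b_pos.trans N.b_lt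
  intro t ht
  rcases le_or_gt t (rA₁ (-β)) with hle | hlt
  · exact ((P₁.eqOn_A P₂ N h0).2 t ⟨ht.1, hle⟩).1
  · obtain ⟨hm, hr⟩ := P₁.A_left t ht
    obtain ⟨hm', hw'⟩ := P₁.A_mem _ (P₁.neg_beta_mem_A hβ)
    have hτ : -β ≤ -w₁ t := by
      have := P₁.w_strictAntiOn (Ioo_subset_Icc_self hm') (Ioo_subset_Icc_self ht) hlt
      linarith
    have hS := P₁.w_T_eq P₂ N h0
    have hτ₂ : -w₁ t < -w₂ T₂ := hS ▸ hm.2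
    have h := (P₁.A_eq P₂ N h0 hτ hm.2 hτ₂).1
    have h' := (P₂.A_mem (-w₁ t) ⟨by linarith [hm.1], hτ₂⟩).2
    rw [← h, hr] at h'
    linarith

theorem eqOn_B_of_le (P₁ : Profile k f F w₁ p₁ β T rA₁ rB₁)
    (P₂ : Profile k f F w₂ p₂ β T rA₂ rB₂) (N : Nonlinearity k f F A A' b β)
    (hT : w₁ T = w₂ T) (hle : rB₁ (-β) ≤ rB₂ (-β)) :
    rB₁ (-β) = rB₂ (-β) ∧ ∀ t ∈ Ioc T (rB₁ (-β)), w₁ t = w₂ t ∧ p₁ t = p₂ t := by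
  have hβ : 0 < β := N.b_pos.trans N.b_lt
  obtain ⟨L, hL, hlip⟩ := N.lip (-w₁ T)
  have hlim : ∀ {w p : ℝ → ℝ}, Sol k f w p → Tendsto w (𝓝[>] T) (𝓝 (w T)) := fun h =>
    (h.w_deriv T P₁.T_pos).continuousAt.tendsto.mono_left nhdsWithin_le_nhds
  have key := (P₁.sol.neg N.odd).eqOn_of_tendsto (P₂.sol.neg N.odd) P₁.T_pos.le
    (t₁ := rB₁ (-β)) hL
    (fun t ht => hlip _ (P₁.neg_w_mem_Icc_B hβ ht.1 ht.2) _
      (hT ▸ P₂.neg_w_mem_Icc_B hβ ht.1 (ht.2.trans hle)))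
    (by simpa [hT] using (hlim P₂.sol).neg.sub (hlim P₁.sol).neg)
    (by simpa using (P₂.p_tendsto.neg.sub P₁.p_tendsto.neg).mono_left
          (nhdsWithin_le_nhds (s := Ioi T)))
  simp only [neg_inj] at key
  obtain ⟨hm₁, hw₁⟩ := P₁.B_mem _ (P₁.neg_beta_mem_B hβ)
  obtain ⟨hm₂, hw₂⟩ := P₂.B_mem _ (P₂.neg_beta_mem_B hβ)
  refine ⟨(P₂.w_strictMonoOn (t := rB₂ (-β)) (by linarith)).injOn ⟨hm₁.le, hle⟩
    ⟨hm₂.le, le_rfl⟩ ?_, key⟩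
  rw [← (key _ ⟨hm₁, le_rfl⟩).1, hw₁, hw₂]

theorem eqOn_B (P₁ : Profile k f F w₁ p₁ β T rA₁ rB₁)
    (P₂ : Profile k f F w₂ p₂ β T rA₂ rB₂) (N : Nonlinearity k f F A A' b β)
    (hT : w₁ T = w₂ T) :
    rB₁ (-β) = rB₂ (-β) ∧ ∀ t ∈ Ioc T (rB₁ (-β)), w₁ t = w₂ t ∧ p₁ t = p₂ t := by
  rcases le_total (rB₁ (-β)) (rB₂ (-β)) with hle | hle
  · exact P₁.eqOn_B_of_le P₂ N hT hle
  · obtain ⟨hr, h⟩ := P₂.eqOn_B_of_le P₁ N hT.symm hle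
    exact ⟨hr.symm, fun t ht => ⟨(h t (hr ▸ ht)).1.symm, (h t (hr ▸ ht)).2.symm⟩⟩

theorem eq_of_neg (P₁ : Profile k f F w₁ p₁ β T rA₁ rB₁)
    (P₂ : Profile k f F w₂ p₂ β T rA₂ rB₂) (N : Nonlinearity k f F A A' b β)
    (hT : w₁ T = w₂ T) {t : ℝ} (ht : T < t) (hneg : w₁ t < 0) : w₁ t = w₂ t := by
  have hβ : 0 < β := N.b_pos.trans N.b_lt
  obtain ⟨hrβ, heq⟩ := P₁.eqOn_B P₂ N hT
  rcases le_or_gt t (rB₁ (-β)) with hle | hlt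
  · exact (heq t ⟨ht, hle⟩).1
  · obtain ⟨hm, hr⟩ := P₁.B_left t ht hneg
    obtain ⟨hm', hw'⟩ := P₁.B_mem _ (P₁.neg_beta_mem_B hβ)
    have hτ : -β ≤ w₁ t := by
      have := P₁.w_strictMonoOn hneg ⟨hm'.le, hlt.le⟩ ⟨ht.le, le_rfl⟩ hlt
      linarith
    have h := (Branch.eqOn_of_eq
      (P₁.B.mono fun s (hs : s ∈ Icc (-β) (w₁ t)) =>
        ⟨P₁.w_T.trans_le hs.1, hs.2.trans_lt hneg⟩)
      (P₂.B.mono fun s (hs : s ∈ Icc (-β) (w₁ t)) =>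
        ⟨P₂.w_T.trans_le hs.1, hs.2.trans_lt hneg⟩)
      N.cont hrβ (by simp only [← hrβ, (heq _ ⟨hm', le_rfl⟩).2]) _ ⟨hτ, le_rfl⟩).1
    have h' := (P₂.B_mem (w₁ t) ⟨hT ▸ hm.1, hneg⟩).2
    rw [← h, hr] at h'
    exact h'.symm

theorem eqOn_Ici (P₁ : Profile k f F w₁ p₁ β T₁ rA₁ rB₁)
    (P₂ : Profile k f F w₂ p₂ β T₂ rA₂ rB₂) (N : Nonlinearity k f F A A' b β)
    (h0 : w₁ 0 = w₂ 0) : EqOn w₁ w₂ (Ici 0) := by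
  have hT := P₁.w_T_eq P₂ N h0
  obtain rfl := P₁.T_eq P₂ N h0
  intro t ht
  rcases (mem_Ici.1 ht).eq_or_lt with rfl | ht
  · exact h0
  rcases lt_trichotomy t T₁ with hlt | rfl | hgt
  · exact P₁.eqOn_Ioo P₂ N h0 ⟨ht, hlt⟩
  · exact hT
  rcases (P₁.w_nonpos t hgt).lt_or_eq with h₁ | h₁
  · exact P₁.eq_of_neg P₂ N hT hgt h₁
  rcases (P₂.w_nonpos t hgt).lt_or_eq with h₂ | h₂
  · exact (P₂.eq_of_neg P₁ N hT.symm hgt h₂).symm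
  · rw [h₁, h₂]

end Profile

theorem Sol.of_boundState {k : ℕ} {f u : ℝ → ℝ} (h : BoundState (k + 2) f u) :
    Sol k f u (deriv u) where
  w_deriv t ht := (h.2.1 t ht).1.hasDerivAt
  p_deriv t ht := by
    refine (h.2.1 t ht).2.hasDerivAt.congr_deriv ?_
    have := h.2.2.1 t ht
    push_cast at this
    linear_combination this

theorem BoundState.exists_profile {k : ℕ} {f F A A' u : ℝ → ℝ} {b β : ℝ}
    (h : BoundState (k + 2) f u) (N : Nonlinearity k f F A A' b β) (hpos : 0 < u 0)
    (hc : ExactSignChanges u 1) : ∃ T rA rB, Profile k f F u (deriv u) β T rA rB := by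
  obtain ⟨z, hz⟩ := Set.ncard_eq_one.1 hc.2
  have hmem : z ∈ {z | 0 < z ∧ SignChange u z} := hz ▸ mem_singleton z
  obtain ⟨T, hT⟩ := (Sol.of_boundState h).exists_shape N h.1 h.2.2.2.2 hpos hmem.1 hmem.2
    fun t ht hs => (hz ▸ (⟨ht, hs⟩ : t ∈ {z | 0 < z ∧ SignChange u z}) : t ∈ ({z} : Set ℝ))
  exact ⟨T, hT.exists_profile N.odd⟩

end Paper

open Paper Set Filter MeasureTheory

/-- **Theorem 1.2 (first part).** Under (f1), (f2), (f3), (f4), problem (P) has at most one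
solution with `u 0 > 0` having exactly one sign change in `(0,∞)`. -/
theorem uniqueness_second_bound_state
    (n : ℕ) (hn : 2 ≤ n)
    (f : ℝ → ℝ) (b β : ℝ) (hf : Continuous f)
    (h1 : Hf1 f b β) (h2 : Hf2 f) (h3 : Hf3 f β) (h4 : Hf4 n f β)
    (u₁ u₂ : ℝ → ℝ) (hs₁ : BoundState n f u₁) (hs₂ : BoundState n f u₂)
    (hp₁ : 0 < u₁ 0) (hp₂ : 0 < u₂ 0)
    (hc₁ : ExactSignChanges u₁ 1) (hc₂ : ExactSignChanges u₂ 1) :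
    u₁ 0 = u₂ 0 ∧ EqOn u₁ u₂ (Ici 0) := by
  obtain ⟨k, rfl⟩ := Nat.exists_eq_add_of_le' hn
  have N := nonlinearity_of_hypotheses hf h1 h2 h3 h4
  obtain ⟨T₁, rA₁, rB₁, P₁⟩ := hs₁.exists_profile N hp₁ hc₁
  obtain ⟨T₂, rA₂, rB₂, P₂⟩ := hs₂.exists_profile N hp₂ hc₂
  have h0 : u₁ 0 = u₂ 0 := le_antisymm (not_lt.1 (P₂.not_lt P₁ N)) (not_lt.1 (P₁.not_lt P₂ N))
  exact ⟨h0, P₁.eqOn_Ici P₂ N h0⟩
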